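/- arXiv:1707.02501 — 2 statements merged into one kernel-verified Lean document; each statement's English description precedes it below -/
import Mathlib

section
/- The set of pairs (t,x) ∈ ℚ × ℚ satisfying x⁶ + p(t)x⁴ − q(t)x² + r(t) = 0 is exactly {(−2, 34), (−2, −34)}. -/
/-!
Put `s = 4t`, `y = x / 2` and `y² = (s² - 2s + 5) Z`. The curve becomes a rational curve in the
`(s, Z)`-plane, and its parameter `v` turns the equation for `y` into the genus three curve
`z² = (4 - v³) ((v² - 4v)² + 64)`. Write `v = a / b` in lowest terms. Then `b = c²` is a square,
and since the resultant of the two factors is, up to a power of two, a power of `17`, both factors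
lie in the same square class `1` or `17`.

In the variables `e = a - 2c²` and `c` the quartic factor is the form `e⁴ - 8e²c⁴ + 80c⁸`
(or `e⁴ - 2e²c⁴ + 5c⁸`, after the powers of two are removed). Fermat's infinite descent shows that
it is a square only for trivial values. It does take the value `17n²`, at `v = -4`. In that class
the form is factored over the quartic Euclidean ring `ℤ[i][η]`, which contains a square root `τ` of
`1 + 2i`. This leads to the quartics `w² = m⁴ + 4τΔm²n² + 16iΔ²n⁴` over `ℤ[i][η]`, and a
two-descent on them, infinite at the prime above `2`, leaves only the point `v = -4`.
-/

namespace CurveB2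

section IntegerDescent

lemma exists_pow_eq_of_isCoprime_mul_eq_pow {a b c : ℤ} {k : ℕ} (hk : k ≠ 0) (ha : 0 < a)
    (hb : 0 < b) (hab : IsCoprime a b) (h : a * b = c ^ k) :
    ∃ r s : ℤ, 0 < r ∧ 0 < s ∧ IsCoprime r s ∧ a = r ^ k ∧ b = s ^ k := by
  have nonneg_root {x y : ℤ} (hx : 0 < x) (hxy : IsCoprime x y) (h : x * y = c ^ k) :
      ∃ r : ℤ, 0 < r ∧ x = r ^ k := by
    obtain ⟨d, hd⟩ := exists_associated_pow_of_mul_eq_pow' hxy h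
    have hx' : x = |d| ^ k := by
      rw [← abs_pow, ← abs_of_pos hx]
      exact (abs_eq_abs.2 (Int.associated_iff.1 hd)).symm
    refine ⟨|d|, abs_pos.2 ?_, hx'⟩
    rintro rfl
    simp [hk] at hx'
    omega
  obtain ⟨r, hr, rfl⟩ := nonneg_root ha hab h
  obtain ⟨s, hs, rfl⟩ := nonneg_root hb hab.symm (by rw [mul_comm, h])
  exact ⟨r, s, hr, hs, (IsCoprime.pow_iff hk.bot_lt hk.bot_lt).1 hab, rfl, rfl⟩

lemma pos_and_pos_of_nonneg_of_mul_pos {R : Type*} [Ring R] [LinearOrder R] [IsStrictOrderedRing R]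
    {a b : R} (ha : 0 ≤ a) (h : 0 < a * b) : 0 < a ∧ 0 < b :=
  (pos_and_pos_or_neg_and_neg_of_mul_pos h).resolve_right fun hneg ↦ hneg.1.not_ge ha

lemma pos_and_pos_of_add_pos_of_mul_pos {R : Type*} [Ring R] [LinearOrder R]
    [IsStrictOrderedRing R] {a b : R} (hadd : 0 < a + b) (hmul : 0 < a * b) : 0 < a ∧ 0 < b :=
  (pos_and_pos_or_neg_and_neg_of_mul_pos hmul).resolve_right fun hneg ↦
    (add_neg hneg.1 hneg.2).not_gt hadd

lemma pythagorean_param_of_mod_four_eq_one {x y z : ℤ} (h : x ^ 2 + y ^ 2 = z ^ 2)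
    (hc : IsCoprime x y) (hx : x % 4 = 1) (hz : 0 < z) :
    ∃ m n : ℤ, 0 ≤ m ∧ IsCoprime m n ∧ Odd m ∧ Even n ∧
      x = m ^ 2 - n ^ 2 ∧ y = 2 * m * n ∧ z = m ^ 2 + n ^ 2 := by
  have hxyz : PythagoreanTriple x y z := by
    unfold PythagoreanTriple
    linarith
  obtain ⟨m, n, rfl, hy, hz, hmn, hpar, hm⟩ :=
    hxyz.coprime_classification' (Int.isCoprime_iff_gcd_eq_one.1 hc) (by omega) hz
  have hpar' : Odd m ∧ Even n := by
    rw [Int.odd_iff, Int.even_iff]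
    refine hpar.resolve_left fun ⟨hm2, hn2⟩ ↦ ?_
    have hn4 := Int.sq_mod_four_eq_one_of_odd (Int.odd_iff.2 hn2)
    obtain ⟨k, rfl⟩ := Int.even_iff.2 hm2
    have hm4 : (k + k) ^ 2 = 4 * k ^ 2 := by ring
    omega
  exact ⟨m, n, hm, Int.isCoprime_iff_gcd_eq_one.2 hmn, hpar'.1, hpar'.2, rfl, hy, hz⟩

lemma pythagorean_param_of_odd {x y z : ℤ} (h : x ^ 2 + y ^ 2 = z ^ 2)
    (hc : IsCoprime x y) (hx : Odd x) (hy : 0 < y) (hz : 0 < z) :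
    ∃ m n : ℤ, 0 < m ∧ 0 < n ∧ IsCoprime m n ∧ Odd m ∧ Even n ∧
      y = 2 * m * n ∧ z = m ^ 2 + n ^ 2 := by
  wlog hx4 : x % 4 = 1 generalizing x
  · exact this (by rwa [neg_sq]) hc.neg_left hx.neg (by rw [Int.odd_iff] at hx; omega)
  obtain ⟨m, n, hm, hmn, hmo, hne, -, rfl, rfl⟩ := pythagorean_param_of_mod_four_eq_one h hc hx4 hz
  obtain ⟨hm', hn'⟩ := pos_and_pos_of_nonneg_of_mul_pos hm (by linarith : 0 < m * n)
  exact ⟨m, n, hm', hn', hmn, hmo, hne, rfl, rfl⟩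

lemma exists_fourth_add_four_mul_fourth_eq_sq {z s r : ℤ} (h : z ^ 2 + s ^ 4 = r ^ 4)
    (hz : Odd z) (hc : IsCoprime z s) (hs : s ≠ 0) (hr : r ≠ 0) :
    ∃ R S : ℤ, Odd R ∧ IsCoprime R S ∧ S ≠ 0 ∧ R ^ 4 + 4 * S ^ 4 = r ^ 2 := by
  obtain ⟨m, n, hm, hn, hmn, hmo, ⟨k, rfl⟩, hs2, hr2⟩ :=
    pythagorean_param_of_odd (x := z) (y := s ^ 2) (z := r ^ 2) (by linear_combination h)
      hc.pow_right hz (by positivity) (by positivity)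
  obtain ⟨t, rfl⟩ : Even s := (Int.even_pow.1 ⟨m * (k + k), by rw [hs2]; ring⟩).1
  rw [← two_mul] at hmn
  obtain ⟨R, S, -, hS, hRS, rfl, rfl⟩ :=
    exists_pow_eq_of_isCoprime_mul_eq_pow two_ne_zero hm (by omega) hmn.of_mul_right_right
      (by linarith : m * k = t ^ 2)
  exact ⟨R, S, (Int.odd_pow' two_ne_zero).1 hmo, hRS, hS.ne', by rw [hr2]; ring⟩

lemma exists_smaller_fourth_add_four_mul_fourth {R S x : ℤ} (hR : Odd R) (hRS : IsCoprime R S)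
    (hS : S ≠ 0) (hx : 0 < x) (h : R ^ 4 + 4 * S ^ 4 = x ^ 2) :
    ∃ R' S' x' : ℤ, Odd R' ∧ IsCoprime R' S' ∧ S' ≠ 0 ∧ 0 < x' ∧ x' < x ∧
      R' ^ 4 + 4 * S' ^ 4 = x' ^ 2 := by
  obtain ⟨m, n, hm, hmn, -, -, hR2, hS2, rfl⟩ :=
    pythagorean_param_of_mod_four_eq_one (x := R ^ 2) (y := 2 * S ^ 2)
      (by linear_combination h)
      (IsCoprime.mul_right (Int.isCoprime_two_left.2 hR.pow).symm hRS.pow)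
      (Int.sq_mod_four_eq_one_of_odd hR) hx
  have hmnS : m * n = S ^ 2 := by linarith
  obtain ⟨hm', hn⟩ := pos_and_pos_of_nonneg_of_mul_pos hm (by rw [hmnS]; positivity)
  obtain ⟨M, N, hM, hN, hMN, rfl, rfl⟩ :=
    exists_pow_eq_of_isCoprime_mul_eq_pow two_ne_zero hm' hn hmn hmnS
  have hRN : IsCoprime R N := by
    have hsq : IsCoprime (R ^ 2) N := by
      rw [show R ^ 2 = (M ^ 2) ^ 2 + N * (-N ^ 3) by linarith]
      exact (hMN.pow_left.pow_left).add_mul_left_left _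
    exact (IsCoprime.pow_left_iff two_pos).1 hsq
  obtain ⟨R', S', hR', hRS', hS', h'⟩ :=
    exists_fourth_add_four_mul_fourth_eq_sq (r := M) (by rw [hR2]; ring) hR hRN hN.ne' hM.ne'
  exact ⟨R', S', M, hR', hRS', hS', hM, by nlinarith, h'⟩

lemma fourth_add_four_mul_fourth_ne_sq {R S : ℤ} (hR : Odd R) (hRS : IsCoprime R S) (hS : S ≠ 0)
    (x : ℤ) : R ^ 4 + 4 * S ^ 4 ≠ x ^ 2 := by
  intro h
  wlog hx : 0 < x generalizing x
  · have hS4 : 0 < S ^ 4 := by positivity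
    exact this (-x) (by rw [h, neg_sq]) (by
      rcases (not_lt.1 hx).lt_or_eq with h0 | rfl
      · omega
      · nlinarith [sq_nonneg (R ^ 2)])
  induction hN : x.toNat using Nat.strong_induction_on generalizing R S x with
  | h N ih =>
    obtain ⟨R', S', x', hR', hRS', hS', hx', hlt, h'⟩ :=
      exists_smaller_fourth_add_four_mul_fourth hR hRS hS hx h
    exact ih _ (by omega) hR' hRS' hS' x' h' hx' rfl

lemma exists_add_eq_of_isCoprime_mul_eq_prime_mul_pow {p u v b : ℤ} {k : ℕ} (hp : Prime p)
    (hp0 : 0 < p) (hk : k ≠ 0) (hu : 0 < u) (hv : 0 < v) (hb : 0 ≤ b) (huv : IsCoprime u v)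
    (h : u * v = p * b ^ k) :
    ∃ g d : ℤ, IsCoprime g d ∧ b = g * d ∧ u + v = g ^ k + p * d ^ k := by
  wlog hpv : p ∣ v generalizing u v
  · have hpu : p ∣ u := (hp.dvd_or_dvd ⟨_, h⟩).resolve_right hpv
    rw [add_comm]
    exact this hv hu huv.symm (by rw [mul_comm, h]) hpu
  obtain ⟨w, rfl⟩ := hpv
  have huw : u * w = b ^ k := mul_left_cancel₀ hp.ne_zero (by rw [← h]; ring)
  obtain ⟨g, d, hg, hd, hgd, rfl, rfl⟩ :=
    exists_pow_eq_of_isCoprime_mul_eq_pow hk hu (pos_of_mul_pos_right hv hp0.le)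
      huv.of_mul_right_right huw
  refine ⟨g, d, hgd, ?_, rfl⟩
  exact (pow_left_inj₀ hb (by positivity) hk).1 (by rw [← huw, mul_pow])

lemma dvd_of_prime_dvd_of_mul_eq_prime_mul_pow {p q u v b : ℤ} {k : ℕ} (hq : Prime q)
    (hp : Prime p) (h : u * v = q * b ^ k) (hu : p ∣ u) (hv : p ∣ v) : p ∣ b := by
  have hpp : p * p ∣ q * b ^ k := h ▸ mul_dvd_mul hu hv
  rcases hp.dvd_or_dvd ((dvd_mul_right p p).trans hpp) with hpq | hpb
  · have hassoc := hp.associated_of_dvd hq hpq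
    have hqq : q * q ∣ q * b ^ k := (hassoc.mul_mul hassoc).dvd'.trans hpp
    exact hpq.trans (hq.dvd_of_dvd_pow ((mul_dvd_mul_iff_left hq.ne_zero).1 hqq))
  · exact hp.dvd_of_dvd_pow hpb

lemma prime_five : Prime (5 : ℤ) := Int.prime_iff_natAbs_prime.2 (by norm_num)

lemma exists_octic_eq_sq_of_odd {e c n : ℤ} (hec : IsCoprime e c) (he : Odd e) (hc : c ≠ 0)
    (h : e ^ 4 - 8 * e ^ 2 * c ^ 4 + 80 * c ^ 8 = n ^ 2) :
    ∃ a b : ℤ, 0 < a ∧ 0 < b ∧ IsCoprime a b ∧ Odd a ∧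
      a ^ 8 + 4 * a ^ 4 * b ^ 4 - 16 * b ^ 8 = e ^ 2 := by
  have hc4 : 0 < c ^ 4 := by positivity
  have hn : n ≠ 0 := by
    rintro rfl
    nlinarith [sq_nonneg (e ^ 2 - 4 * c ^ 4), mul_pos hc4 hc4]
  have hodd : Odd (e ^ 2 - 4 * c ^ 4) := he.pow.sub_even ⟨2 * c ^ 4, by ring⟩
  have hcop : IsCoprime (e ^ 2 - 4 * c ^ 4) (8 * c ^ 4) := by
    have hc' : IsCoprime (e ^ 2 + c * (-4 * c ^ 3)) c := hec.pow_left.add_mul_left_left _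
    rw [show e ^ 2 + c * (-4 * c ^ 3) = e ^ 2 - 4 * c ^ 4 by ring] at hc'
    rw [show (8 : ℤ) = 2 ^ 3 by norm_num]
    exact IsCoprime.mul_right (Int.isCoprime_two_left.2 hodd).symm.pow_right hc'.pow_right
  obtain ⟨m, k, hm, hmk, hmo, -, hx, hy, -⟩ :=
    pythagorean_param_of_mod_four_eq_one (z := |n|) (by rw [sq_abs]; linear_combination h) hcop
      (by have := Int.sq_mod_four_eq_one_of_odd he; omega) (abs_pos.2 hn)
  obtain ⟨k', rfl⟩ : (4 : ℤ) ∣ k :=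
    ((Int.isCoprime_two_left.2 hmo).pow_left (m := 2)).dvd_of_dvd_mul_left
      ⟨c ^ 4, by linarith⟩
  have hmk' : m * k' = c ^ 4 := by linarith
  obtain ⟨hm', hk'⟩ := pos_and_pos_of_nonneg_of_mul_pos hm (hmk'.symm ▸ hc4)
  obtain ⟨a, b, ha, hb, hab, rfl, rfl⟩ :=
    exists_pow_eq_of_isCoprime_mul_eq_pow four_ne_zero hm' hk' hmk.of_mul_right_right hmk'
  exact ⟨a, b, ha, hb, hab, (Int.odd_pow' four_ne_zero).1 hmo,
    by linear_combination -hx + 4 * hmk'⟩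

lemma exists_add_eq_of_octic_eq_sq {a b e : ℤ} (ha : 0 < a) (hb : 0 < b) (hab : IsCoprime a b)
    (hao : Odd a) (he : Odd e) (h : a ^ 8 + 4 * a ^ 4 * b ^ 4 - 16 * b ^ 8 = e ^ 2) :
    ∃ g d : ℤ, IsCoprime g d ∧ b = g * d ∧ a ^ 4 + 2 * b ^ 4 = g ^ 8 + 5 * d ^ 8 := by
  have hodd : Odd (a ^ 4 + 2 * b ^ 4) := hao.pow.add_even (even_two_mul _)
  obtain ⟨u, hu⟩ := hodd.sub_odd he
  obtain ⟨v, hv⟩ := hodd.add_odd he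
  have hadd : u + v = a ^ 4 + 2 * b ^ 4 := by linarith
  have hmul : u * v = 5 * b ^ 8 := by
    have h4 : 4 * (u * v) = 4 * (5 * b ^ 8) := by
      linear_combination h - (u + u) * hv - (a ^ 4 + 2 * b ^ 4 + e) * hu
    linarith
  obtain ⟨hu0, hv0⟩ := pos_and_pos_of_add_pos_of_mul_pos (a := u) (b := v)
    (by rw [hadd]; positivity) (by rw [hmul]; positivity)
  have huv : IsCoprime u v := isCoprime_of_prime_dvd (fun h ↦ hu0.ne' h.1) fun p hp hpu hpv ↦ by
    have hpb := dvd_of_prime_dvd_of_mul_eq_prime_mul_pow prime_five hp hmul hpu hpv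
    have hpa : p ∣ a ^ 4 := by
      rw [show a ^ 4 = u + v - b * (2 * b ^ 3) by rw [hadd]; ring]
      exact dvd_sub (dvd_add hpu hpv) (hpb.mul_right _)
    exact hp.not_isUnit (hab.isUnit_of_dvd' (hp.dvd_of_dvd_pow hpa) hpb)
  obtain ⟨g, d, hgd, hgd', hs⟩ := exists_add_eq_of_isCoprime_mul_eq_prime_mul_pow prime_five
    (by norm_num) (by norm_num) hu0 hv0 hb.le huv hmul
  exact ⟨g, d, hgd, hgd', hadd.symm.trans hs⟩

lemma octic_ne_sq {a b e : ℤ} (ha : 0 < a) (hb : 0 < b) (hab : IsCoprime a b) (hao : Odd a)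
    (he : Odd e) : a ^ 8 + 4 * a ^ 4 * b ^ 4 - 16 * b ^ 8 ≠ e ^ 2 := by
  intro h
  obtain ⟨g, d, hgd, rfl, hs⟩ := exists_add_eq_of_octic_eq_sq ha hb hab hao he h
  have hd : d ≠ 0 := right_ne_zero_of_mul hb.ne'
  have hpyth : (g ^ 4 - d ^ 4) ^ 2 + (2 * d ^ 4) ^ 2 = (a ^ 2) ^ 2 := by linear_combination -hs
  have hodd : Odd (g ^ 4 - d ^ 4) := by
    have ha4 : Odd ((g ^ 4 - d ^ 4) ^ 2 + (2 * d ^ 4) ^ 2) := hpyth ▸ hao.pow.pow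
    exact (Int.odd_pow' two_ne_zero).1
      ((Int.odd_add.1 ha4).2 ((even_two_mul _).pow_of_ne_zero two_ne_zero))
  have hcop : IsCoprime (g ^ 4 - d ^ 4) d := by
    rw [show g ^ 4 - d ^ 4 = g ^ 4 + d * -d ^ 3 by ring]
    exact hgd.pow_left.add_mul_left_left _
  obtain ⟨m, n, hm, hn, hmn, -, -, hd2, ha2⟩ := pythagorean_param_of_odd hpyth
    (IsCoprime.mul_right (Int.isCoprime_two_left.2 hodd).symm hcop.pow_right) hodd
    (by positivity) (by positivity)
  obtain ⟨r, s, hr, hs, -, rfl, rfl⟩ :=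
    exists_pow_eq_of_isCoprime_mul_eq_pow four_ne_zero hm hn hmn (by linarith : m * n = d ^ 4)
  exact not_fermat_42 (pow_ne_zero 2 hr.ne') (pow_ne_zero 2 hs.ne')
    (by rw [ha2]; ring : (r ^ 2) ^ 4 + (s ^ 2) ^ 4 = a ^ 2)

lemma quartic_ne_sq_of_odd {e c : ℤ} (hec : IsCoprime e c) (he : Odd e) (hc : c ≠ 0) (n : ℤ) :
    e ^ 4 - 8 * e ^ 2 * c ^ 4 + 80 * c ^ 8 ≠ n ^ 2 := fun h ↦
  have ⟨_, _, ha, hb, hab, hao, hab2⟩ := exists_octic_eq_sq_of_odd hec he hc h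
  octic_ne_sq ha hb hab hao he hab2

lemma exists_octic_eq_sq_of_odd_of_odd {e c n : ℤ} (hec : IsCoprime e c) (he : Odd e) (hc : Odd c)
    (h : e ^ 4 - 2 * e ^ 2 * c ^ 4 + 5 * c ^ 8 = 4 * n ^ 2) :
    ∃ a b : ℤ, 0 < a ∧ 0 < b ∧ IsCoprime a b ∧ Odd a ∧ Odd b ∧ c ^ 4 = a ^ 4 * b ^ 4 ∧
      a ^ 8 + a ^ 4 * b ^ 4 - b ^ 8 = e ^ 2 := by
  have hc0 : c ≠ 0 := by rintro rfl; simp at hc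
  have hc4 : 0 < c ^ 4 := by positivity
  have hn : n ≠ 0 := by
    rintro rfl
    nlinarith [sq_nonneg (e ^ 2 - c ^ 4), mul_pos hc4 hc4]
  obtain ⟨y, hy⟩ : Even (e ^ 2 - c ^ 4) := he.pow.sub_odd hc.pow
  have hcy : IsCoprime c y := by
    have h2 : IsCoprime c (y * 2) := by
      rw [show y * 2 = e ^ 2 + c * -c ^ 3 by linear_combination -hy]
      exact hec.symm.pow_right.add_mul_left_right _
    exact h2.of_mul_right_left
  have hpyth : 4 * ((c ^ 4) ^ 2 + y ^ 2) = 4 * n ^ 2 := by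
    linear_combination h - (e ^ 2 - c ^ 4 + (y + y)) * hy
  obtain ⟨m, k, hm, hmk, hmo, hke, hx, rfl, -⟩ :=
    pythagorean_param_of_mod_four_eq_one (x := c ^ 4) (y := y) (z := |n|)
      (by rw [sq_abs]; linarith) hcy.pow_left
      (by simpa only [← pow_mul] using Int.sq_mod_four_eq_one_of_odd (hc.pow (n := 2)))
      (abs_pos.2 hn)
  have hmul : (m + k) * (m - k) = c ^ 4 := by rw [hx]; ring
  have hm0 : m ≠ 0 := by rintro rfl; simp at hmo
  obtain ⟨hp, hq⟩ := pos_and_pos_of_add_pos_of_mul_pos (a := m + k) (b := m - k) (by omega)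
    (hmul ▸ hc4)
  have hmk' : IsCoprime (m + k) (m - k) := by
    have h2m : IsCoprime (m + k) 2 := (Int.isCoprime_two_left.2 (hmo.add_even hke)).symm
    have hmm : IsCoprime (m + k) m := by simpa using hmk.symm.mul_add_left_left 1
    simpa [two_mul, add_comm, add_left_comm, sub_eq_add_neg] using
      (h2m.mul_right hmm).add_mul_left_right (-1)
  obtain ⟨a, b, ha, hb, hab, hma, hmb⟩ :=
    exists_pow_eq_of_isCoprime_mul_eq_pow four_ne_zero hp hq hmk' hmul
  refine ⟨a, b, ha, hb, hab, (Int.odd_pow' four_ne_zero).1 (hma ▸ hmo.add_even hke),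
    (Int.odd_pow' four_ne_zero).1 (hmb ▸ hmo.sub_even hke), by rw [← hmul, hma, hmb], ?_⟩
  rw [show e ^ 2 = (m + k) * (m - k) + (m + k) ^ 2 - (m - k) ^ 2 by
    linear_combination hy - hmul, hma, hmb]
  ring

lemma exists_add_eq_of_octic_eq_sq_of_odd {a b e : ℤ} (ha : 0 < a) (hb : 0 < b)
    (hab : IsCoprime a b) (hbo : Odd b) (h : a ^ 8 + a ^ 4 * b ^ 4 - b ^ 8 = e ^ 2) :
    ∃ g d : ℤ, IsCoprime g d ∧ b = g * d ∧ 2 * (2 * a ^ 4 + b ^ 4) = g ^ 8 + 5 * d ^ 8 := by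
  let u := 2 * a ^ 4 + b ^ 4 - 2 * e
  let v := 2 * a ^ 4 + b ^ 4 + 2 * e
  have hadd : u + v = 2 * (2 * a ^ 4 + b ^ 4) := by ring
  have hmul : u * v = 5 * b ^ 8 := by linear_combination 4 * h
  obtain ⟨hu0, hv0⟩ := pos_and_pos_of_add_pos_of_mul_pos (a := u) (b := v)
    (by rw [hadd]; positivity) (by rw [hmul]; positivity)
  have hu : IsCoprime 2 u := by
    rw [Int.isCoprime_two_left, show u = b ^ 4 + 2 * (a ^ 4 - e) by ring]
    exact hbo.pow.add_even (even_two_mul _)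
  have huv : IsCoprime u v := isCoprime_of_prime_dvd (fun h ↦ hu0.ne' h.1) fun p hp hpu hpv ↦ by
    have hpb := dvd_of_prime_dvd_of_mul_eq_prime_mul_pow prime_five hp hmul hpu hpv
    have hpa : p ∣ 2 ^ 2 * a ^ 4 := by
      rw [show 2 ^ 2 * a ^ 4 = u + v - b * (2 * b ^ 3) by ring]
      exact dvd_sub (dvd_add hpu hpv) (hpb.mul_right _)
    rcases hp.dvd_or_dvd hpa with hp2 | hpa
    · exact hp.not_isUnit (hu.isUnit_of_dvd' (hp.dvd_of_dvd_pow hp2) hpu)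
    · exact hp.not_isUnit (hab.isUnit_of_dvd' (hp.dvd_of_dvd_pow hpa) hpb)
  obtain ⟨g, d, hgd, hgd', hs⟩ := exists_add_eq_of_isCoprime_mul_eq_prime_mul_pow prime_five
    (by norm_num) (by norm_num) hu0 hv0 hb.le huv hmul
  exact ⟨g, d, hgd, hgd', hadd.symm.trans hs⟩

lemma eq_zero_of_fourth_sub_fourth_eq_sq {r s x : ℤ} (hx : Odd x) (hrs : IsCoprime r s)
    (hr : r ≠ 0) (h : x ^ 2 + s ^ 4 = r ^ 4) : s = 0 := by
  by_contra hs
  have hxs : IsCoprime (x ^ 2) s := by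
    rw [show x ^ 2 = r ^ 4 + s * -s ^ 3 by linear_combination h]
    exact hrs.pow_left.add_mul_left_left _
  obtain ⟨R, S, hR, hRS, hS, h'⟩ := exists_fourth_add_four_mul_fourth_eq_sq h hx
    ((IsCoprime.pow_left_iff two_pos).1 hxs) hs hr
  exact fourth_add_four_mul_fourth_ne_sq hR hRS hS r h'

lemma eq_one_of_octic_eq_sq {a b e : ℤ} (ha : 0 < a) (hb : 0 < b) (hab : IsCoprime a b)
    (hao : Odd a) (hbo : Odd b) (h : a ^ 8 + a ^ 4 * b ^ 4 - b ^ 8 = e ^ 2) :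
    a ^ 4 = 1 ∧ b ^ 4 = 1 := by
  obtain ⟨g, d, hgd, rfl, hs⟩ := exists_add_eq_of_octic_eq_sq_of_odd ha hb hab hbo h
  obtain ⟨hgo, hdo⟩ := Int.odd_mul.1 hbo
  obtain ⟨w, hw⟩ : Even (g ^ 4 - d ^ 4) := hgo.pow.sub_odd hdo.pow
  have hpyth : (d ^ 4) ^ 2 + w ^ 2 = (a ^ 2) ^ 2 := by
    have h4 : 4 * ((d ^ 4) ^ 2 + w ^ 2) = 4 * (a ^ 2) ^ 2 := by
      linear_combination -hs - (g ^ 4 - d ^ 4 + (w + w)) * hw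
    linarith
  have hdw : IsCoprime d w := by
    have h2 : IsCoprime d (w * 2) := by
      rw [show w * 2 = g ^ 4 + d * -d ^ 3 by linear_combination -hw]
      exact hgd.symm.pow_right.add_mul_left_right _
    exact h2.of_mul_right_left
  obtain ⟨r, s, -, hrs, hro, -, hd4, rfl, ha2⟩ := pythagorean_param_of_mod_four_eq_one hpyth
    hdw.pow_left
    (by simpa only [← pow_mul] using Int.sq_mod_four_eq_one_of_odd (hdo.pow (n := 2)))
    (by positivity)
  have hs0 : s = 0 := eq_zero_of_fourth_sub_fourth_eq_sq (x := a * d ^ 2) (hao.mul hdo.pow) hrs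
    (by rintro rfl; simp at hro)
    (by linear_combination d ^ 4 * ha2 + (r ^ 2 + s ^ 2) * hd4)
  have hdw' : IsCoprime d 0 := by simpa [hs0] using hdw
  subst hs0
  have hd1 : d ^ 4 = 1 := by
    have hd : d = 1 ∨ d = -1 := Int.isUnit_iff.1 (isCoprime_zero_right.1 hdw')
    rcases hd with rfl | rfl <;> norm_num
  have hg1 : g ^ 4 = 1 := by linarith
  refine ⟨?_, by rw [mul_pow, hg1, hd1, one_mul]⟩
  linear_combination -hpyth + (d ^ 4 + 1) * hd1

lemma sq_eq_one_of_quartic_eq_four_mul_sq {e c n : ℤ} (hec : IsCoprime e c) (he : Odd e)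
    (hc : Odd c) (h : e ^ 4 - 2 * e ^ 2 * c ^ 4 + 5 * c ^ 8 = 4 * n ^ 2) :
    e ^ 2 = 1 ∧ c ^ 2 = 1 := by
  obtain ⟨a, b, ha, hb, hab, hao, hbo, hcab, hee⟩ := exists_octic_eq_sq_of_odd_of_odd hec he hc h
  obtain ⟨ha4, hb4⟩ := eq_one_of_octic_eq_sq ha hb hab hao hbo hee
  constructor
  · linear_combination -hee + (a ^ 4 + 1 + b ^ 4) * ha4 - b ^ 4 * hb4
  · refine (pow_left_inj₀ (sq_nonneg c) zero_le_one two_ne_zero).1 ?_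
    linear_combination hcab + b ^ 4 * ha4 + hb4

end IntegerDescent

section Euclidean

lemma eq_zero_of_norm_eq_zero_of_not_isSquare {R : Type*} [CommRing R] [IsDomain R]
    [IsIntegrallyClosed R] {a b : R} (h : ¬IsSquare (b ^ 2 + 4 * a)) {z : QuadraticAlgebra R a b}
    (hz : z.norm = 0) : z = 0 := by
  have hsq : (2 * z.re + b * z.im) ^ 2 = (b ^ 2 + 4 * a) * z.im ^ 2 := by
    rw [QuadraticAlgebra.norm_def] at hz
    linear_combination 4 * hz
  have him : z.im = 0 := by
    by_contra him
    obtain ⟨k, hk⟩ := (IsIntegrallyClosed.pow_dvd_pow_iff two_ne_zero).1 (Dvd.intro_left _ hsq.symm)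
    refine h ⟨k, mul_right_cancel₀ (pow_ne_zero 2 him) ?_⟩
    rw [← hsq, hk]
    ring
  have hre : z.re = 0 := by
    rw [QuadraticAlgebra.norm_def, him] at hz
    simpa using hz
  exact QuadraticAlgebra.ext hre him

/-- The ring `ℤ[i][η]` with `η² = (1 - i) η + 1`, in which the quadratic forms of the descent
for the square class of `17` split off linear factors. -/
abbrev QuarticInt := QuadraticAlgebra GaussianInt 1 ⟨1, -1⟩

lemma not_isSquare_disc : ¬IsSquare ((⟨1, -1⟩ : GaussianInt) ^ 2 + 4 * 1) := by
  rintro ⟨k, hk⟩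
  have hnorm : (20 : ℤ) = k.norm * k.norm := by rw [← Zsqrtd.norm_mul, ← hk]; rfl
  have hle : k.norm ≤ 4 := by nlinarith
  have hge : -4 ≤ k.norm := by nlinarith
  interval_cases k.norm <;> omega

instance : IsDomain QuarticInt := by
  have : NoZeroDivisors QuarticInt := ⟨fun {x y} hxy ↦ by
    have hnorm : x.norm * y.norm = 0 := by rw [← map_mul, hxy, QuadraticAlgebra.norm_zero]
    exact (mul_eq_zero.1 hnorm).imp (eq_zero_of_norm_eq_zero_of_not_isSquare not_isSquare_disc)
      (eq_zero_of_norm_eq_zero_of_not_isSquare not_isSquare_disc)⟩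
  exact NoZeroDivisors.to_isDomain _

/-- The absolute norm form of `ℤ[i][η]` in the coordinates `a + bi + (c + di)η`, over an arbitrary
ring so that it can also be evaluated at rational points. -/
def normForm {R : Type*} [CommRing R] (a b c d : R) : R :=
  (a ^ 2 - b ^ 2 + (a * c - b * d + a * d + b * c) - (c ^ 2 - d ^ 2)) ^ 2 +
    (2 * a * b + (a * d + b * c - a * c + b * d) - 2 * c * d) ^ 2

/-- The absolute norm of `ℤ[i][η]`, the composite of the relative norm to `ℤ[i]` with the norm
of `ℤ[i]`. -/
def absNorm : QuarticInt →* ℤ := Zsqrtd.normMonoidHom.comp QuadraticAlgebra.norm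

lemma absNorm_eq (x : QuarticInt) : absNorm x = x.norm.re ^ 2 + x.norm.im ^ 2 := by
  simp only [absNorm, MonoidHom.coe_comp, Function.comp_apply, Zsqrtd.normMonoidHom,
    MonoidHom.coe_mk, OneHom.coe_mk, Zsqrtd.norm_def]
  ring

lemma absNorm_pos {x : QuarticInt} (hx : x ≠ 0) : 0 < absNorm x := by
  refine lt_of_le_of_ne (by rw [absNorm_eq]; positivity) fun h ↦ hx ?_
  obtain ⟨hre, him⟩ : x.norm.re = 0 ∧ x.norm.im = 0 := by
    rw [absNorm_eq] at h
    constructor <;> nlinarith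
  exact eq_zero_of_norm_eq_zero_of_not_isSquare not_isSquare_disc (Zsqrtd.ext hre him)

lemma exists_mul_eq_absNorm (x : QuarticInt) :
    ∃ y : QuarticInt, x * y = absNorm x ∧ absNorm y = absNorm x ^ 3 := by
  have hstar : absNorm (star x) = absNorm x := by simp [absNorm_eq]
  have hcast : absNorm (algebraMap _ _ (star x.norm)) = absNorm x ^ 2 := by
    change Zsqrtd.norm (QuadraticAlgebra.norm _) = Zsqrtd.norm x.norm ^ 2
    rw [QuadraticAlgebra.norm_algebraMap, pow_two, Zsqrtd.norm_mul, Zsqrtd.norm_conj, pow_two]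
  refine ⟨star x * algebraMap _ _ (star x.norm), ?_, ?_⟩
  · rw [← mul_assoc, ← QuadraticAlgebra.algebraMap_norm_eq_mul_star, ← map_mul,
      ← Zsqrtd.norm_eq_mul_conj, map_intCast]
    rfl
  · rw [map_mul, hstar, hcast]
    ring

lemma absNorm_mk (a b c d : ℤ) : absNorm ⟨⟨a, b⟩, ⟨c, d⟩⟩ = normForm a b c d := by
  simp [absNorm_eq, normForm, QuadraticAlgebra.norm_def]
  ring

lemma sq_sub_add_sq_sub_lt_one {u v p q : ℚ} (hu : |u| ≤ 1 / 4) (hv : v ^ 2 ≤ 8 / 25)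
    (hpq : p ^ 2 + q ^ 2 ≤ 5 / 16) (hvq : 0 ≤ v * q) : (u - p) ^ 2 + (v - q) ^ 2 < 1 := by
  have hp : |p| ≤ 14 / 25 := by
    apply abs_le_of_sq_le_sq _ (by norm_num)
    nlinarith [sq_nonneg q]
  have hup : |u * p| ≤ 1 / 4 * (14 / 25) := by
    rw [abs_mul]
    exact mul_le_mul hu hp (abs_nonneg _) (by norm_num)
  have hu2 : u ^ 2 ≤ 1 / 16 := by
    rw [abs_le] at hu
    nlinarith
  rw [abs_le] at hup
  nlinarith

-- Here `z = x + iy` and `w = p + iq` are complex numbers; the shift by `±1` is needed only when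
-- `z` is near a corner of the unit square and `Im z²`, `Im w` have opposite signs.
lemma exists_int_norm_sq_sub_lt_one {x y p q : ℚ} (hx : |x| ≤ 1 / 2) (hy : |y| ≤ 1 / 2)
    (hpq : p ^ 2 + q ^ 2 ≤ 5 / 16) :
    ∃ k : ℤ, ((x - k) ^ 2 - y ^ 2 - p) ^ 2 + (2 * (x - k) * y - q) ^ 2 < 1 := by
  rw [abs_le] at hx hy
  have hx2 : x ^ 2 ≤ 1 / 4 := by nlinarith
  have hy2 : y ^ 2 ≤ 1 / 4 := by nlinarith
  rcases le_or_gt 0 (2 * x * y * q) with hsame | hopp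
  · refine ⟨0, ?_⟩
    rw [Int.cast_zero, sub_zero]
    exact sq_sub_add_sq_sub_lt_one (by rw [abs_le]; constructor <;> nlinarith) (by nlinarith) hpq
      hsame
  rcases lt_or_ge (x ^ 2 + y ^ 2) (11 / 25) with hsmall | hlarge
  · refine ⟨0, ?_⟩
    have hz : (x ^ 2 - y ^ 2) ^ 2 + (2 * x * y) ^ 2 ≤ (11 / 25) ^ 2 := by nlinarith
    rw [Int.cast_zero, sub_zero]
    nlinarith [sq_nonneg (14 * (x ^ 2 - y ^ 2) + 11 * p), sq_nonneg (14 * (2 * x * y) + 11 * q)]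
  have shifted {z : ℚ} (hz : 1 / 2 ≤ |z|) (hz' : |z| ≤ 113 / 200) (hzq : 0 ≤ 2 * z * y * q) :
      (z ^ 2 - y ^ 2 - p) ^ 2 + (2 * z * y - q) ^ 2 < 1 := by
    have hz2 : 1 / 4 ≤ z ^ 2 := by rw [← sq_abs]; nlinarith
    have hz2' : z ^ 2 ≤ 32 / 100 := by rw [← sq_abs]; nlinarith
    exact sq_sub_add_sq_sub_lt_one (by rw [abs_le]; constructor <;> nlinarith) (by nlinarith) hpq
      hzq
  rcases le_total 0 x with hpos | hneg
  · have hyq : y * q < 0 := by nlinarith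
    refine ⟨1, ?_⟩
    have hx3 : 87 / 200 ≤ x := by nlinarith
    rw [Int.cast_one]
    refine shifted ?_ ?_ (by nlinarith)
    all_goals rw [abs_of_neg (by linarith)]; linarith
  · have hyq : 0 < y * q := by nlinarith
    refine ⟨-1, ?_⟩
    have hx3 : x ≤ -(87 / 200) := by nlinarith
    rw [Int.cast_neg, Int.cast_one, sub_neg_eq_add]
    refine shifted ?_ ?_ (by nlinarith)
    all_goals rw [abs_of_pos (by linarith)]; linarith

lemma exists_int_normForm_sub_lt_one (a b c d : ℚ) : ∃ k l m n : ℤ,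
    normForm (a - k) (b - l) (c - m) (d - n) < 1 := by
  set m := round c
  set n := round d
  obtain ⟨u, hu⟩ : ∃ u, u = c - m := ⟨_, rfl⟩
  obtain ⟨v, hv⟩ : ∃ v, v = d - n := ⟨_, rfl⟩
  have hu' : |u| ≤ 1 / 2 := hu ▸ abs_sub_round c
  have hv' : |v| ≤ 1 / 2 := hv ▸ abs_sub_round d
  have hw : (u ^ 2 - v ^ 2 + u * v) ^ 2 + (2 * u * v - (u ^ 2 - v ^ 2) / 2) ^ 2 ≤ 5 / 16 := by
    rw [abs_le] at hu' hv'
    have hu2 : u ^ 2 ≤ 1 / 4 := by nlinarith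
    have hv2 : v ^ 2 ≤ 1 / 4 := by nlinarith
    calc (u ^ 2 - v ^ 2 + u * v) ^ 2 + (2 * u * v - (u ^ 2 - v ^ 2) / 2) ^ 2
        = 5 / 4 * (u ^ 2 + v ^ 2) ^ 2 := by ring
      _ ≤ 5 / 16 := by nlinarith [sq_nonneg u, sq_nonneg v]
  obtain ⟨k, hk⟩ := exists_int_norm_sq_sub_lt_one (abs_sub_round (a + (u + v) / 2))
    (abs_sub_round (b + (v - u) / 2)) hw
  refine ⟨round (a + (u + v) / 2) + k, round (b + (v - u) / 2), m, n, lt_of_eq_of_lt ?_ hk⟩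
  rw [normForm, ← hu, ← hv]
  push_cast
  ring

lemma exists_absNorm_sub_mul_lt (x : QuarticInt) {y : QuarticInt} (hy : y ≠ 0) :
    ∃ q : QuarticInt, absNorm (x - y * q) < absNorm y := by
  obtain ⟨z, hyz, hz⟩ := exists_mul_eq_absNorm y
  have hpos := absNorm_pos hy
  set N := absNorm y
  have hN : (0 : ℚ) < N := by exact_mod_cast hpos
  obtain ⟨a, b, c, d, habcd⟩ := exists_int_normForm_sub_lt_one ((x * z).re.re / N)
    ((x * z).re.im / N) ((x * z).im.re / N) ((x * z).im.im / N)
  refine ⟨⟨⟨a, b⟩, ⟨c, d⟩⟩, ?_⟩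
  have hscaled : absNorm (x * z - N * ⟨⟨a, b⟩, ⟨c, d⟩⟩) < N ^ 4 := by
    set w := x * z
    suffices h : (absNorm (w - N * ⟨⟨a, b⟩, ⟨c, d⟩⟩) : ℚ) < N ^ 4 by exact_mod_cast h
    have hw : w - N * ⟨⟨a, b⟩, ⟨c, d⟩⟩ =
        ⟨⟨w.re.re - N * a, w.re.im - N * b⟩, ⟨w.im.re - N * c, w.im.im - N * d⟩⟩ := by
      ext <;> simp
    calc (absNorm (w - N * ⟨⟨a, b⟩, ⟨c, d⟩⟩) : ℚ)
        = N ^ 4 * normForm (w.re.re / N - a : ℚ) (w.re.im / N - b) (w.im.re / N - c)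
            (w.im.im / N - d) := by
          rw [hw, absNorm_mk, normForm, normForm]
          push_cast
          field_simp
      _ < N ^ 4 := mul_lt_of_lt_one_right (pow_pos hN 4) habcd
  rw [← hyz, show x * z - y * z * ⟨⟨a, b⟩, ⟨c, d⟩⟩ = (x - y * ⟨⟨a, b⟩, ⟨c, d⟩⟩) * z by ring,
    map_mul, hz, pow_succ' N 3] at hscaled
  exact lt_of_mul_lt_mul_right hscaled (by positivity)

instance : IsPrincipalIdealRing QuarticInt := by
  refine ⟨fun S ↦ ?_⟩
  rcases eq_or_ne S ⊥ with rfl | hS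
  · exact bot_isPrincipal
  obtain ⟨y, ⟨hyS, hy⟩, hmin⟩ := (measure fun x ↦ (absNorm x).toNat).wf.has_min
    {x | x ∈ S ∧ x ≠ 0} (Submodule.exists_mem_ne_zero_of_ne_bot hS)
  refine ⟨y, le_antisymm (fun x hx ↦ ?_) ((Ideal.span_singleton_le_iff_mem S).2 hyS)⟩
  obtain ⟨q, hq⟩ := exists_absNorm_sub_mul_lt x hy
  have hrem : x - y * q = 0 := by
    by_contra hne
    have := absNorm_pos hy
    have := hmin _ ⟨S.sub_mem hx (S.mul_mem_right q hyS), hne⟩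
    simp only [WellFoundedRelation.rel, InvImage] at this
    omega
  exact Ideal.mem_span_singleton.2 ⟨q, sub_eq_zero.1 hrem⟩

end Euclidean

section Arithmetic

instance : IsLocalHom (Zsqrtd.normMonoidHom (d := -1)) :=
  ⟨fun _ h ↦ Zsqrtd.norm_eq_one_iff.1 (Int.isUnit_iff_natAbs_eq.1 h)⟩

lemma prime_of_prime_norm {z : GaussianInt} (h : Prime z.norm) : Prime z :=
  (h.irreducible.of_map (f := Zsqrtd.normMonoidHom (d := -1))).prime

lemma isUnit_absNorm_iff {x : QuarticInt} : IsUnit (absNorm x) ↔ IsUnit x := by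
  rw [QuadraticAlgebra.isUnit_iff_norm_isUnit]
  exact isUnit_map_iff (Zsqrtd.normMonoidHom (d := -1)) _

instance : IsLocalHom absNorm := ⟨fun _ ↦ isUnit_absNorm_iff.1⟩

lemma prime_of_prime_absNorm {x : QuarticInt} (h : Prime (absNorm x)) : Prime x :=
  h.irreducible.of_map.prime

lemma prime_algebraMap_of_forall_not_dvd_sub_sq {R : Type*} [CommRing R] [IsDomain R]
    [IsPrincipalIdealRing R] {a b r : R} (hr : Prime r)
    (hdisc : ∀ k, ¬r ∣ b ^ 2 + 4 * a - k ^ 2) :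
    Prime (algebraMap R (QuadraticAlgebra R a b) r) := by
  have dvd_of_dvd_norm {z : QuadraticAlgebra R a b} (hz : r ∣ z.norm) :
      algebraMap R (QuadraticAlgebra R a b) r ∣ z := by
    rw [QuadraticAlgebra.norm_def] at hz
    have him : r ∣ z.im := by
      by_contra him
      obtain ⟨s, t, hst⟩ := (hr.coprime_iff_not_dvd).2 him
      refine hdisc (t * (2 * z.re + b * z.im)) ?_
      have : b ^ 2 + 4 * a - (t * (2 * z.re + b * z.im)) ^ 2 =
        (b ^ 2 + 4 * a) * s * (1 + t * z.im) * r - 4 * t ^ 2 *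
          (z.re * z.re + b * z.re * z.im - a * z.im * z.im) := by
        linear_combination -(b ^ 2 + 4 * a) * (1 + t * z.im) * hst
      rw [this]
      exact dvd_sub (Dvd.intro_left _ rfl) (hz.mul_left _)
    refine QuadraticAlgebra.algebraMap_dvd_iff.2 ⟨hr.dvd_of_dvd_pow (n := 2) ?_, him⟩
    have hre : z.re ^ 2 = (z.re * z.re + b * z.re * z.im - a * z.im * z.im) -
        (b * z.re - a * z.im) * z.im := by ring
    rw [hre]
    exact dvd_sub hz (him.mul_left _)
  refine ⟨?_, ?_, fun x y hxy ↦ ?_⟩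
  · simpa using hr.ne_zero
  · rw [QuadraticAlgebra.isUnit_iff_norm_isUnit, QuadraticAlgebra.norm_algebraMap]
    exact fun h ↦ hr.not_isUnit (isUnit_pow_iff two_ne_zero |>.1 h)
  · have hnorm : r ∣ x.norm * y.norm := by
      rw [← map_mul]
      obtain ⟨z, hz⟩ := hxy
      rw [hz, map_mul, QuadraticAlgebra.norm_algebraMap, pow_two, mul_assoc]
      exact dvd_mul_right _ _
    exact (hr.dvd_or_dvd hnorm).imp dvd_of_dvd_norm dvd_of_dvd_norm

/-- The fourth root of unity `i`. -/
def I : QuarticInt := ⟨⟨0, 1⟩, 0⟩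

/-- The generator `η` of `ℤ[i][η]`, which is a unit. -/
def η : QuarticInt := ⟨0, 1⟩

/-- The totally ramified prime above `2`. -/
def π : QuarticInt := η - 1

/-- The square root `(1 + i)η - 1` of `1 + 2i`. -/
def τ : QuarticInt := (1 + I) * η - 1

/-- A prime of degree one above `17`. -/
def ρ : QuarticInt := 2 * (1 - I) - η

lemma I_sq : I ^ 2 = -1 := by decide +kernel

lemma τ_sq : τ ^ 2 = 1 + 2 * I := by decide +kernel

lemma one_add_I_eq : 1 + I = -η * π ^ 2 := by decide +kernel

lemma two_eq : 2 = -I * η ^ 2 * π ^ 4 := by decide +kernel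

lemma three_sub_τ_eq : 3 - τ = (1 + I) * ρ := by decide +kernel

lemma isUnit_I : IsUnit I := isUnit_absNorm_iff.1 (by decide +kernel)

lemma isUnit_η : IsUnit η := isUnit_absNorm_iff.1 (by decide +kernel)

lemma prime_π : Prime π := prime_of_prime_absNorm (by
  have h : absNorm π = 2 := by decide +kernel
  exact h ▸ Int.prime_two)

lemma prime_ρ : Prime ρ := prime_of_prime_absNorm (by
  have h : absNorm ρ = (17 : ℕ) := by decide +kernel
  exact h ▸ Nat.prime_iff_prime_int.1 (by norm_num))

lemma prime_algebraMap_gaussianInt {p : ℕ} (hp : p.Prime) {z : GaussianInt} (hz : z.norm = p)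
    (φ : GaussianInt →+* ZMod p) (hφ : φ z = 0)
    (hdisc : ¬IsSquare (φ (⟨1, -1⟩ ^ 2 + 4 * 1))) : Prime (algebraMap _ QuarticInt z) := by
  refine prime_algebraMap_of_forall_not_dvd_sub_sq
    (prime_of_prime_norm (hz ▸ Nat.prime_iff_prime_int.1 hp)) fun k ⟨m, hm⟩ ↦ hdisc ⟨φ k, ?_⟩
  have := congrArg φ hm
  rwa [map_mul, hφ, zero_mul, map_sub, sub_eq_zero, map_pow, pow_two (φ k)] at this

lemma prime_four_add_I : Prime (4 + I) :=
  prime_algebraMap_gaussianInt (p := 17) (z := ⟨4, 1⟩) (by norm_num) rfl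
    (Zsqrtd.lift ⟨-4, by decide⟩) (by decide +kernel) (by decide +kernel)

lemma prime_one_sub_two_mul_I : Prime (1 - 2 * I) :=
  prime_algebraMap_gaussianInt (p := 5) (z := ⟨1, -2⟩) (by norm_num) rfl
    (Zsqrtd.lift ⟨3, by decide⟩) (by decide +kernel) (by decide +kernel)

lemma eq_coordinates (x : QuarticInt) :
    x = x.re.re + x.re.im * I + (x.im.re + x.im.im * I) * η := by
  ext <;> simp [I, η, QuadraticAlgebra.re_intCast, QuadraticAlgebra.im_intCast]

/-- Evaluation of `a + bi + (c + di)η` at a pair of roots of the equations defining `i`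
and `η`. -/
def evalHom {R : Type*} [CommRing R] (i e : R) (hi : i ^ 2 = -1) (he : e ^ 2 = (1 - i) * e + 1) :
    QuarticInt →+* R where
  toFun x := x.re.re + x.re.im * i + (x.im.re + x.im.im * i) * e
  map_one' := by simp [QuadraticAlgebra.re_one, QuadraticAlgebra.im_one]
  map_zero' := by simp
  map_add' x y := by
    simp only [QuadraticAlgebra.re_add, QuadraticAlgebra.im_add, Zsqrtd.re_add, Zsqrtd.im_add]
    push_cast
    ring
  map_mul' x y := by
    simp only [QuadraticAlgebra.re_mul, QuadraticAlgebra.im_mul, Zsqrtd.re_mul, Zsqrtd.im_mul,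
      Zsqrtd.re_add, Zsqrtd.im_add, one_mul]
    push_cast
    linear_combination (-(x.re.im * y.re.im) - (x.re.im * y.im.im + x.im.im * y.re.im) * e +
      (x.im.re * y.im.im + x.im.im * y.im.re) * e - x.im.im * y.im.im * (1 + (1 - i) * e)) * hi -
      (x.im.re + x.im.im * i) * (y.im.re + y.im.im * i) * he

/-- The reduction of `ℤ[i][η]` modulo `π`. -/
def toZMod2 : QuarticInt →+* ZMod 2 := evalHom 1 1 (by decide) (by decide)

/-- The reduction of `ℤ[i][η]` modulo a prime above `5` that divides `τ`. -/
def toZMod5 : QuarticInt →+* ZMod 5 := evalHom 2 2 (by decide) (by decide)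

/-- The reduction of `ℤ[i][η]` modulo `ρ`. -/
def toZMod17 : QuarticInt →+* ZMod 17 := evalHom 4 11 (by decide) (by decide)

lemma dvd_iff_map_eq_zero {n : ℕ} {p : QuarticInt} (φ : QuarticInt →+* ZMod n) (hφ : φ p = 0)
    (hn : p ∣ n) {i e : ℤ} (hi : p ∣ I - i) (he : p ∣ η - e) {x : QuarticInt} :
    p ∣ x ↔ φ x = 0 := by
  refine ⟨fun ⟨y, hy⟩ ↦ by rw [hy, map_mul, hφ, zero_mul], fun hx ↦ ?_⟩
  obtain ⟨m, hm⟩ : ∃ m : ℤ, p ∣ x - m := by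
    refine ⟨x.re.re + x.re.im * i + (x.im.re + x.im.im * i) * e, ?_⟩
    have hxm : x - ((x.re.re + x.re.im * i + (x.im.re + x.im.im * i) * e : ℤ) : QuarticInt) =
        (x.re.im + x.im.im * e) * (I - i) + (x.im.re + x.im.im * I) * (η - e) := by
      push_cast
      linear_combination eq_coordinates x
    rw [hxm]
    exact (hi.mul_left _).add (he.mul_left _)
  have hm0 : (m : ZMod n) = 0 := by
    obtain ⟨y, hy⟩ := hm
    rw [← map_intCast φ, ← sub_sub_cancel x (m : QuarticInt), map_sub, hx, hy, map_mul, hφ]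
    ring
  have hpm : p ∣ m := by
    obtain ⟨k, rfl⟩ := (ZMod.intCast_zmod_eq_zero_iff_dvd _ _).1 hm0
    rw [Int.cast_mul, Int.cast_natCast]
    exact hn.mul_right _
  simpa using hm.add hpm

lemma π_dvd_iff {x : QuarticInt} : π ∣ x ↔ toZMod2 x = 0 :=
  dvd_iff_map_eq_zero toZMod2 (by decide +kernel) (i := 1) (e := 1)
    ⟨-I * η ^ 2 * π ^ 3, by decide +kernel⟩ ⟨⟨⟨0, -1⟩, ⟨-1, 0⟩⟩, by decide +kernel⟩
    ⟨1, by decide +kernel⟩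

lemma ρ_dvd_iff {x : QuarticInt} : ρ ∣ x ↔ toZMod17 x = 0 :=
  dvd_iff_map_eq_zero toZMod17 (by decide +kernel) (i := 4) (e := 11)
    ⟨⟨⟨3, 5⟩, ⟨-1, 4⟩⟩, by decide +kernel⟩ ⟨⟨⟨-1, -1⟩, ⟨0, -1⟩⟩, by decide +kernel⟩
    ⟨⟨⟨-2, -3⟩, ⟨1, -2⟩⟩, by decide +kernel⟩

lemma π_pow_nine_dvd_iff {x : QuarticInt} : π ^ 9 ∣ x ↔
    4 ∣ x.re.im ∧ 4 ∣ x.im.re ∧ 4 ∣ x.im.im ∧ 8 ∣ x.re.re - x.re.im + x.im.re + x.im.im := by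
  constructor
  · rintro ⟨y, rfl⟩
    rw [show π ^ 9 = ⟨⟨-12, -40⟩, ⟨-4, 24⟩⟩ by decide +kernel]
    simp only [QuadraticAlgebra.re_mul, QuadraticAlgebra.im_mul, Zsqrtd.re_mul, Zsqrtd.im_mul,
      Zsqrtd.re_add, Zsqrtd.im_add, one_mul]
    omega
  · rintro ⟨⟨b, hb⟩, ⟨c, hc⟩, ⟨d, hd⟩, ⟨k, hk⟩⟩
    have h8 : (8 : QuarticInt) = π ^ 9 * (π ^ 3 * (-I * η ^ 2) ^ 3) := by decide +kernel
    have h4 : (4 : QuarticInt) = π ^ 8 * (-I * η ^ 2) ^ 2 := by decide +kernel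
    have hI : 1 + I = π * (-η * π) := by decide +kernel
    have hη : η - 1 = π := rfl
    have hIη : I * η - 1 = π * (I - I * η * π) := by decide +kernel
    have hx := eq_coordinates x
    have ha : x.re.re = 8 * k + 4 * b - 4 * c - 4 * d := by omega
    rw [ha, hb, hc, hd] at hx
    push_cast at hx
    refine ⟨π ^ 3 * (-I * η ^ 2) ^ 3 * k +
      (-I * η ^ 2) ^ 2 * (b * (-η * π) + c + d * (I - I * η * π)), ?_⟩
    linear_combination hx + k * h8 + (b * (1 + I) + c * (η - 1) + d * (I * η - 1)) * h4 +
      π ^ 8 * (-I * η ^ 2) ^ 2 * (b * hI + d * hIη + c * hη)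

instance : DecidablePred (π ^ 9 ∣ ·) := fun _ ↦ decidable_of_iff' _ π_pow_nine_dvd_iff

lemma exists_lt_π_pow_nine_dvd_sub {x : QuarticInt} : ∃ a < 8, ∃ b < 4, ∃ c < 4, ∃ d < 4,
    π ^ 9 ∣ x - ⟨⟨(a : ℕ), (b : ℕ)⟩, ⟨(c : ℕ), (d : ℕ)⟩⟩ := by
  refine ⟨((x.re.re - x.re.im + x.im.re + x.im.im + x.re.im % 4 - x.im.re % 4 - x.im.im % 4) %
    8).toNat, by omega, (x.re.im % 4).toNat, by omega, (x.im.re % 4).toNat, by omega,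
    (x.im.im % 4).toNat, by omega, ?_⟩
  rw [π_pow_nine_dvd_iff]
  simp only [QuadraticAlgebra.re_sub, QuadraticAlgebra.im_sub, Zsqrtd.re_sub, Zsqrtd.im_sub]
  omega

end Arithmetic

section Biquadratic

variable {R : Type*} [CommRing R]

/-- The biquadratic binary form `a m⁴ + b m² n² + c n⁴`. The descents run on the conditions that
such a form takes a square value. -/
def biquadratic (a b c m n : R) : R := a * m ^ 4 + b * m ^ 2 * n ^ 2 + c * n ^ 4

-- On the genus one curve `Y² = a x⁴ + b x² + c` the difference of a point and the point `(r, y)`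
-- lies on the Jacobian, whose quartic has the coefficients `1, b, a c`.
lemma exists_sq_eq_mul_biquadratic {a b c r y h n Y P Q : R} (hy : y ^ 2 = biquadratic a b c r 1)
    (hY : Y ^ 2 = biquadratic a b c h n) (hP : P = h * n * y + r * Y)
    (hQ : Q = h ^ 2 - r ^ 2 * n ^ 2) :
    ∃ z, z ^ 2 = (r * n) ^ 2 * biquadratic 1 b (a * c) P Q := by
  rw [biquadratic] at hy hY
  obtain rfl : c = y ^ 2 - a * r ^ 4 - b * r ^ 2 := by linear_combination -hy
  refine ⟨(P ^ 2 - a * r ^ 2 * Q ^ 2) * h - y * P * Q * n, ?_⟩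
  rw [hP, hQ, biquadratic]
  linear_combination (r ^ 2 * (h ^ 2 - r ^ 2 * n ^ 2) *
    ((h * n * y + r * Y) ^ 2 - a * r ^ 2 * (h ^ 2 - r ^ 2 * n ^ 2) ^ 2)) * hY

end Biquadratic

section Factorization

variable {R : Type*} [CommRing R] [IsDomain R]

lemma dvd_of_sq_eq_mul_sub_mul [IsIntegrallyClosed R] {a b c g : R} (ha : a ≠ 0)
    (h : g ^ 2 = a * b * g - a ^ 2 * c) : a ∣ g := by
  have haK : algebraMap R (FractionRing R) a ≠ 0 := by simpa using ha
  have hint : IsIntegral R (algebraMap R (FractionRing R) g / algebraMap R _ a) := by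
    refine ⟨.X ^ 2 + (.C (-b) * .X + .C c), by monicity!, ?_⟩
    have hK := congrArg (algebraMap R (FractionRing R)) h
    simp only [map_pow, map_mul, map_sub] at hK
    simp only [Polynomial.eval₂_add, Polynomial.eval₂_mul, Polynomial.eval₂_pow,
      Polynomial.eval₂_X, Polynomial.eval₂_neg,
      Polynomial.eval₂_C, map_neg, div_pow, hK]
    field_simp
    ring
  obtain ⟨y, hy⟩ := IsIntegrallyClosed.algebraMap_eq_of_integral hint
  refine ⟨y, IsFractionRing.injective R (FractionRing R) ?_⟩
  rw [map_mul, hy, mul_div_cancel₀ _ haK]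

lemma exists_add_eq_and_mul_eq_of_sq_eq [IsIntegrallyClosed R] (h2 : (2 : R) ≠ 0) {s w c : R}
    (h : w ^ 2 = s ^ 2 - 4 * c) : ∃ g f, g + f = s ∧ g * f = c ∧ g - f = w := by
  obtain ⟨g, hg⟩ : 2 ∣ s + w := dvd_of_sq_eq_mul_sub_mul h2 (b := s) (c := c) <| by
    linear_combination h
  refine ⟨g, s - g, by ring, ?_, by linear_combination hg.symm⟩
  refine mul_left_cancel₀ (pow_ne_zero 2 h2) ?_
  obtain rfl : w = 2 * g - s := by linear_combination hg
  linear_combination -h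

lemma exists_eq_mul_of_sq_eq_sq_mul [IsIntegrallyClosed R] {a b x : R} (ha : a ≠ 0)
    (h : x ^ 2 = a ^ 2 * b) : ∃ y, x = a * y ∧ y ^ 2 = b := by
  obtain ⟨y, rfl⟩ := (IsIntegrallyClosed.pow_dvd_pow_iff two_ne_zero).1 ⟨b, h⟩
  exact ⟨y, rfl, mul_left_cancel₀ (pow_ne_zero 2 ha) (by rw [← h, mul_pow])⟩

lemma le_of_pow_mul_eq_pow_mul {p x y : R} {k j : ℕ} (hp : Prime p) (hx : ¬p ∣ x)
    (h : p ^ k * x = p ^ j * y) : j ≤ k := by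
  by_contra! hlt
  obtain ⟨m, rfl⟩ := Nat.exists_eq_add_of_lt hlt
  refine hx ⟨p ^ m * y, mul_left_cancel₀ (pow_ne_zero k hp.ne_zero) ?_⟩
  rw [h]
  ring

lemma eq_and_eq_of_pow_mul_eq_pow_mul {p x y : R} {k j : ℕ} (hp : Prime p) (hx : ¬p ∣ x)
    (hy : ¬p ∣ y) (h : p ^ k * x = p ^ j * y) : k = j ∧ x = y := by
  obtain rfl := (le_of_pow_mul_eq_pow_mul hp hy h.symm).antisymm
    (le_of_pow_mul_eq_pow_mul hp hx h)
  exact ⟨rfl, mul_left_cancel₀ (pow_ne_zero k hp.ne_zero) h⟩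

lemma mul_sq_ne_prime_mul_mul_sq [WfDvdMonoid R] {p x y n d : R} (hp : Prime p) (hx : ¬p ∣ x)
    (hy : ¬p ∣ y) (hn : n ≠ 0) : x * n ^ 2 ≠ p * y * d ^ 2 := by
  intro h
  have hd : d ≠ 0 := by
    rintro rfl
    simp [hn, show x ≠ 0 from fun h ↦ hx (h ▸ dvd_zero p)] at h
  obtain ⟨k, n, hn', rfl⟩ := WfDvdMonoid.max_power_factor hn hp.irreducible
  obtain ⟨j, d, hd', rfl⟩ := WfDvdMonoid.max_power_factor hd hp.irreducible
  obtain ⟨hkj, -⟩ := eq_and_eq_of_pow_mul_eq_pow_mul (x := x * n ^ 2) (k := 2 * k)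
    (j := 2 * j + 1) (y := y * d ^ 2) hp (hp.not_dvd_mul hx fun h ↦ hn' (hp.dvd_of_dvd_pow h))
    (hp.not_dvd_mul hy fun h ↦ hd' (hp.dvd_of_dvd_pow h)) (by linear_combination h)
  omega

variable [IsPrincipalIdealRing R]

lemma exists_eq_unit_mul_prod_mul_sq (S : List R) {x y z : R} (hS : ∀ s ∈ S, Prime s)
    (hx : x ≠ 0) (hy : y ≠ 0) (h : x * y = z ^ 2)
    (hcommon : ∀ p, Prime p → p ∣ x → p ∣ y → ∃ s ∈ S, p ∣ s) :
    ∃ T ∈ S.sublists, ∃ (u : Rˣ) (d : R), x = u * T.prod * d ^ 2 := by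
  simp only [List.mem_sublists]
  induction S generalizing x y z with
  | nil =>
    have hxy : IsCoprime x y := isCoprime_of_prime_dvd (fun h ↦ hx h.1) fun p hp hpx hpy ↦ by
      simpa using hcommon p hp hpx hpy
    obtain ⟨d, u, hd⟩ := exists_associated_pow_of_mul_eq_pow' hxy h
    exact ⟨[], .slnil, u, d, by rw [← hd, List.prod_nil]; ring⟩
  | cons s S ih =>
    have hs : Prime s := hS s List.mem_cons_self
    have hz : z ≠ 0 := by
      rintro rfl
      simp [hx, hy] at h
    obtain ⟨k, x, hx', rfl⟩ := WfDvdMonoid.max_power_factor hx hs.irreducible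
    obtain ⟨j, y, hy', rfl⟩ := WfDvdMonoid.max_power_factor hy hs.irreducible
    obtain ⟨l, z, hz', rfl⟩ := WfDvdMonoid.max_power_factor hz hs.irreducible
    obtain ⟨-, hxy⟩ := eq_and_eq_of_pow_mul_eq_pow_mul (k := k + j) (j := 2 * l) (y := z ^ 2)
      hs (hs.not_dvd_mul hx' hy') (fun hd ↦ hz' (hs.dvd_of_dvd_pow hd)) (by linear_combination h)
    obtain ⟨T, hT, u, d, hd⟩ := ih (fun t ht ↦ hS t (List.mem_cons_of_mem s ht))
      (right_ne_zero_of_mul hx) (right_ne_zero_of_mul hy) hxy fun p hp hpx hpy ↦ by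
        obtain ⟨t, ht, hpt⟩ := hcommon p hp (hpx.mul_left _) (hpy.mul_left _)
        rcases List.mem_cons.1 ht with rfl | ht
        · exact (hx' ((hp.associated_of_dvd hs hpt).dvd'.trans hpx)).elim
        · exact ⟨t, ht, hpt⟩
    rcases Nat.even_or_odd' k with ⟨m, rfl | rfl⟩
    · exact ⟨T, hT.cons _, u, s ^ m * d, by rw [hd]; ring⟩
    · exact ⟨s :: T, hT.cons_cons _, u, s ^ m * d, by rw [hd, List.prod_cons]; ring⟩

lemma exists_isCoprime_of_sq_eq_biquadratic {p m n w a b c : R} {k : ℕ} (hp : Prime p)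
    (hm : ¬p ∣ m) (hn : ¬p ∣ n) (h : w ^ 2 = biquadratic a b c m (p ^ k * n)) :
    ∃ m' n' w', ¬p ∣ m' ∧ ¬p ∣ n' ∧ IsCoprime m' (p ^ k * n') ∧
      w' ^ 2 = biquadratic a b c m' (p ^ k * n') := by
  obtain ⟨m', n', r, hrel, rfl, rfl⟩ := UniqueFactorizationMonoid.exists_reduced_factors m
    (by rintro rfl; exact hm (dvd_zero p)) n
  have hm' : ¬p ∣ m' := fun hd ↦ hm (hd.mul_left r)
  have hr : r ^ 2 ≠ 0 := by
    rintro hr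
    simp [pow_eq_zero_iff two_ne_zero |>.1 hr] at hm
  obtain ⟨w', rfl, hw'⟩ := exists_eq_mul_of_sq_eq_sq_mul hr (x := w)
    (b := biquadratic a b c m' (p ^ k * n')) (by rw [h, biquadratic, biquadratic]; ring)
  exact ⟨m', n', w', hm', fun hd ↦ hn (hd.mul_left r),
    ((hp.coprime_iff_not_dvd.2 hm').symm.pow_right).mul_right hrel.isCoprime, hw'⟩

end Factorization

section SquareClasses

lemma exists_algebraMap_eq_I_pow {z : GaussianInt} (hz : IsUnit z) :
    ∃ k, algebraMap GaussianInt QuarticInt z = I ^ k := by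
  obtain ⟨a, b⟩ := z
  have hnorm : a ^ 2 + b ^ 2 = 1 := by
    have h := (Zsqrtd.norm_eq_one_iff' (by norm_num) _).2 hz
    rw [Zsqrtd.norm_def] at h
    linear_combination h
  obtain ⟨ha, ha'⟩ := abs_le.1 (abs_le_one_iff_mul_self_le_one.2 (show a * a ≤ 1 by nlinarith))
  obtain ⟨hb, hb'⟩ := abs_le.1 (abs_le_one_iff_mul_self_le_one.2 (show b * b ≤ 1 by nlinarith))
  interval_cases a <;> interval_cases b <;> simp at hnorm
  exacts [⟨2, by decide +kernel⟩, ⟨3, by decide +kernel⟩, ⟨1, by decide +kernel⟩,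
    ⟨0, by decide +kernel⟩]

lemma exists_algebraMap_eq_unit_mul_sq {z : GaussianInt} (hz : z ∣ ⟨4, -2⟩) :
    ∃ (k j : ℕ) (w : QuarticInt), w ≠ 0 ∧
      algebraMap GaussianInt QuarticInt z = I ^ k * η ^ j * w ^ 2 := by
  have hp : Prime (⟨1, 1⟩ : GaussianInt) := prime_of_prime_norm Int.prime_two
  have hq : Prime (⟨1, 2⟩ : GaussianInt) := prime_of_prime_norm prime_five
  have h : (⟨4, -2⟩ : GaussianInt) = ⟨1, 1⟩ ^ 2 * (⟨1, 2⟩ ^ 1 * ⟨-1, 0⟩) := by decide +kernel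
  obtain ⟨x, y, hx, hy, rfl⟩ := exists_dvd_and_dvd_of_dvd_mul (h ▸ hz)
  rw [(Zsqrtd.norm_eq_one_iff.1 (by decide +kernel)).dvd_mul_right] at hy
  obtain ⟨j, -, hj⟩ := (dvd_prime_pow hp 2).1 hx
  obtain ⟨l, -, hl⟩ := (dvd_prime_pow hq 1).1 hy
  obtain ⟨u, hu⟩ := (hj.mul_mul hl).symm
  obtain ⟨k, hk⟩ := exists_algebraMap_eq_I_pow u.isUnit
  have hpη : algebraMap GaussianInt QuarticInt ⟨1, 1⟩ = I ^ 2 * η * π ^ 2 := by decide +kernel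
  have hqτ : algebraMap GaussianInt QuarticInt ⟨1, 2⟩ = τ ^ 2 := by decide +kernel
  refine ⟨2 * j + k, j, π ^ j * τ ^ l, mul_ne_zero (pow_ne_zero _ prime_π.ne_zero)
    (pow_ne_zero _ (by decide +kernel)), ?_⟩
  rw [← hu, map_mul, map_mul, map_pow, map_pow, hpη, hqτ, hk]
  ring

lemma norm_eq_one_or_neg_one {u : QuarticInt} (hu : IsUnit u) : u.norm = 1 ∨ u.norm = -1 := by
  have him : Odd u.norm.im → Odd u.norm.re := by
    simp only [QuadraticAlgebra.norm_def, Zsqrtd.re_sub, Zsqrtd.im_sub, Zsqrtd.re_add,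
      Zsqrtd.im_add, Zsqrtd.re_mul, Zsqrtd.im_mul, one_mul]
    simp only [← Int.not_even_iff_odd, Int.even_add, Int.even_sub, Int.even_mul]
    grind
  have hre := (Zsqrtd.norm_eq_one_iff' (by norm_num) _).2
    (QuadraticAlgebra.isUnit_iff_norm_isUnit.1 hu)
  rw [Zsqrtd.norm_def] at hre
  have him0 : u.norm.im = 0 := by
    by_contra h0
    have h1 : 0 < u.norm.im * u.norm.im := mul_self_pos.2 h0
    have hre0 : u.norm.re = 0 := by nlinarith
    have him1 : Odd (u.norm.im * u.norm.im) := by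
      rw [show u.norm.im * u.norm.im = 1 by rw [hre0] at hre; linarith]
      exact odd_one
    simpa [hre0] using him (Int.odd_mul.1 him1).1
  simpa [Zsqrtd.ext_iff, him0, mul_self_eq_one_iff] using hre

lemma dvd_of_isCoprime_of_norm_mul_eq_sq {a b : GaussianInt} (hab : IsCoprime a b)
    {u : QuarticInt} (h : u * algebraMap GaussianInt QuarticInt
      (QuadraticAlgebra.norm (⟨a, b⟩ : QuarticInt)) = (⟨a, b⟩ : QuarticInt) ^ 2) :
    QuadraticAlgebra.norm (⟨a, b⟩ : QuarticInt) ∣ (⟨4, -2⟩ : GaussianInt) := by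
  set n := QuadraticAlgebra.norm (⟨a, b⟩ : QuarticInt) with hn
  rw [QuadraticAlgebra.norm_def] at hn
  have hi : (⟨4, -2⟩ : GaussianInt) = 4 + ⟨1, -1⟩ ^ 2 := by decide +kernel
  have hnb : IsCoprime n b := by
    obtain ⟨s, t, hst⟩ := hab.pow_left (m := 2)
    refine ⟨s, t - s * (⟨1, -1⟩ * a - b), ?_⟩
    rw [hn]
    linear_combination hst
  have hdvd : n ∣ 2 * a + ⟨1, -1⟩ * b := by
    refine hnb.dvd_of_dvd_mul_left ⟨u.im, ?_⟩
    have him := congrArg QuadraticAlgebra.im h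
    simp only [pow_two, QuadraticAlgebra.im_mul, QuadraticAlgebra.algebraMap_re,
      QuadraticAlgebra.algebraMap_im] at him
    linear_combination -him
  refine (hnb.pow_right (n := 2)).dvd_of_dvd_mul_right ?_
  rw [hi]
  have : (4 + ⟨1, -1⟩ ^ 2) * b ^ 2 = (2 * a + ⟨1, -1⟩ * b) ^ 2 - 4 * n := by
    rw [hn]
    ring
  rw [this]
  exact dvd_sub (hdvd.pow two_ne_zero) (dvd_mul_left _ _)

-- Hilbert 90: `u = z / star z` for `z = 1 + u`, so that `u * norm z = z ^ 2`.
lemma exists_isCoprime_mul_norm_eq_sq {u : QuarticInt} (hnorm : u.norm = 1) (him : u.im ≠ 0) :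
    ∃ a b : GaussianInt, IsCoprime a b ∧ u * algebraMap GaussianInt QuarticInt
      (QuadraticAlgebra.norm (⟨a, b⟩ : QuarticInt)) = (⟨a, b⟩ : QuarticInt) ^ 2 := by
  obtain ⟨a, b, c, hab, ha, hb⟩ :=
    UniqueFactorizationMonoid.exists_reduced_factors' (1 + u.re) u.im him
  have hz : 1 + u = algebraMap GaussianInt QuarticInt c * ⟨a, b⟩ := by
    ext1 <;> simp [ha, hb, QuadraticAlgebra.re_one, QuadraticAlgebra.im_one]
  have hc : c ≠ 0 := by
    rintro rfl
    simp [← hb] at him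
  have hstar : u * star u = 1 := by
    rw [← QuadraticAlgebra.algebraMap_norm_eq_mul_star, hnorm, map_one]
  have hsq : u * algebraMap GaussianInt QuarticInt (1 + u).norm = (1 + u) ^ 2 := by
    rw [QuadraticAlgebra.algebraMap_norm_eq_mul_star, star_add, star_one]
    linear_combination (1 + u) * hstar
  refine ⟨a, b, hab.isCoprime, mul_left_cancel₀ (pow_ne_zero 2 ((map_ne_zero_iff _
    (FaithfulSMul.algebraMap_injective GaussianInt QuarticInt)).2 hc)) ?_⟩
  rw [hz, map_mul, QuadraticAlgebra.norm_algebraMap, map_mul, map_pow] at hsq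
  linear_combination hsq

lemma exists_eq_unit_mul_sq_of_norm_eq_one {u : QuarticInt} (hnorm : u.norm = 1) :
    ∃ (k j : ℕ) (d : QuarticInt), u = I ^ k * η ^ j * d ^ 2 := by
  by_cases him : u.im = 0
  · have hu : u = algebraMap GaussianInt QuarticInt u.re := by ext1 <;> simp [him]
    rw [hu, QuadraticAlgebra.norm_algebraMap] at hnorm
    obtain ⟨k, hk⟩ := exists_algebraMap_eq_I_pow (.of_pow_eq_one hnorm two_ne_zero)
    exact ⟨k, 0, 1, by rw [hu, hk]; ring⟩
  obtain ⟨a, b, hab, h⟩ := exists_isCoprime_mul_norm_eq_sq hnorm him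
  obtain ⟨k, j, w, hw, hk⟩ :=
    exists_algebraMap_eq_unit_mul_sq (dvd_of_isCoprime_of_norm_mul_eq_sq hab h)
  rw [hk] at h
  obtain ⟨m, -, hm⟩ := exists_eq_mul_of_sq_eq_sq_mul hw (b := u * (I ^ k * η ^ j))
    (h.symm.trans (by ring))
  obtain ⟨e, he⟩ := ((isUnit_I.pow k).mul (isUnit_η.pow j)).exists_left_inv
  refine ⟨k, j, e * m, ?_⟩
  linear_combination (-u * (e * (I ^ k * η ^ j) + 1)) * he - I ^ k * η ^ j * e ^ 2 * hm

lemma exists_eq_unit_mul_sq {u : QuarticInt} (hu : IsUnit u) :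
    ∃ (k j : ℕ) (d : QuarticInt), u = I ^ k * η ^ j * d ^ 2 := by
  rcases norm_eq_one_or_neg_one hu with hnorm | hnorm
  · exact exists_eq_unit_mul_sq_of_norm_eq_one hnorm
  · have hη : η.norm = -1 := by decide +kernel
    obtain ⟨k, j, d, hd⟩ := exists_eq_unit_mul_sq_of_norm_eq_one (u := u * η)
      (by rw [map_mul, hnorm, hη, neg_one_mul, neg_neg])
    obtain ⟨e, he⟩ := isUnit_η.exists_left_inv
    refine ⟨k, j + 1, e * d, ?_⟩
    linear_combination (-u * (e * η + 1)) * he + e ^ 2 * η * hd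

/-- Representatives of the units of `ℤ[i][η]` modulo squares. -/
def unitReps : List QuarticInt := [1, I, η, I * η]

lemma exists_mem_unitReps_eq_mul_sq {u : QuarticInt} (hu : IsUnit u) :
    ∃ v ∈ unitReps, ∃ d, u = v * d ^ 2 := by
  obtain ⟨k, j, d, rfl⟩ := exists_eq_unit_mul_sq hu
  rcases Nat.even_or_odd' k with ⟨k, rfl | rfl⟩ <;> rcases Nat.even_or_odd' j with ⟨j, rfl | rfl⟩
  exacts [⟨1, by simp [unitReps], I ^ k * η ^ j * d, by ring⟩,
    ⟨η, by simp [unitReps], I ^ k * η ^ j * d, by ring⟩,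
    ⟨I, by simp [unitReps], I ^ k * η ^ j * d, by ring⟩,
    ⟨I * η, by simp [unitReps], I ^ k * η ^ j * d, by ring⟩]

lemma exists_eq_unitRep_mul_prod_mul_sq (S : List QuarticInt) {x y z : QuarticInt}
    (hS : ∀ s ∈ S, Prime s) (hx : x ≠ 0) (hy : y ≠ 0) (h : x * y = z ^ 2)
    (hcommon : ∀ p, Prime p → p ∣ x → p ∣ y → ∃ s ∈ S, p ∣ s) :
    ∃ T ∈ S.sublists, ∃ v ∈ unitReps, ∃ d, x = v * T.prod * d ^ 2 := by
  obtain ⟨T, hT, u, d, rfl⟩ := exists_eq_unit_mul_prod_mul_sq S hS hx hy h hcommon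
  obtain ⟨v, hv, e, he⟩ := exists_mem_unitReps_eq_mul_sq u.isUnit
  exact ⟨T, hT, v, hv, e * d, by rw [he]; ring⟩

/-- Reduction modulo `π ^ 9`. The modulus is `4π` up to a unit, so that an element prime to `π`
is a square in the `π`-adic completion as soon as it is one here. -/
def toModπ : QuarticInt →+* QuarticInt ⧸ Ideal.span {π ^ 9} := Ideal.Quotient.mk _

lemma toModπ_eq_iff {x y : QuarticInt} : toModπ x = toModπ y ↔ π ^ 9 ∣ x - y := by
  rw [toModπ, Ideal.Quotient.eq, Ideal.mem_span_singleton]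

instance (x y : QuarticInt) : Decidable (toModπ x = toModπ y) :=
  decidable_of_iff' _ toModπ_eq_iff

/-- Representatives of the squares prime to `π` modulo `π ^ 9`. -/
def squareReps : List QuarticInt :=
  [⟨⟨1, 0⟩, ⟨0, 0⟩⟩, ⟨⟨3, 2⟩, ⟨0, 0⟩⟩, ⟨⟨5, 0⟩, ⟨1, 3⟩⟩, ⟨⟨1, 2⟩, ⟨3, 1⟩⟩, ⟨⟨3, 2⟩, ⟨1, 3⟩⟩,
    ⟨⟨7, 0⟩, ⟨0, 0⟩⟩, ⟨⟨1, 2⟩, ⟨0, 0⟩⟩, ⟨⟨3, 0⟩, ⟨3, 1⟩⟩]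

lemma exists_mem_squareReps {x : QuarticInt} (hx : ¬π ∣ x) :
    ∃ s ∈ squareReps, toModπ (x ^ 2) = toModπ s := by
  have key : ∀ a < 8, ∀ b < 4, ∀ c < 4, ∀ d < 4,
      ¬π ∣ (⟨⟨(a : ℕ), (b : ℕ)⟩, ⟨(c : ℕ), (d : ℕ)⟩⟩ : QuarticInt) → ∃ s ∈ squareReps,
        toModπ ((⟨⟨(a : ℕ), (b : ℕ)⟩, ⟨(c : ℕ), (d : ℕ)⟩⟩ : QuarticInt) ^ 2) = toModπ s := by
    simp only [π_dvd_iff]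
    decide +kernel
  obtain ⟨a, ha, b, hb, c, hc, d, hd, h⟩ := exists_lt_π_pow_nine_dvd_sub (x := x)
  rw [map_pow, toModπ_eq_iff.2 h, ← map_pow]
  refine key a ha b hb c hc d hd fun hπ ↦ hx ?_
  simpa using ((dvd_pow_self π (by norm_num)).trans h).add hπ

lemma eq_one_or_eq_of_toModπ_eq_sq {T : List QuarticInt} {v x y : QuarticInt}
    (hv : v ∈ unitReps) (hT : T ∈ [ρ, 4 + I, 1 - 2 * I].sublists) (hx : ¬π ∣ x) (hy : ¬π ∣ y)
    (h : toModπ (v * T.prod * x ^ 2) = toModπ (y ^ 2)) :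
    v * T.prod = 1 ∨ v * T.prod = I * (4 + I) * (1 - 2 * I) := by
  have key : ∀ T ∈ [ρ, 4 + I, 1 - 2 * I].sublists, ∀ v ∈ unitReps, ∀ s ∈ squareReps,
      ∀ t ∈ squareReps, toModπ (v * T.prod * s) = toModπ t →
        v * T.prod = 1 ∨ v * T.prod = I * (4 + I) * (1 - 2 * I) := by
    decide +kernel
  obtain ⟨s, hs, hxs⟩ := exists_mem_squareReps hx
  obtain ⟨t, ht, hyt⟩ := exists_mem_squareReps hy
  refine key T hT v hv s hs t ht ?_
  rw [map_mul, ← hxs, ← hyt, ← map_mul, h]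

end SquareClasses

section QuarticDescent

/-- The parameter of the quartic `w² = m⁴ + 4τΔm²n² + 16iΔ²n⁴` of the descent over `ℤ[i][η]`. -/
def Δ : QuarticInt := (1 + I) * ρ * (4 + I)

lemma Δ_eq : Δ = π ^ 2 * (-η * ρ * (4 + I)) := by decide +kernel

lemma Δ_ne_zero : Δ ≠ 0 := by decide +kernel

lemma exists_dvd_of_prime_dvd_Δ {p : QuarticInt} (hp : Prime p) (h : p ∣ Δ) :
    ∃ s ∈ [π, ρ, 4 + I], p ∣ s := by
  rw [Δ_eq] at h
  rcases hp.dvd_or_dvd h with h | h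
  · exact ⟨π, by simp, hp.dvd_of_dvd_pow h⟩
  rcases hp.dvd_or_dvd h with h | h
  · rcases hp.dvd_or_dvd h with h | h
    · exact (hp.not_isUnit (isUnit_of_dvd_unit h isUnit_η.neg)).elim
    · exact ⟨ρ, by simp, h⟩
  · exact ⟨4 + I, by simp, h⟩

section DualFactorization

variable {A B g f : QuarticInt}

lemma not_ρ_dvd_of_ρ_dvd (hAB : IsCoprime A B) (hsum : g + f = A ^ 2 - τ * Δ * B ^ 2)
    (hprod : g * f = I * Δ ^ 2 * B ^ 4) (hg : ρ ∣ g) : ¬ρ ∣ f := by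
  rintro ⟨y, rfl⟩
  obtain ⟨x, rfl⟩ := hg
  rw [Δ] at hsum hprod
  obtain ⟨a, rfl⟩ : ρ ∣ A := prime_ρ.dvd_of_dvd_pow (n := 2)
    ⟨x + y + τ * ((1 + I) * (4 + I)) * B ^ 2, by linear_combination -hsum⟩
  have hB : toZMod17 B ≠ 0 := fun h ↦
    prime_ρ.not_isUnit (hAB.isUnit_of_dvd' (dvd_mul_right _ _) (ρ_dvd_iff.2 h))
  have hsum' : x + y = ρ * a ^ 2 - τ * ((1 + I) * (4 + I)) * B ^ 2 :=
    mul_left_cancel₀ prime_ρ.ne_zero (by linear_combination hsum)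
  have hprod' : x * y = I * ((1 + I) * (4 + I)) ^ 2 * B ^ 4 :=
    mul_left_cancel₀ (pow_ne_zero 2 prime_ρ.ne_zero) (by linear_combination hprod)
  have key : ∀ X Y b : ZMod 17, X + Y = -b ^ 2 → X * Y = 8 * b ^ 4 → b = 0 := by decide +kernel
  refine hB (key (toZMod17 x) (toZMod17 y) _ ?_ ?_)
  · rw [← map_add, hsum', map_sub, map_mul, map_mul (y := B ^ 2), map_pow _ B,
      show toZMod17 ρ = 0 by decide +kernel,
      show toZMod17 (τ * ((1 + I) * (4 + I))) = 1 by decide +kernel]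
    ring
  · rw [← map_mul, hprod', map_mul, map_pow _ B,
      show toZMod17 (I * ((1 + I) * (4 + I)) ^ 2) = 8 by decide +kernel]

instance : Fact (Nat.Prime 17) := ⟨by norm_num⟩

lemma isSquare_toZMod17 (hAB : IsCoprime A B) (hsum : g + f = A ^ 2 - τ * Δ * B ^ 2)
    (hprod : g * f = I * Δ ^ 2 * B ^ 4) {e d : QuarticInt} (hd : d ≠ 0) (hg : g = e * d ^ 2) :
    IsSquare (toZMod17 e) := by
  have hΔ : toZMod17 Δ = 0 := by decide +kernel
  have hsum' : toZMod17 g + toZMod17 f = toZMod17 A ^ 2 := by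
    rw [← map_add, hsum, map_sub, map_mul, map_mul _ τ, hΔ, map_pow]
    ring
  obtain ⟨z, -, hz⟩ := exists_eq_mul_of_sq_eq_sq_mul hd (x := I * Δ * B ^ 2) (b := e * (I * f))
    (by linear_combination -I * hprod + I * f * hg)
  have hρ : ρ ∣ g * f := ρ_dvd_iff.2 (by rw [hprod, map_mul, map_mul, map_pow _ Δ, hΔ]; ring)
  have not_and := not_ρ_dvd_of_ρ_dvd hAB hsum hprod
  simp only [ρ_dvd_iff] at not_and
  rcases prime_ρ.dvd_or_dvd hρ with h | h <;> rw [ρ_dvd_iff] at h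
  · have hf := not_and h
    rw [h, zero_add] at hsum'
    refine ⟨toZMod17 z / (2 * toZMod17 A), ?_⟩
    have hz' := congrArg toZMod17 hz
    rw [map_pow, map_mul, map_mul, hsum', show toZMod17 I = 4 by decide +kernel] at hz'
    have hA : toZMod17 A ≠ 0 := fun h0 ↦ hf (by rw [hsum', h0]; ring)
    have h2 : (2 : ZMod 17) ≠ 0 := by decide
    field_simp
    linear_combination -hz'
  · have hg0 : toZMod17 g ≠ 0 := fun h0 ↦ not_and h0 h
    rw [h, add_zero, hg, map_mul, map_pow] at hsum'
    rw [hg, map_mul, map_pow] at hg0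
    have hd0 : toZMod17 d ≠ 0 := fun h0 ↦ hg0 (by rw [h0]; ring)
    refine ⟨toZMod17 A / toZMod17 d, ?_⟩
    field_simp
    exact hsum'

lemma exists_dvd_of_prime_dvd_of_prime_dvd (hAB : IsCoprime A B)
    (hsum : g + f = A ^ 2 - τ * Δ * B ^ 2) (hprod : g * f = I * Δ ^ 2 * B ^ 4) {p : QuarticInt}
    (hp : Prime p) (hg : p ∣ g) (hf : p ∣ f) : ∃ s ∈ [π, 4 + I], p ∣ s := by
  have hB : ¬p ∣ B := fun hB ↦ by
    have hA : p ∣ A ^ 2 := by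
      rw [show A ^ 2 = g + f + τ * Δ * B * B by linear_combination -hsum]
      exact (hg.add hf).add (hB.mul_left _)
    exact hp.not_isUnit (hAB.isUnit_of_dvd' (hp.dvd_of_dvd_pow hA) hB)
  have hΔ : p ∣ Δ := by
    have h : p ∣ I * (Δ ^ 2 * B ^ 4) := by
      rw [← mul_assoc, ← hprod]
      exact hg.mul_right _
    exact hp.dvd_of_dvd_pow ((hp.dvd_or_dvd (isUnit_I.dvd_mul_left.1 h)).resolve_right
      fun h ↦ hB (hp.dvd_of_dvd_pow h))
  obtain ⟨s, hs, hps⟩ := exists_dvd_of_prime_dvd_Δ hp hΔ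
  simp only [List.mem_cons, List.not_mem_nil, or_false] at hs
  rcases hs with rfl | rfl | rfl
  · exact ⟨π, by simp, hps⟩
  · have := (hp.associated_of_dvd prime_ρ hps).dvd'
    exact (not_ρ_dvd_of_ρ_dvd hAB hsum hprod (this.trans hg) (this.trans hf)).elim
  · exact ⟨4 + I, by simp, hps⟩

lemma exists_eq_mul_sq_of_isCoprime (hAB : IsCoprime A B) (hB : B ≠ 0)
    (hsum : g + f = A ^ 2 - τ * Δ * B ^ 2) (hprod : g * f = I * Δ ^ 2 * B ^ 4) {k : ℕ}
    {x : QuarticInt} (hg : g = π ^ (2 * k) * x) (hx : ¬π ∣ x) :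
    ∃ e ∈ [1, I, 4 + I, I * (4 + I)], ∃ d, x = e * d ^ 2 := by
  have hgf : g * f ≠ 0 := by
    rw [hprod]
    exact mul_ne_zero (mul_ne_zero (by decide +kernel) (pow_ne_zero 2 Δ_ne_zero)) (pow_ne_zero 4 hB)
  have hg0 : g ≠ 0 := left_ne_zero_of_mul hgf
  obtain ⟨T, hT, v, hv, d, hd⟩ := exists_eq_unitRep_mul_prod_mul_sq [π, 4 + I]
    (x := g) (y := I * f) (z := I * Δ * B ^ 2)
    (by simpa using ⟨prime_π, prime_four_add_I⟩)
    hg0 (mul_ne_zero (by decide +kernel) (right_ne_zero_of_mul hgf))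
    (by linear_combination I * hprod) fun p hp hpg hpf ↦
      exists_dvd_of_prime_dvd_of_prime_dvd hAB hsum hprod hp hpg (isUnit_I.dvd_mul_left.1 hpf)
  have key : ∀ T ∈ [π, 4 + I].sublists, ∀ v ∈ unitReps,
      ¬IsSquare (toZMod17 (v * T.prod)) ∨ v * T.prod ∈ [1, I, 4 + I, I * (4 + I)] ∨
        ∃ m ∈ [1, I, η, I * η, 4 + I, I * (4 + I), η * (4 + I), I * η * (4 + I)],
          v * T.prod = π * m ∧ toZMod2 m ≠ 0 := by decide +kernel
  have hd0 : d ≠ 0 := by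
    rintro rfl
    exact hg0 (by rw [hd]; ring)
  rcases key T hT v hv with h | h | ⟨m, -, h, hm⟩
  · exact (h (isSquare_toZMod17 hAB hsum hprod hd0 hd)).elim
  · generalize v * T.prod = e at *
    refine ⟨e, h, ?_⟩
    have he : ∀ e ∈ [1, I, 4 + I, I * (4 + I)], toZMod2 e ≠ 0 := by decide +kernel
    rw [hg] at hd
    obtain ⟨l, rfl⟩ : π ^ k ∣ d := by
      rw [← IsIntegrallyClosed.pow_dvd_pow_iff two_ne_zero, ← pow_mul, mul_comm k]
      exact prime_π.pow_dvd_of_dvd_mul_left _ (mt π_dvd_iff.1 (he e h)) ⟨x, hd.symm⟩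
    exact ⟨l, mul_left_cancel₀ (pow_ne_zero (2 * k) prime_π.ne_zero) (by rw [hd]; ring)⟩
  · refine (mul_sq_ne_prime_mul_mul_sq prime_π hx (mt π_dvd_iff.1 hm) (n := π ^ k)
      (pow_ne_zero k prime_π.ne_zero) (d := d) ?_).elim
    rw [← h, ← hd, hg]
    ring

end DualFactorization

lemma π_dvd_Δ : π ∣ Δ := (dvd_pow_self π two_ne_zero).trans ⟨_, Δ_eq⟩

lemma exists_not_π_dvd_and_add_eq_and_mul_eq {s w c : QuarticInt} (hs : ¬π ∣ s) (hc : π ∣ c)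
    (h : w ^ 2 = s ^ 2 - 4 * c) : ∃ g f, ¬π ∣ g ∧ g + f = s ∧ g * f = c := by
  obtain ⟨g, f, rfl, rfl, -⟩ := exists_add_eq_and_mul_eq_of_sq_eq (by decide +kernel) h
  by_cases hg : π ∣ g
  · exact ⟨f, g, fun hf ↦ hs (hg.add hf), add_comm _ _, mul_comm _ _⟩
  · exact ⟨g, f, hg, rfl, rfl⟩

lemma π_pow_dvd_of_mul_eq_mul_Δ_sq {g f c n : QuarticInt} {k : ℕ} (hg : ¬π ∣ g)
    (h : g * f = c * Δ ^ 2 * (π ^ k * n) ^ 4) : π ^ (4 * k + 4) ∣ f := by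
  refine prime_π.pow_dvd_of_dvd_mul_left _ hg ⟨c * (-η * ρ * (4 + I)) ^ 2 * n ^ 4, ?_⟩
  rw [h, Δ_eq]
  ring

section FirstStep

variable {m n g f : QuarticInt}

lemma exists_dvd_of_prime_dvd_mul (hmn : IsCoprime m n) (hg : ¬π ∣ g)
    (hsum : g + f = m ^ 2 + 2 * τ * Δ * n ^ 2) (hprod : g * f = (1 - 2 * I) * Δ ^ 2 * n ^ 4)
    {p : QuarticInt} (hp : Prime p) (hpg : p ∣ g) (hpf : p ∣ (1 - 2 * I) * f) :
    ∃ s ∈ [ρ, 4 + I, 1 - 2 * I], p ∣ s := by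
  rcases hp.dvd_or_dvd hpf with hpq | hpf
  · exact ⟨1 - 2 * I, by simp, hpq⟩
  have hn : ¬p ∣ n := fun hn ↦ by
    have hm : p ∣ m ^ 2 := by
      rw [show m ^ 2 = g + f - 2 * τ * Δ * n * n by linear_combination -hsum]
      exact (hpg.add hpf).sub (hn.mul_left _)
    exact hp.not_isUnit (hmn.isUnit_of_dvd' (hp.dvd_of_dvd_pow hm) hn)
  rcases hp.dvd_or_dvd ((hpg.mul_right f).trans hprod.dvd) with h | h
  · rcases hp.dvd_or_dvd h with hq | hΔ
    · exact ⟨1 - 2 * I, by simp, hq⟩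
    obtain ⟨s, hs, hps⟩ := exists_dvd_of_prime_dvd_Δ hp (hp.dvd_of_dvd_pow hΔ)
    rcases List.mem_cons.1 hs with rfl | hs
    · exact (hg ((hp.associated_of_dvd prime_π hps).dvd'.trans hpg)).elim
    · exact ⟨s, List.mem_append_left [1 - 2 * I] hs, hps⟩
  · exact (hn (hp.dvd_of_dvd_pow h)).elim

lemma toModπ_eq_sq (hn : π ^ 2 ∣ n) (hg : ¬π ∣ g) (hsum : g + f = m ^ 2 + 2 * τ * Δ * n ^ 2)
    (hprod : g * f = (1 - 2 * I) * Δ ^ 2 * n ^ 4) : toModπ g = toModπ (m ^ 2) := by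
  obtain ⟨x, rfl⟩ : ∃ x, n = π ^ 2 * x := hn
  have hf := π_pow_dvd_of_mul_eq_mul_Δ_sq hg hprod
  have h : g - m ^ 2 = -I * η ^ 2 * τ * (-η * ρ * (4 + I)) * x ^ 2 * π ^ 10 - f := by
    rw [Δ_eq] at hsum
    linear_combination hsum + π ^ 6 * τ * (-η * ρ * (4 + I)) * x ^ 2 * two_eq
  rw [toModπ_eq_iff, h]
  exact ((pow_dvd_pow π (by norm_num)).mul_left _).sub ((pow_dvd_pow π (by norm_num)).trans hf)

lemma exists_eq_sq_or_eq_mul_sq (hmn : IsCoprime m n) (hm : ¬π ∣ m) (hn : π ^ 2 ∣ n)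
    (hn0 : n ≠ 0) (hg : ¬π ∣ g) (hsum : g + f = m ^ 2 + 2 * τ * Δ * n ^ 2)
    (hprod : g * f = (1 - 2 * I) * Δ ^ 2 * n ^ 4) :
    ∃ h, ¬π ∣ h ∧ (g = h ^ 2 ∨ g = I * (4 + I) * (1 - 2 * I) * h ^ 2) := by
  have hgf : g * f ≠ 0 := by
    rw [hprod]
    exact mul_ne_zero (mul_ne_zero (by decide +kernel) (pow_ne_zero 2 Δ_ne_zero))
      (pow_ne_zero 4 hn0)
  obtain ⟨T, hT, v, hv, h, hh⟩ := exists_eq_unitRep_mul_prod_mul_sq [ρ, 4 + I, 1 - 2 * I]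
    (x := g) (y := (1 - 2 * I) * f) (z := (1 - 2 * I) * Δ * n ^ 2)
    (by simpa using ⟨prime_ρ, prime_four_add_I, prime_one_sub_two_mul_I⟩)
    (left_ne_zero_of_mul hgf) (mul_ne_zero (by decide +kernel) (right_ne_zero_of_mul hgf))
    (by linear_combination (1 - 2 * I) * hprod)
    fun p hp ↦ exists_dvd_of_prime_dvd_mul hmn hg hsum hprod hp
  have hhπ : ¬π ∣ h := fun hd ↦ hg (by rw [hh, pow_two]; exact (hd.mul_right _).mul_left _)
  have hcongr := toModπ_eq_sq hn hg hsum hprod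
  rw [hh] at hcongr
  rcases eq_one_or_eq_of_toModπ_eq_sq hv hT hhπ hm hcongr with h1 | h1
  · exact ⟨h, hhπ, .inl (by rw [hh, h1, one_mul])⟩
  · exact ⟨h, hhπ, .inr (by rw [hh, h1])⟩

lemma exists_dual_or_twisted_dual {w : QuarticInt} (hmn : IsCoprime m n) (hm : ¬π ∣ m)
    (hn : π ^ 2 ∣ n) (hn0 : n ≠ 0)
    (hw : w ^ 2 = biquadratic 1 (4 * τ * Δ) (16 * I * Δ ^ 2) m n) :
    ∃ h, ¬π ∣ h ∧
      ((h * m) ^ 2 = biquadratic 1 (-2 * τ * Δ) ((1 - 2 * I) * Δ ^ 2) h n ∨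
      (h * m) ^ 2 = biquadratic (I * (4 + I) * (1 - 2 * I)) (-2 * τ * Δ)
        (-I * ((1 + I) * ρ) ^ 2 * (4 + I)) h n) := by
  rw [biquadratic] at hw
  simp only [biquadratic]
  obtain ⟨g, f, hg, hsum, hprod⟩ := exists_not_π_dvd_and_add_eq_and_mul_eq
    (s := m ^ 2 + 2 * τ * Δ * n ^ 2) (w := w) (c := (1 - 2 * I) * Δ ^ 2 * n ^ 4)
    (fun hs ↦ hm (prime_π.dvd_of_dvd_pow ((dvd_add_left
      ((π_dvd_Δ.mul_left _).mul_right _)).1 hs)))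
    (((π_dvd_Δ.trans (dvd_pow_self Δ two_ne_zero)).mul_left _).mul_right _)
    (by linear_combination hw - 4 * Δ ^ 2 * n ^ 4 * τ_sq)
  obtain ⟨h, hh, rfl | rfl⟩ := exists_eq_sq_or_eq_mul_sq hmn hm hn hn0 hg hsum hprod
  · exact ⟨h, hh, .inl (by linear_combination -h ^ 2 * hsum + hprod)⟩
  · have hprod' : h ^ 2 * f = -I * ((1 + I) * ρ) ^ 2 * (4 + I) * n ^ 4 := by
      refine mul_left_cancel₀ (a := I * (4 + I) * (1 - 2 * I)) (by decide +kernel) ?_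
      rw [Δ] at hprod
      linear_combination hprod + (1 - 2 * I) * ((1 + I) * ρ * (4 + I)) ^ 2 * n ^ 4 * I_sq
    exact ⟨h, hh, .inr (by linear_combination -h ^ 2 * hsum + hprod')⟩

end FirstStep

section Dual

variable {h n w : QuarticInt}

lemma exists_mul_sq_add_eq_of_dual (hhn : IsCoprime h n) (hh : ¬π ∣ h) (hn : n ≠ 0)
    (hw : w ^ 2 = biquadratic 1 (-2 * τ * Δ) ((1 - 2 * I) * Δ ^ 2) h n) :
    ∃ e ∈ [1, I, 4 + I, I * (4 + I)], ∃ l f, ¬π ∣ e * l ^ 2 ∧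
      e * l ^ 2 + f = h ^ 2 - τ * Δ * n ^ 2 ∧ e * l ^ 2 * f = I * Δ ^ 2 * n ^ 4 := by
  rw [biquadratic] at hw
  obtain ⟨g, f, hg, hsum, hprod⟩ := exists_not_π_dvd_and_add_eq_and_mul_eq
    (s := h ^ 2 - τ * Δ * n ^ 2) (w := w) (c := I * Δ ^ 2 * n ^ 4)
    (fun hs ↦ hh (prime_π.dvd_of_dvd_pow ((dvd_sub_left
      ((π_dvd_Δ.mul_left _).mul_right _)).1 hs)))
    (((π_dvd_Δ.trans (dvd_pow_self Δ two_ne_zero)).mul_left _).mul_right _)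
    (by linear_combination hw - Δ ^ 2 * n ^ 4 * τ_sq)
  obtain ⟨e, he, l, rfl⟩ := exists_eq_mul_sq_of_isCoprime hhn hn hsum hprod (k := 0)
    (by rw [mul_zero, pow_zero, one_mul]) hg
  exact ⟨e, he, l, f, hg, hsum, hprod⟩

lemma toModπ_eq_sq_sub {g f c : QuarticInt} {j : ℕ} (hg : ¬π ∣ g)
    (hsum : g + f = h ^ 2 - τ * Δ * (π ^ (4 * j + 2) * n) ^ 2)
    (hprod : g * f = c * Δ ^ 2 * (π ^ (4 * j + 2) * n) ^ 4) :
    toModπ g = toModπ (h ^ 2 - τ * Δ * (π ^ (4 * j + 2) * n) ^ 2) := by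
  rw [toModπ_eq_iff, show g - (h ^ 2 - τ * Δ * (π ^ (4 * j + 2) * n) ^ 2) = -f by
    linear_combination hsum, dvd_neg]
  exact (pow_dvd_pow π (by lia)).trans (π_pow_dvd_of_mul_eq_mul_Δ_sq hg hprod)

lemma toModπ_ne_sq_sub {e l : QuarticInt} (he : e ∈ [1, I, 4 + I, I * (4 + I)]) (hl : ¬π ∣ l)
    (hh : ¬π ∣ h) (hn : ¬π ∣ n) :
    toModπ (e * l ^ 2) ≠ toModπ (h ^ 2 - τ * Δ * (π ^ 2 * n) ^ 2) := by
  have key : ∀ e ∈ [1, I, 4 + I, I * (4 + I)], ∀ s ∈ squareReps, ∀ t ∈ squareReps,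
      ∀ u ∈ squareReps, toModπ (e * s) ≠ toModπ (t - τ * Δ * π ^ 4 * u) := by decide +kernel
  obtain ⟨s, hs, hls⟩ := exists_mem_squareReps hl
  obtain ⟨t, ht, hht⟩ := exists_mem_squareReps hh
  obtain ⟨u, hu, hnu⟩ := exists_mem_squareReps hn
  intro heq
  refine key e he s hs t ht u hu ?_
  rw [map_mul, ← hls, ← map_mul, heq, map_sub, map_sub, hht, map_mul _ (τ * Δ * π ^ 4), ← hnu,
    ← map_mul]
  ring_nf

lemma eq_one_of_toModπ_eq_sq_sub {e l : QuarticInt} {j : ℕ}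
    (he : e ∈ [1, I, 4 + I, I * (4 + I)]) (hl : ¬π ∣ l) (hh : ¬π ∣ h)
    (heq : toModπ (e * l ^ 2) = toModπ (h ^ 2 - τ * Δ * (π ^ (4 * (j + 1) + 2) * n) ^ 2)) :
    e = 1 := by
  have key : ∀ e ∈ [1, I, 4 + I, I * (4 + I)], ∀ s ∈ squareReps, ∀ t ∈ squareReps,
      toModπ (e * s) = toModπ t → e = 1 := by decide +kernel
  obtain ⟨s, hs, hls⟩ := exists_mem_squareReps hl
  obtain ⟨t, ht, hht⟩ := exists_mem_squareReps hh
  refine key e he s hs t ht ?_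
  rw [map_mul, ← hls, ← hht, ← map_mul, heq, toModπ_eq_iff]
  exact Dvd.intro (-τ * Δ * π ^ (8 * j + 3) * n ^ 2) (by ring)

lemma exists_of_dual {j : ℕ} (hh : ¬π ∣ h) (hn : ¬π ∣ n)
    (hw : w ^ 2 = biquadratic 1 (-2 * τ * Δ) ((1 - 2 * I) * Δ ^ 2) h (π ^ (4 * j + 2) * n)) :
    ∃ i < j, ∃ m n w, ¬π ∣ m ∧ ¬π ∣ n ∧
      w ^ 2 = biquadratic 1 (4 * τ * Δ) (16 * I * Δ ^ 2) m (π ^ (4 * i + 2) * n) := by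
  obtain ⟨h, n, w, hh, hn, hhn, hw⟩ := exists_isCoprime_of_sq_eq_biquadratic prime_π hh hn hw
  have hn0 : π ^ (4 * j + 2) * n ≠ 0 :=
    mul_ne_zero (pow_ne_zero _ prime_π.ne_zero) fun h0 ↦ hn (h0 ▸ dvd_zero π)
  obtain ⟨e, he, l, f, hl, hsum, hprod⟩ :=
    exists_mul_sq_add_eq_of_dual (n := π ^ (4 * j + 2) * n) hhn hh hn0 hw
  have hl' : ¬π ∣ l := fun hd ↦ hl ((hd.trans (dvd_pow_self l two_ne_zero)).mul_left e)
  have heq := toModπ_eq_sq_sub hl hsum hprod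
  rcases j with _ | i
  · rw [mul_zero, zero_add] at heq
    exact (toModπ_ne_sq_sub he hl' hh hn heq).elim
  obtain rfl := eq_one_of_toModπ_eq_sq_sub he hl' hh heq
  obtain ⟨ε, hε, hπε⟩ : ∃ ε, π ^ 4 = 2 * ε ∧ ¬π ∣ ε :=
    ⟨I * (η - (1 - I)) ^ 2, by decide +kernel, mt π_dvd_iff.1 (by decide +kernel)⟩
  refine ⟨i, i.lt_succ_self, l, ε * n, l * h, hl', prime_π.not_dvd_mul hπε hn, ?_⟩
  rw [show π ^ (4 * (i + 1) + 2) * n = 2 * (π ^ (4 * i + 2) * (ε * n)) by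
    linear_combination π ^ (4 * i + 2) * n * hε] at hsum hprod
  rw [biquadratic]
  linear_combination -l ^ 2 * hsum + hprod

end Dual

section TwistedDual

variable {A B g f w : QuarticInt}

lemma mul_sq_mul_sub_ne {e l : QuarticInt} (he : e ∈ [1, I, 4 + I, I * (4 + I)]) (hl : ¬π ∣ l)
    (hA : ¬π ∣ A) (hB : ¬π ∣ B) :
    e * l ^ 2 * (A ^ 2 - τ * (-η * ρ * (4 + I)) * B ^ 2 - e * l ^ 2) ≠
      I * (-η * ρ * (4 + I)) ^ 2 * (B ^ 2) ^ 2 := by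
  have key : ∀ e ∈ [1, I, 4 + I, I * (4 + I)], ∀ s ∈ squareReps, ∀ t ∈ squareReps,
      ∀ u ∈ squareReps, toModπ (e * s * (t - τ * (-η * ρ * (4 + I)) * u - e * s)) ≠
        toModπ (I * (-η * ρ * (4 + I)) ^ 2 * u ^ 2) := by decide +kernel
  obtain ⟨s, hs, hls⟩ := exists_mem_squareReps hl
  obtain ⟨t, ht, hAt⟩ := exists_mem_squareReps hA
  obtain ⟨u, hu, hBu⟩ := exists_mem_squareReps hB
  intro heq
  refine key e he s hs t ht u hu ?_
  have := congrArg toModπ heq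
  simpa only [map_mul, map_sub, map_pow toModπ (_ ^ 2), hls, hAt, hBu, map_pow toModπ u] using this

lemma exists_eq_π_sq_mul (hB : ¬π ∣ B) (hsum : g + f = (π * A) ^ 2 - τ * Δ * B ^ 2)
    (hprod : g * f = I * Δ ^ 2 * B ^ 4) : ∃ x y, ¬π ∣ x ∧ g = π ^ (2 * 1) * x ∧ f = π ^ 2 * y := by
  rw [Δ_eq] at hsum hprod
  have hπ : π ^ 2 ≠ 0 := pow_ne_zero 2 prime_π.ne_zero
  obtain ⟨x, hx⟩ : ∃ x, g = π ^ 2 * x := dvd_of_sq_eq_mul_sub_mul hπ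
    (b := A ^ 2 - τ * (-η * ρ * (4 + I)) * B ^ 2) (c := I * (-η * ρ * (4 + I)) ^ 2 * B ^ 4)
    (by linear_combination g * hsum - hprod)
  obtain ⟨y, hy⟩ : ∃ y, f = π ^ 2 * y :=
    ⟨A ^ 2 - τ * (-η * ρ * (4 + I)) * B ^ 2 - x, by linear_combination hsum - hx⟩
  have hxy : x * y = I * (-η * ρ * (4 + I)) ^ 2 * B ^ 4 := by
    refine mul_left_cancel₀ (pow_ne_zero 2 hπ) ?_
    rw [hx, hy] at hprod
    linear_combination hprod
  refine ⟨x, y, fun hd ↦ ?_, hx, hy⟩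
  rcases prime_π.dvd_or_dvd ((hd.mul_right y).trans hxy.dvd) with h | h
  · exact mt π_dvd_iff.1 (by decide +kernel) h
  · exact hB (prime_π.dvd_of_dvd_pow h)

lemma sq_ne_of_isCoprime_π_mul (hAB : IsCoprime (π * A) B) (hA : ¬π ∣ A) (hB : ¬π ∣ B) :
    w ^ 2 ≠ biquadratic 1 (-2 * τ * Δ) ((1 - 2 * I) * Δ ^ 2) (π * A) B := by
  intro hw
  rw [biquadratic] at hw
  obtain ⟨g, f, hsum, hprod, -⟩ := exists_add_eq_and_mul_eq_of_sq_eq (w := w)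
    (s := (π * A) ^ 2 - τ * Δ * B ^ 2) (c := I * Δ ^ 2 * B ^ 4) (by decide +kernel)
    (by linear_combination hw - Δ ^ 2 * B ^ 4 * τ_sq)
  obtain ⟨x, y, hx, hg, hf⟩ := exists_eq_π_sq_mul hB hsum hprod
  obtain ⟨e, he, l, hl⟩ := exists_eq_mul_sq_of_isCoprime hAB (fun h0 ↦ hB (h0 ▸ dvd_zero π)) hsum
    hprod hg hx
  have hl' : ¬π ∣ l := fun hd ↦ hx (hl ▸ (hd.trans (dvd_pow_self l two_ne_zero)).mul_left e)
  have hπ : π ^ 2 ≠ 0 := pow_ne_zero 2 prime_π.ne_zero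
  rw [Δ_eq, hg, hf, hl] at hsum hprod
  have hsum' : e * l ^ 2 + y = A ^ 2 - τ * (-η * ρ * (4 + I)) * B ^ 2 :=
    mul_left_cancel₀ hπ (by linear_combination hsum)
  have hprod' : e * l ^ 2 * y = I * (-η * ρ * (4 + I)) ^ 2 * B ^ 4 :=
    mul_left_cancel₀ (pow_ne_zero 2 hπ) (by linear_combination hprod)
  exact mul_sq_mul_sub_ne he hl' hA hB (by linear_combination -e * l ^ 2 * hsum' + hprod')

lemma exists_sq_eq_of_twisted_dual {h m n : QuarticInt} (hn : n ≠ 0)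
    (hw : (h * m) ^ 2 = biquadratic (I * (4 + I) * (1 - 2 * I)) (-2 * τ * Δ)
      (-I * ((1 + I) * ρ) ^ 2 * (4 + I)) h n)
    (hA : A = h * ρ * (π * n * (6 - 8 * π + 3 * π ^ 3) + I * m))
    (hB : B = h ^ 2 - (I * π * ρ) ^ 2 * n ^ 2) :
    ∃ w, w ^ 2 = biquadratic 1 (-2 * τ * Δ) ((1 - 2 * I) * Δ ^ 2) (π * A) B := by
  have hac : (1 - 2 * I) * Δ ^ 2 =
    I * (4 + I) * (1 - 2 * I) * (-I * ((1 + I) * ρ) ^ 2 * (4 + I)) := by decide +kernel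
  obtain ⟨z, hz⟩ := exists_sq_eq_mul_biquadratic (r := I * π * ρ) (P := π * A)
    (y := π ^ 2 * ρ * (6 - 8 * π + 3 * π ^ 3)) (by decide +kernel) hw (by rw [hA]; ring) hB
  obtain ⟨w, -, hw'⟩ := exists_eq_mul_of_sq_eq_sq_mul
    (mul_ne_zero (mul_ne_zero (by decide +kernel) prime_ρ.ne_zero) hn) hz
  exact ⟨w, hac ▸ hw'⟩

lemma sq_ne_twisted_dual {h m n : QuarticInt} (hh : ¬π ∣ h) (hm : ¬π ∣ m) (hn : n ≠ 0) :
    (h * m) ^ 2 ≠ biquadratic (I * (4 + I) * (1 - 2 * I)) (-2 * τ * Δ)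
      (-I * ((1 + I) * ρ) ^ 2 * (4 + I)) h n := by
  intro hw
  obtain ⟨w, hw'⟩ := exists_sq_eq_of_twisted_dual hn hw rfl rfl
  have hB : ¬π ∣ h ^ 2 - (I * π * ρ) ^ 2 * n ^ 2 := fun hd ↦ hh <| prime_π.dvd_of_dvd_pow <|
    (dvd_sub_left (Dvd.intro (π * (I * ρ * n) ^ 2) (by ring))).1 hd
  have hm' : ¬π ∣ π * n * (6 - 8 * π + 3 * π ^ 3) + I * m := fun hd ↦ hm <|
    isUnit_I.dvd_mul_left.1 <| (dvd_add_right ((dvd_mul_right π n).mul_right _)).1 hd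
  have hA : ¬π ∣ h * ρ * (π * n * (6 - 8 * π + 3 * π ^ 3) + I * m) :=
    prime_π.not_dvd_mul (prime_π.not_dvd_mul hh (mt π_dvd_iff.1 (by decide +kernel))) hm'
  obtain ⟨B, A, v, hB, hA, hBA, hv⟩ := exists_isCoprime_of_sq_eq_biquadratic (k := 1) (w := w)
    (a := (1 - 2 * I) * Δ ^ 2) (b := -2 * τ * Δ) (c := 1) prime_π hB hA
    (by rw [hw', biquadratic, biquadratic]; ring)
  rw [pow_one] at hBA hv
  exact sq_ne_of_isCoprime_π_mul hBA.symm hA hB (w := v)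
    (by rw [hv, biquadratic, biquadratic]; ring)

end TwistedDual

lemma sq_ne_biquadratic (j : ℕ) {m n w : QuarticInt} (hm : ¬π ∣ m) (hn : ¬π ∣ n) :
    w ^ 2 ≠ biquadratic 1 (4 * τ * Δ) (16 * I * Δ ^ 2) m (π ^ (4 * j + 2) * n) := by
  induction j using Nat.strong_induction_on generalizing m n w with
  | _ j ih =>
  intro hw
  obtain ⟨m, n, w, hm, hn, hmn, hw⟩ := exists_isCoprime_of_sq_eq_biquadratic prime_π hm hn hw
  have hn0 : π ^ (4 * j + 2) * n ≠ 0 :=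
    mul_ne_zero (pow_ne_zero _ prime_π.ne_zero) fun h0 ↦ hn (h0 ▸ dvd_zero π)
  obtain ⟨h, hh, hdual | htwisted⟩ := exists_dual_or_twisted_dual hmn hm
    ((pow_dvd_pow π (by lia)).mul_right n) hn0 hw
  · obtain ⟨i, hij, m', n', w', hm', hn', hw'⟩ := exists_of_dual hh hn hdual
    exact ih i hij hm' hn' hw'
  · exact sq_ne_twisted_dual hh hm hn0 htwisted

end QuarticDescent

section ClassSeventeen

lemma dvd_π_of_prime_dvd_two {p : QuarticInt} (hp : Prime p) (h : p ∣ 2) : p ∣ π := by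
  rw [two_eq] at h
  exact hp.dvd_of_dvd_pow ((hp.dvd_or_dvd h).resolve_left fun h ↦
    hp.not_isUnit (isUnit_of_dvd_unit h (isUnit_I.neg.mul (isUnit_η.pow 2))))

lemma π_dvd_two : π ∣ 2 := ⟨-I * η ^ 2 * π ^ 3, by decide +kernel⟩

lemma eight_eq : 8 = π ^ 12 * (-I * η ^ 2) ^ 3 := by decide +kernel

lemma not_π_dvd_intCast {n : ℤ} (hn : Odd n) : ¬π ∣ (n : QuarticInt) := by
  rw [π_dvd_iff, map_intCast, ZMod.intCast_eq_one_iff_odd.2 hn]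
  exact one_ne_zero

lemma not_dvd_intCast_of_dvd_intCast {p : QuarticInt} (hp : Prime p) {a b : ℤ}
    (hab : IsCoprime a b) (ha : p ∣ (a : QuarticInt)) : ¬p ∣ (b : QuarticInt) :=
  fun hb ↦ hp.not_isUnit (hab.intCast.isUnit_of_dvd' ha hb)

section Factorization

variable {e w n : ℤ}

lemma not_five_dvd (hew : IsCoprime e w) (h : e ^ 4 - 2 * e ^ 2 * w ^ 2 + 5 * w ^ 4 = 17 * n ^ 2) :
    ¬5 ∣ e := by
  rintro ⟨x, rfl⟩
  have hn : 5 ∣ n := prime_five.dvd_of_dvd_pow (n := 2) <| (prime_five.dvd_or_dvd (a := 17)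
    ⟨125 * x ^ 4 - 10 * x ^ 2 * w ^ 2 + w ^ 4, by linear_combination -h⟩).resolve_left (by norm_num)
  obtain ⟨y, rfl⟩ := hn
  have hw : 5 ∣ w := prime_five.dvd_of_dvd_pow (n := 4)
    ⟨17 * y ^ 2 - 25 * x ^ 4 + 2 * x ^ 2 * w ^ 2, by linarith⟩
  exact prime_five.not_isUnit (hew.isUnit_of_dvd' (dvd_mul_right _ _) hw)

lemma not_seventeen_dvd (hew : IsCoprime e w) (h17 : 17 ∣ e - 3 * w) : ¬17 ∣ w := fun hw ↦ by
  have he : 17 ∣ e := by simpa using h17.add (hw.mul_left 3)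
  exact absurd (Int.isUnit_iff.1 (hew.isUnit_of_dvd' he hw)) (by norm_num)

lemma sub_τ_mul_mul_eq (h : e ^ 4 - 2 * e ^ 2 * w ^ 2 + 5 * w ^ 4 = 17 * n ^ 2) :
    (e - τ * w) * ((e + τ * w) * (e ^ 2 - (1 - 2 * I) * w ^ 2)) = 17 * (n : QuarticInt) ^ 2 := by
  have h' : (e : QuarticInt) ^ 4 - 2 * e ^ 2 * w ^ 2 + 5 * w ^ 4 = 17 * n ^ 2 := by
    exact_mod_cast h
  linear_combination h' - w ^ 2 * (e ^ 2 - (1 - 2 * I) * w ^ 2) * τ_sq - 4 * w ^ 4 * I_sq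

lemma exists_dvd_of_prime_dvd_sub_τ_mul {p : QuarticInt} (hp : Prime p) (hew : IsCoprime e w)
    (h17 : 17 ∣ e - 3 * w) (he : ¬5 ∣ e) (hA : p ∣ e - τ * w)
    (h : p ∣ 17 * ((e + τ * w) * (e ^ 2 - (1 - 2 * I) * w ^ 2))) : ∃ s ∈ [π, ρ], p ∣ s := by
  have hw : ¬p ∣ (w : QuarticInt) := fun hw ↦
    not_dvd_intCast_of_dvd_intCast hp hew (by simpa using hA.add (hw.mul_left τ)) hw
  have hπ (h2 : p ∣ 2) : ∃ s ∈ [π, ρ], p ∣ s := ⟨π, by simp, dvd_π_of_prime_dvd_two hp h2⟩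
  rcases hp.dvd_or_dvd h with h | h
  · obtain ⟨m, hm⟩ := h17
    have hm' : (e : QuarticInt) - 3 * w = 17 * m := by exact_mod_cast hm
    have hρ : p ∣ (1 + I) * ρ * w := by
      rw [show (1 + I) * ρ * (w : QuarticInt) = e - τ * w - 17 * m by
        linear_combination -hm' - w * three_sub_τ_eq]
      exact hA.sub (h.mul_right _)
    rcases hp.dvd_or_dvd ((hp.dvd_or_dvd hρ).resolve_right hw) with h | h
    · exact hπ (h.trans ⟨1 - I, by decide +kernel⟩)
    · exact ⟨ρ, by simp, h⟩
  rcases hp.dvd_or_dvd h with h | h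
  · have hsum : p ∣ 2 * e := by convert hA.add h using 1; ring
    have hdiff : p ∣ 2 * (τ * w) := by convert h.sub hA using 1; ring
    rcases hp.dvd_or_dvd hsum with h2 | he'
    · exact hπ h2
    rcases hp.dvd_or_dvd hdiff with h2 | hτ
    · exact hπ h2
    have h5 : p ∣ ((5 : ℤ) : QuarticInt) := ((hp.dvd_or_dvd hτ).resolve_right hw).trans
      ⟨τ * (1 - 2 * I), by decide +kernel⟩
    exact (not_dvd_intCast_of_dvd_intCast hp ((prime_five.coprime_iff_not_dvd).2 he) h5 he').elim
  · have h4 : p ∣ 2 ^ 2 * w ^ 2 := by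
      convert (h.sub (hA.mul_right (e + τ * w))).mul_left (-I) using 1
      linear_combination I * w ^ 2 * τ_sq + 4 * w ^ 2 * I_sq
    exact hπ (hp.dvd_of_dvd_pow ((hp.dvd_or_dvd h4).resolve_right (hw <| hp.dvd_of_dvd_pow ·)))

lemma not_ρ_dvd_add_τ_mul_mul (hew : IsCoprime e w) (h17 : 17 ∣ e - 3 * w) :
    ¬ρ ∣ (e + τ * w) * (e ^ 2 - (1 - 2 * I) * w ^ 2) := by
  have he : (e : ZMod 17) = 3 * w := by
    simpa [sub_eq_zero] using (ZMod.intCast_zmod_eq_zero_iff_dvd (e - 3 * w) 17).2 h17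
  have hw : (w : ZMod 17) ≠ 0 := fun hw ↦
    not_seventeen_dvd hew h17 ((ZMod.intCast_zmod_eq_zero_iff_dvd w 17).1 hw)
  have key : ∀ x : ZMod 17, (3 * x + 3 * x) * ((3 * x) ^ 2 - (-7) * x ^ 2) = 0 → x = 0 := by
    decide +kernel
  rw [ρ_dvd_iff, map_mul, map_add, map_sub, map_mul, map_mul, map_pow, map_pow, map_intCast,
    map_intCast, show toZMod17 τ = 3 by decide +kernel,
    show toZMod17 (1 - 2 * I) = -7 by decide +kernel, he]
  exact fun h ↦ hw (key _ h)

lemma sub_τ_mul_eq_unitRep_mul (hew : IsCoprime e w) (h17 : 17 ∣ e - 3 * w) (hn : n ≠ 0)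
    (h : e ^ 4 - 2 * e ^ 2 * w ^ 2 + 5 * w ^ 4 = 17 * n ^ 2) :
    ∃ v ∈ unitReps, ∃ d, e - τ * w = v * ρ * d ^ 2 ∨ e - τ * w = v * ρ * π * d ^ 2 := by
  have hn' : (n : QuarticInt) ≠ 0 := Int.cast_ne_zero.2 hn
  have hprod := sub_τ_mul_mul_eq h
  have h0 : (e - τ * w) * ((e + τ * w) * (e ^ 2 - (1 - 2 * I) * w ^ 2)) ≠ 0 := by
    rw [hprod]
    exact mul_ne_zero (by decide +kernel) (pow_ne_zero 2 hn')
  obtain ⟨T, hT, v, hv, d, hd⟩ := exists_eq_unitRep_mul_prod_mul_sq [π, ρ] (z := 17 * n)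
    (by simp [prime_π, prime_ρ]) (left_ne_zero_of_mul h0)
    (mul_ne_zero (by decide +kernel) (right_ne_zero_of_mul h0))
    (by linear_combination 17 * hprod) fun p hp ↦
      exists_dvd_of_prime_dvd_sub_τ_mul hp hew h17 (not_five_dvd hew h)
  have hvρ : ∀ v ∈ unitReps, ∀ t ∈ [1, π], ¬ρ ∣ v * t := by
    simp only [ρ_dvd_iff]
    decide +kernel
  -- Without the factor `ρ`, the two sides of `hprod` would have `ρ`-adic valuations of different
  -- parity, as `ρ` divides `17` exactly once.
  have hρ (t) (ht : t ∈ [1, π]) : e - τ * w ≠ v * t * d ^ 2 := fun hd ↦ by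
    refine mul_sq_ne_prime_mul_mul_sq prime_ρ (n := (d : QuarticInt)) (d := n)
      (y := star ρ * ((4 + I) * I))
      (prime_ρ.not_dvd_mul (hvρ v hv t ht) (not_ρ_dvd_add_τ_mul_mul hew h17)) ?_ ?_ ?_
    · rw [ρ_dvd_iff]
      decide +kernel
    · rintro rfl
      exact left_ne_zero_of_mul h0 (by rw [hd]; ring)
    · rw [show ρ * (star ρ * ((4 + I) * I)) = 17 by decide +kernel, ← hprod, hd]
      ring
  have hT' : T = [] ∨ T = [π] ∨ T = [ρ] ∨ T = [π, ρ] := by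
    simpa [List.sublists, or_left_comm] using hT
  refine ⟨v, hv, d, ?_⟩
  rcases hT' with rfl | rfl | rfl | rfl
  · exact (hρ 1 (by simp) (by simpa using hd)).elim
  · exact (hρ π (by simp) (by simpa using hd)).elim
  · exact Or.inl (by simpa using hd)
  · exact Or.inr (by rw [hd, List.prod_pair]; ring)

end Factorization

end ClassSeventeen

section ClassSeventeenOdd

variable {e c n : ℤ}

lemma intCast_three_add_sub_τ_mul_sq_eq {c j : ℤ} (hj : c ^ 2 - 1 = 8 * j) (k : ℤ) :
    ((3 + 2 * k : ℤ) : QuarticInt) - τ * c ^ 2 = π ^ 2 * (-η * ρ + k * π ^ 2 * (-I * η ^ 2) -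
      π ^ 10 * (-I * η ^ 2) ^ 3 * (τ * j)) := by
  have hj' : (c : QuarticInt) ^ 2 - 1 = 8 * j := by exact_mod_cast hj
  push_cast
  linear_combination three_sub_τ_eq + k * two_eq + ρ * one_add_I_eq - τ * j * eight_eq - τ * hj'

lemma four_dvd_and_eq_η_of_toModπ_eq {k : ℤ} {v d : QuarticInt} (hv : v ∈ unitReps) (hd : ¬π ∣ d)
    (h : toModπ (v * ρ * d ^ 2) = toModπ (-η * ρ + k * π ^ 2 * (-I * η ^ 2))) :
    4 ∣ k ∧ v = η := by
  have key : ∀ r < 4, ∀ v ∈ unitReps, ∀ s ∈ squareReps,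
      toModπ (v * ρ * s) = toModπ (-η * ρ + (r : ℕ) * π ^ 2 * (-I * η ^ 2)) → r = 0 ∧ v = η := by
    decide +kernel
  obtain ⟨q, r, hr, rfl⟩ : ∃ q : ℤ, ∃ r < 4, k = (r : ℕ) + 4 * q :=
    ⟨k / 4, (k % 4).toNat, by omega, by omega⟩
  obtain ⟨s, hs, hds⟩ := exists_mem_squareReps hd
  obtain ⟨rfl, rfl⟩ := key r hr v hv s hs <| by
    rw [map_mul, ← hds, ← map_mul, h, toModπ_eq_iff]
    push_cast
    exact ⟨q * π * (-I * η ^ 2) ^ 3, by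
      linear_combination q * π ^ 2 * (-I * η ^ 2) * (2 - I * η ^ 2 * π ^ 4) * two_eq⟩
  exact ⟨by simp, rfl⟩

lemma exists_eq_mul_sq_of_π_sq_mul_eq {v d A : QuarticInt} (hv : v ∈ unitReps) (hA : ¬π ∣ A)
    (h : π ^ 2 * A = v * ρ * d ^ 2 ∨ π ^ 2 * A = v * ρ * π * d ^ 2) :
    ∃ d', A = v * ρ * d' ^ 2 := by
  have hvρ : ¬π ∣ v * ρ := by
    have key : ∀ v ∈ unitReps, ¬π ∣ v * ρ := by
      simp only [π_dvd_iff]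
      decide +kernel
    exact key v hv
  rcases h with h | h
  · obtain ⟨x, rfl⟩ : π ∣ d := prime_π.dvd_of_dvd_pow <|
      (prime_π.dvd_or_dvd (h ▸ (dvd_pow_self π two_ne_zero).mul_right A)).resolve_left hvρ
    exact ⟨x, mul_left_cancel₀ (pow_ne_zero 2 prime_π.ne_zero) (by linear_combination h)⟩
  · have h' : π * A = v * ρ * d ^ 2 :=
      mul_left_cancel₀ prime_π.ne_zero (by linear_combination h)
    obtain ⟨x, rfl⟩ : π ∣ d := prime_π.dvd_of_dvd_pow <|
      (prime_π.dvd_or_dvd (h' ▸ dvd_mul_right π A)).resolve_left hvρ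
    exact (hA ⟨v * ρ * x ^ 2, mul_left_cancel₀ prime_π.ne_zero (by linear_combination h')⟩).elim

lemma exists_sub_τ_mul_sq_eq (hec : IsCoprime e c) (he : Odd e) (hc : Odd c)
    (h17 : 17 ∣ e - 3 * c ^ 2) (h : e ^ 4 - 2 * e ^ 2 * c ^ 4 + 5 * c ^ 8 = 68 * n ^ 2)
    (hn : n ≠ 0) : 8 ∣ e - 3 * c ^ 2 ∧ ∃ k : QuarticInt, e - τ * c ^ 2 = (1 + I) * ρ * k ^ 2 := by
  obtain ⟨v, hv, d, hd⟩ := sub_τ_mul_eq_unitRep_mul (n := 2 * n) (hec.pow_right (n := 2)) h17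
    (mul_ne_zero two_ne_zero hn) (by linear_combination h)
  obtain ⟨j, hj⟩ := Int.eight_dvd_sq_sub_one_of_odd hc
  obtain ⟨k, rfl⟩ : ∃ k, e = 3 + 2 * k := by
    obtain ⟨m, rfl⟩ := he
    exact ⟨m - 1, by ring⟩
  have hA := intCast_three_add_sub_τ_mul_sq_eq hj k
  have hπA : ¬π ∣ -η * ρ + k * π ^ 2 * (-I * η ^ 2) - π ^ 10 * (-I * η ^ 2) ^ 3 * (τ * j) := by
    simp [π_dvd_iff, show toZMod2 π = 0 by decide +kernel, show toZMod2 η ≠ 0 by decide +kernel,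
      show toZMod2 ρ ≠ 0 by decide +kernel]
  rw [Int.cast_pow, hA] at hd
  obtain ⟨d', hd'⟩ := exists_eq_mul_sq_of_π_sq_mul_eq hv hπA hd
  obtain ⟨⟨i, rfl⟩, rfl⟩ := four_dvd_and_eq_η_of_toModπ_eq (k := k) (d := d') hv
    (fun hπ ↦ hπA (hd' ▸ (hπ.pow two_ne_zero).mul_left _)) (by
      rw [← hd', toModπ_eq_iff]
      exact ⟨-π * (-I * η ^ 2) ^ 3 * (τ * j), by ring⟩)
  refine ⟨⟨i - 3 * j, by linear_combination -3 * hj⟩, I * d', ?_⟩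
  rw [hA, hd', one_add_I_eq]
  linear_combination η * ρ * π ^ 2 * d' ^ 2 * I_sq

lemma star_sq_mul_sq_sub_eq (h : e ^ 4 - 2 * e ^ 2 * c ^ 4 + 5 * c ^ 8 = 68 * n ^ 2)
    {k : QuarticInt} (hk : e - τ * c ^ 2 = (1 + I) * ρ * k ^ 2) :
    (k * star k) ^ 2 * (e ^ 2 - (1 - 2 * I) * c ^ 4) = 2 * (4 + I) * n ^ 2 := by
  have h' : (e : QuarticInt) ^ 4 - 2 * e ^ 2 * c ^ 4 + 5 * c ^ 8 = 68 * n ^ 2 := by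
    exact_mod_cast h
  have hk' : e + τ * c ^ 2 = star ((1 + I) * ρ) * star k ^ 2 := by
    have := congrArg star hk
    rw [star_sub, star_mul', star_mul', star_pow, star_pow, star_intCast, star_intCast,
      show star τ = -τ by decide +kernel] at this
    linear_combination this
  have h1 : (1 + I) * ρ * star ((1 + I) * ρ) = 8 - 2 * I := by decide +kernel
  have h2 : (8 - 2 * I) * (2 * (4 + I)) = 68 := by decide +kernel
  have hprod : (8 - 2 * I) * (k * star k) ^ 2 = e ^ 2 - (1 + 2 * I) * c ^ 4 := by
    rw [← h1]
    linear_combination -(star ((1 + I) * ρ) * star k ^ 2) * hk - (e - τ * c ^ 2) * hk' -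
      c ^ 4 * τ_sq
  refine mul_left_cancel₀ (a := 8 - 2 * I) (by decide +kernel) ?_
  linear_combination (e ^ 2 - (1 - 2 * I) * c ^ 4) * hprod - 4 * c ^ 8 * I_sq + h' - n ^ 2 * h2

lemma exists_sq_sub_eq_two_mul (he : Odd e) (hc : Odd c) :
    ∃ X : QuarticInt, e ^ 2 - (1 - 2 * I) * c ^ 4 = 2 * (I + 2 * X) := by
  obtain ⟨i, hi⟩ := Int.eight_dvd_sq_sub_one_of_odd he
  obtain ⟨j, hj⟩ := Int.eight_dvd_sq_sub_one_of_odd hc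
  have hi' : (e : QuarticInt) ^ 2 - 1 = 8 * i := by exact_mod_cast hi
  have hj' : (c : QuarticInt) ^ 2 - 1 = 8 * j := by exact_mod_cast hj
  exact ⟨2 * i - 4 * (1 - 2 * I) * (j + 4 * j ^ 2), by
    linear_combination hi' - (1 - 2 * I) * (c ^ 2 + 1 + 8 * j) * hj'⟩

lemma exists_sq_sub_eq_mul_sq (he : Odd e) (hc : Odd c) (hn : n ≠ 0)
    (h : e ^ 4 - 2 * e ^ 2 * c ^ 4 + 5 * c ^ 8 = 68 * n ^ 2) {k : QuarticInt}
    (hk : e - τ * c ^ 2 = (1 + I) * ρ * k ^ 2) :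
    ∃ l : QuarticInt, ¬π ∣ l ∧ e ^ 2 - (1 - 2 * I) * c ^ 4 = 2 * (4 + I) * l ^ 2 := by
  have hmul := star_sq_mul_sq_sub_eq h hk
  have hk0 : k * star k ≠ 0 := by
    intro h0
    rw [h0, zero_pow two_ne_zero, zero_mul, eq_comm] at hmul
    exact mul_ne_zero (by decide +kernel) (pow_ne_zero 2 (Int.cast_ne_zero.2 hn)) hmul
  obtain ⟨x, -, hx⟩ := exists_eq_mul_of_sq_eq_sq_mul hk0 (x := 2 * (4 + I) * n)
    (b := 2 * (4 + I) * (e ^ 2 - (1 - 2 * I) * c ^ 4)) (by linear_combination -2 * (4 + I) * hmul)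
  obtain ⟨X, hX⟩ := exists_sq_sub_eq_two_mul he hc
  obtain ⟨y, -, hy⟩ := exists_eq_mul_of_sq_eq_sq_mul (a := (2 : QuarticInt)) two_ne_zero (x := x)
    (b := (4 + I) * (I + 2 * X)) (by linear_combination hx + 2 * (4 + I) * hX)
  obtain ⟨l, rfl⟩ := prime_four_add_I.dvd_of_dvd_pow (hy ▸ dvd_mul_right _ _)
  have hl : (4 + I) * l ^ 2 = I + 2 * X :=
    mul_left_cancel₀ prime_four_add_I.ne_zero (by linear_combination hy)
  refine ⟨l, fun hπ ↦ ?_, by linear_combination hX - 2 * hl⟩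
  have hI : π ∣ I := by
    rw [show I = (4 + I) * l ^ 2 - 2 * X by linear_combination -hl]
    exact ((hπ.pow two_ne_zero).mul_left _).sub (π_dvd_two.mul_right _)
  exact prime_π.not_isUnit (isUnit_of_dvd_unit hI isUnit_I)

lemma exists_not_dvd_and_eq_pow_mul_or {R : Type*} [CommRing R] [IsDomain R] {p g f x : R} (k : ℕ)
    (hp : Prime p) (hx : ¬p ∣ x) (hsum : g + f = p ^ k * x) (hprod : p ^ (2 * k + 1) ∣ g * f) :
    ∃ y, ¬p ∣ y ∧ (g = p ^ k * y ∨ f = p ^ k * y) := by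
  induction k generalizing g f with
  | zero =>
    rw [pow_zero, one_mul] at hsum
    rw [← hsum] at hx
    by_cases hg : p ∣ g
    · exact ⟨f, fun hf ↦ hx (hg.add hf), by simp⟩
    · exact ⟨g, hg, by simp⟩
  | succ k ih =>
    have hpsum : p ∣ g + f := hsum ▸ (dvd_pow_self p k.succ_ne_zero).mul_right x
    have hpg : p ∣ g := (hp.dvd_or_dvd ((dvd_pow_self p (by lia)).trans hprod)).elim id
      fun hf ↦ (dvd_add_left hf).1 hpsum
    obtain ⟨a, rfl⟩ := hpg
    obtain ⟨b, rfl⟩ := (dvd_add_right (dvd_mul_right p a)).1 hpsum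
    obtain ⟨y, hy, h⟩ := ih (g := a) (f := b)
      (mul_left_cancel₀ hp.ne_zero (by linear_combination hsum)) <| by
        refine (mul_dvd_mul_iff_left (pow_ne_zero 2 hp.ne_zero)).1 ?_
        convert hprod using 1 <;> ring
    exact ⟨y, hy, h.imp (by rintro rfl; ring) (by rintro rfl; ring)⟩

section QuarticReduction

variable {e c k l : QuarticInt}

lemma false_of_eq_pow_mul {j : ℕ} {N H : QuarticInt}
    (hc : c ≠ 0) (hk : e - τ * c ^ 2 = (1 + I) * ρ * k ^ 2)
    (hl : e ^ 2 - (1 - 2 * I) * c ^ 4 = 2 * (4 + I) * l ^ 2) (hN : ¬π ∣ N) (hH : ¬π ∣ H)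
    (hsum : c * k + l = π ^ 4 * N) (hsub : k ^ 2 - c ^ 2 = π ^ (4 * j + 10) * H) : False := by
  have hΔ : 2 * (4 + I) * ((1 + I) * ρ) = 2 * Δ := by decide +kernel
  have hg : ((1 + I) * ρ) ^ 2 + 2 * τ * ((1 + I) * ρ) + 4 * I = 2 * (4 + I) := by decide +kernel
  have h2 : 2 * (4 + I) = π ^ 4 * (-I * η ^ 2 * (4 + I)) := by decide +kernel
  have hgl : 2 * (4 + I) * l ^ 2 = ((1 + I) * ρ) ^ 2 * k ^ 4 +
      2 * τ * ((1 + I) * ρ) * k ^ 2 * c ^ 2 + 4 * I * c ^ 4 := by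
    linear_combination -hl + (e + τ * c ^ 2 + (1 + I) * ρ * k ^ 2) * hk + c ^ 4 * τ_sq
  obtain ⟨z, hz⟩ := exists_sq_eq_mul_biquadratic (r := 1) (h := k) (n := c)
    (y := 2 * (4 + I)) (Y := 2 * (4 + I) * l) (P := π ^ 8 * (-I * η ^ 2 * (4 + I) * N))
    (Q := π ^ 8 * (π ^ (4 * j + 2) * H)) (a := 2 * (4 + I) * ((1 + I) * ρ) ^ 2)
    (b := 4 * τ * Δ) (c := 2 * (4 + I) * (4 * I))
    (by rw [biquadratic]; linear_combination -2 * (4 + I) * hg + 2 * τ * hΔ)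
    (by rw [biquadratic]; linear_combination 2 * (4 + I) * hgl + 2 * τ * k ^ 2 * c ^ 2 * hΔ)
    (by linear_combination -2 * (4 + I) * hsum - π ^ 4 * N * h2)
    (by linear_combination -hsub)
  rw [show 2 * (4 + I) * ((1 + I) * ρ) ^ 2 * (2 * (4 + I) * (4 * I)) = 16 * I * Δ ^ 2 by
    decide +kernel, one_mul] at hz
  obtain ⟨y, -, hy⟩ := exists_eq_mul_of_sq_eq_sq_mul hc hz
  obtain ⟨w, -, hw⟩ := exists_eq_mul_of_sq_eq_sq_mul (a := π ^ 16) (x := y)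
    (b := biquadratic 1 (4 * τ * Δ) (16 * I * Δ ^ 2) (-I * η ^ 2 * (4 + I) * N)
      (π ^ (4 * j + 2) * H)) (pow_ne_zero 16 prime_π.ne_zero) (by
        rw [hy, biquadratic, biquadratic]
        ring)
  refine sq_ne_biquadratic j (prime_π.not_dvd_mul ?_ hN) hH hw
  rw [π_dvd_iff]
  decide +kernel

lemma exists_eq_pow_mul_or {j : ℕ} {H M : QuarticInt} (hl0 : ¬π ∣ l)
    (hk : e - τ * c ^ 2 = (1 + I) * ρ * k ^ 2)
    (hl : e ^ 2 - (1 - 2 * I) * c ^ 4 = 2 * (4 + I) * l ^ 2) (hM : e - 3 * c ^ 2 = 2 * M)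
    (hH : k ^ 2 - c ^ 2 = π ^ (4 * j + 10) * H) :
    ∃ N, ¬π ∣ N ∧ (c * k + l = π ^ 4 * N ∨ c * -k + l = π ^ 4 * N) := by
  have hMeq : 2 * M = (1 + I) * ρ * (k ^ 2 - c ^ 2) := by
    linear_combination hk - hM - c ^ 2 * three_sub_τ_eq
  have hprod : (4 + I) * ((c * k + l) * (c * -k + l)) =
      -((k ^ 2 - c ^ 2) * ((4 + I - 3 * ((1 + I) * ρ)) * c ^ 2 - (1 + I) * ρ * M)) := by
    refine mul_left_cancel₀ (a := 2 * ((1 + I) * ρ)) (by decide +kernel) ?_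
    obtain rfl : e = 3 * c ^ 2 + 2 * M := by linear_combination hM
    linear_combination -((1 + I) * ρ) * hl + 2 * (4 + I) * c ^ 2 * hk -
      2 * ((4 + I - 3 * ((1 + I) * ρ)) * c ^ 2 - (1 + I) * ρ * M) * hMeq -
      2 * (4 + I) * c ^ 4 * three_sub_τ_eq
  have hx : ¬π ∣ -I * η ^ 2 * l := by
    refine prime_π.not_dvd_mul ?_ hl0
    rw [π_dvd_iff]
    decide +kernel
  have hdvd : π ^ (2 * 4 + 1) ∣ (c * k + l) * (c * -k + l) := by
    refine prime_π.pow_dvd_of_dvd_mul_left _ (a := 4 + I) ?_ ?_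
    · rw [π_dvd_iff]
      decide +kernel
    · rw [hprod, hH, dvd_neg, mul_assoc]
      exact (pow_dvd_pow π (by lia)).mul_right _
  have hsum : (c * k + l) + (c * -k + l) = π ^ 4 * (-I * η ^ 2 * l) := by
    linear_combination l * two_eq
  generalize (4 : ℕ) = i at hsum hdvd ⊢
  exact exists_not_dvd_and_eq_pow_mul_or i prime_π hx hsum hdvd

end QuarticReduction

lemma exists_sq_sub_sq_eq_pow_mul (h8 : 8 ∣ e - 3 * c ^ 2) (hne : e ≠ 3 * c ^ 2) {k : QuarticInt}
    (hk : e - τ * c ^ 2 = (1 + I) * ρ * k ^ 2) :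
    ∃ j : ℕ, ∃ H, ¬π ∣ H ∧ k ^ 2 - c ^ 2 = π ^ (4 * j + 10) * H := by
  obtain ⟨m, hm⟩ := h8
  have hm0 : m ≠ 0 := by
    rintro rfl
    exact hne (by linear_combination hm)
  obtain ⟨m', hmm', hm'⟩ := (Int.finiteMultiplicity_iff (a := 2).2
    ⟨by norm_num, hm0⟩).exists_eq_pow_mul_and_not_dvd
  generalize multiplicity 2 m = j at hmm'
  rw [← even_iff_two_dvd, Int.not_even_iff_odd] at hm'
  have hcast : (e : QuarticInt) - 3 * c ^ 2 = 8 * (2 ^ j * m') := by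
    rw [hmm'] at hm
    exact_mod_cast hm
  have hη : ¬π ∣ -η * ρ := by
    rw [π_dvd_iff]
    decide +kernel
  have hI : ¬π ∣ -I * η ^ 2 := by
    rw [π_dvd_iff]
    decide +kernel
  have hmul : -η * ρ * (k ^ 2 - c ^ 2) = π ^ (4 * j + 10) * ((-I * η ^ 2) ^ (j + 3) * m') := by
    have h2 : (2 : QuarticInt) ^ j = π ^ (4 * j) * (-I * η ^ 2) ^ j := by
      rw [pow_mul, ← mul_pow, mul_comm (π ^ 4), ← two_eq]
    refine mul_left_cancel₀ (pow_ne_zero 2 prime_π.ne_zero) ?_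
    rw [pow_add π, pow_add (-I * η ^ 2)]
    linear_combination (c ^ 2 - k ^ 2) * ρ * one_add_I_eq - hk + hcast + c ^ 2 * three_sub_τ_eq +
      8 * m' * h2 + π ^ (4 * j) * (-I * η ^ 2) ^ j * m' * eight_eq
  obtain ⟨H, hH⟩ := prime_π.pow_dvd_of_dvd_mul_left _ hη (Dvd.intro _ hmul.symm)
  refine ⟨j, H, fun hπ ↦ ?_, hH⟩
  have hHm : -η * ρ * H = (-I * η ^ 2) ^ (j + 3) * m' :=
    mul_left_cancel₀ (pow_ne_zero (4 * j + 10) prime_π.ne_zero)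
      (by linear_combination hmul + η * ρ * hH)
  exact prime_π.not_dvd_mul (hI <| prime_π.dvd_of_dvd_pow ·) (not_π_dvd_intCast hm')
    (hHm ▸ hπ.mul_left _)

lemma eq_three_mul_sq_of_quartic_eq (hec : IsCoprime e c) (he : Odd e) (hc : Odd c)
    (h17 : 17 ∣ e - 3 * c ^ 2) (h : e ^ 4 - 2 * e ^ 2 * c ^ 4 + 5 * c ^ 8 = 68 * n ^ 2)
    (hn : n ≠ 0) : e = 3 * c ^ 2 := by
  by_contra hne
  obtain ⟨h8, k, hk⟩ := exists_sub_τ_mul_sq_eq hec he hc h17 h hn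
  obtain ⟨l, hl0, hl⟩ := exists_sq_sub_eq_mul_sq he hc hn h hk
  obtain ⟨j, H, hH0, hH⟩ := exists_sq_sub_sq_eq_pow_mul h8 hne hk
  obtain ⟨m, hm⟩ := h8
  have hm' : (e : QuarticInt) - 3 * c ^ 2 = 2 * (4 * m) := by
    linear_combination (by exact_mod_cast hm : (e : QuarticInt) - 3 * c ^ 2 = 8 * m)
  have hc0 : (c : QuarticInt) ≠ 0 := by
    intro h0
    exact not_π_dvd_intCast hc (h0 ▸ dvd_zero π)
  obtain ⟨N, hN0, hN | hN⟩ := exists_eq_pow_mul_or hl0 hk hl hm' hH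
  · exact false_of_eq_pow_mul hc0 hk hl hN0 hH0 hN hH
  · rw [← neg_sq k] at hk hH
    exact false_of_eq_pow_mul hc0 hk hl hN0 hH0 hN hH

end ClassSeventeenOdd

section ClassSeventeenEven

variable {e c n : ℤ}

lemma isCoprime_neg_two_mul_sq (hec : IsCoprime e c) (he : Odd e) : IsCoprime e (-2 * c ^ 2) :=
  (Int.isCoprime_two_left.2 he).symm.neg_right.mul_right hec.pow_right

lemma exists_add_two_mul_τ_mul_sq_eq (hec : IsCoprime e c) (he : Odd e)
    (h17 : 17 ∣ e + 6 * c ^ 2) (h : e ^ 4 - 8 * e ^ 2 * c ^ 4 + 80 * c ^ 8 = 17 * n ^ 2)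
    (hn : n ≠ 0) : ∃ v ∈ unitReps, ∃ d, ¬π ∣ d ∧ e + 2 * τ * c ^ 2 = v * ρ * d ^ 2 := by
  have hA : ¬π ∣ (e : QuarticInt) + 2 * τ * c ^ 2 := fun hπ ↦ not_π_dvd_intCast he <|
    (dvd_add_left ((π_dvd_two.mul_right τ).mul_right _)).1 hπ
  obtain ⟨v, hv, d, hd⟩ := sub_τ_mul_eq_unitRep_mul (isCoprime_neg_two_mul_sq hec he)
    (by convert h17 using 1; ring) hn (by linear_combination h)
  rw [show (e : QuarticInt) - τ * ((-2 * c ^ 2 : ℤ) : QuarticInt) = e + 2 * τ * c ^ 2 by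
    push_cast
    ring] at hd
  rcases hd with hd | hd
  · exact ⟨v, hv, d, fun hπ ↦ hA (hd ▸ (hπ.pow two_ne_zero).mul_left _), hd⟩
  · exact (hA (hd ▸ ((dvd_mul_left π _).mul_right _))).elim

lemma eq_η_of_emod_eight_eq_one (hc : Odd c) (he : e % 8 = 1) {v d : QuarticInt}
    (hv : v ∈ unitReps) (hd : ¬π ∣ d) (h : e + 2 * τ * c ^ 2 = v * ρ * d ^ 2) : v = η := by
  have key : ∀ v ∈ unitReps, ∀ s ∈ squareReps, toModπ (v * ρ * s) = toModπ (1 + 2 * τ) →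
      v = η := by
    decide +kernel
  obtain ⟨s, hs, hds⟩ := exists_mem_squareReps hd
  obtain ⟨k, hk⟩ : ∃ k, e - 1 = 8 * k := ⟨e / 8, by lia⟩
  obtain ⟨j, hj⟩ := Int.eight_dvd_sq_sub_one_of_odd hc
  have hk' : (e : QuarticInt) - 1 = 8 * k := by exact_mod_cast hk
  have hj' : (c : QuarticInt) ^ 2 - 1 = 8 * j := by exact_mod_cast hj
  refine key v hv s hs ?_
  rw [map_mul, ← hds, ← map_mul, ← h, toModπ_eq_iff]
  exact ⟨π ^ 3 * (-I * η ^ 2) ^ 3 * (k + 2 * τ * j), by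
    linear_combination hk' + 2 * τ * hj' + (k + 2 * τ * j) * eight_eq⟩

lemma emod_eight_ne_seven (hc : Even c) {v d : QuarticInt} (hv : v ∈ unitReps) (hd : ¬π ∣ d)
    (h : e + 2 * τ * c ^ 2 = v * ρ * d ^ 2) : e % 8 ≠ 7 := by
  intro he
  have key : ∀ v ∈ unitReps, ∀ s ∈ squareReps, toModπ (v * ρ * s) ≠ toModπ (-1) := by
    decide +kernel
  obtain ⟨s, hs, hds⟩ := exists_mem_squareReps hd
  obtain ⟨k, hk⟩ : ∃ k, e + 1 = 8 * k := ⟨(e + 1) / 8, by lia⟩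
  have hk' : (e : QuarticInt) + 1 = 8 * k := by exact_mod_cast hk
  obtain ⟨j, rfl⟩ := hc.two_dvd
  refine key v hv s hs ?_
  rw [map_mul, ← hds, ← map_mul, ← h, toModπ_eq_iff]
  exact ⟨π ^ 3 * (-I * η ^ 2) ^ 3 * (k + τ * j ^ 2), by
    push_cast
    linear_combination hk' + (k + τ * j ^ 2) * eight_eq⟩

lemma five_dvd_of_add_two_mul_τ_mul_sq_eq {d : QuarticInt}
    (h : e ^ 4 - 8 * e ^ 2 * c ^ 4 + 80 * c ^ 8 = 17 * n ^ 2)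
    (hd : e + 2 * τ * c ^ 2 = η * ρ * d ^ 2) : 5 ∣ e := by
  have key : ∀ e c n d : ZMod 5, e ^ 4 - 8 * e ^ 2 * c ^ 4 + 80 * c ^ 8 = 17 * n ^ 2 →
      e = 2 * d ^ 2 → e = 0 := by
    decide +kernel
  have hd' := congrArg toZMod5 hd
  rw [map_add, map_mul, map_mul, map_mul, map_mul, map_pow, map_pow, map_intCast, map_intCast,
    show toZMod5 τ = 0 by decide +kernel, show toZMod5 η = 2 by decide +kernel,
    show toZMod5 ρ = 1 by decide +kernel, mul_zero, zero_mul, add_zero, mul_one] at hd'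
  exact (ZMod.intCast_zmod_eq_zero_iff_dvd e 5).1 (key e c n _ (by exact_mod_cast congrArg _ h) hd')

lemma quartic_ne_seventeen_mul_sq (hec : IsCoprime e c) (h17 : 17 ∣ e + 6 * c ^ 2) (hn : n ≠ 0)
    (hmod : Odd c ∧ e % 8 = 1 ∨ Even c ∧ e % 8 = 7) :
    e ^ 4 - 8 * e ^ 2 * c ^ 4 + 80 * c ^ 8 ≠ 17 * n ^ 2 := by
  intro h
  have he : Odd e := Int.odd_iff.2 (by lia)
  obtain ⟨v, hv, d, hd, hA⟩ := exists_add_two_mul_τ_mul_sq_eq hec he h17 h hn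
  rcases hmod with ⟨hc, he1⟩ | ⟨hc, he7⟩
  · obtain rfl := eq_η_of_emod_eight_eq_one hc he1 hv hd hA
    exact not_five_dvd (n := n) (isCoprime_neg_two_mul_sq hec he) (by linear_combination h)
      (five_dvd_of_add_two_mul_τ_mul_sq_eq h hA)
  · exact emod_eight_ne_seven hc hv hd hA he7

end ClassSeventeenEven

section TwoCover

variable {a b : ℤ}

lemma exists_eq_mul_sq_and_eq_mul_sq {x y z : ℤ} (hx : 0 < x) (hy : 0 < y) (h : x * y = z ^ 2) :
    ∃ g r s : ℤ, 0 < g ∧ x = g * r ^ 2 ∧ y = g * s ^ 2 := by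
  have hg : 0 < Int.gcd x y := Int.gcd_pos_of_ne_zero_left _ hx.ne'
  obtain ⟨x', y', hcop, hx', hy'⟩ := Int.exists_gcd_one hg
  have hg' : 0 < (Int.gcd x y : ℤ) := by exact_mod_cast hg
  generalize (Int.gcd x y : ℤ) = g at hx' hy' hg'
  subst hx' hy'
  obtain ⟨z', rfl⟩ : g ∣ z := by
    rw [← Int.pow_dvd_pow_iff two_ne_zero]
    exact ⟨x' * y', by rw [← h]; ring⟩
  obtain ⟨r, s, -, -, -, rfl, rfl⟩ := exists_pow_eq_of_isCoprime_mul_eq_pow two_ne_zero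
    (pos_of_mul_pos_left hx hg'.le) (pos_of_mul_pos_left hy hg'.le)
    (Int.isCoprime_iff_gcd_eq_one.2 hcop)
    (mul_left_cancel₀ (pow_ne_zero 2 hg'.ne') (by linear_combination h) : x' * y' = z' ^ 2)
  exact ⟨g, r, s, hg', mul_comm _ _, mul_comm _ _⟩

lemma isCoprime_cubic (hab : IsCoprime a b) : IsCoprime (4 * b ^ 3 - a ^ 3) b := by
  rw [show 4 * b ^ 3 - a ^ 3 = -a ^ 3 + b * (4 * b ^ 2) by ring]
  exact hab.pow_left.neg_left.add_mul_left_left _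

lemma isCoprime_quartic (hab : IsCoprime a b) :
    IsCoprime ((a ^ 2 - 4 * a * b) ^ 2 + 64 * b ^ 4) b := by
  rw [show (a ^ 2 - 4 * a * b) ^ 2 + 64 * b ^ 4 =
    a ^ 4 + b * (-8 * a ^ 3 + 16 * a ^ 2 * b + 64 * b ^ 3) by ring]
  exact hab.pow_left.add_mul_left_left _

lemma cubic_ne_zero (hab : IsCoprime a b) : 4 * b ^ 3 - a ^ 3 ≠ 0 := by
  intro h
  obtain ⟨k, rfl⟩ : 2 ∣ a :=
    Int.prime_two.dvd_of_dvd_pow (n := 3) ⟨2 * b ^ 3, by linear_combination -h⟩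
  have hb : 2 ∣ b := Int.prime_two.dvd_of_dvd_pow (n := 3) ⟨k ^ 3, by linarith⟩
  exact Int.prime_two.not_isUnit (hab.isUnit_of_dvd' (dvd_mul_right 2 k) hb)

-- `17 ^ 2` is, up to a power of two, the resultant of the cubic and the quartic.
lemma dvd_seventeen_sq_of_dvd_cubic_of_dvd_quartic {g : ℤ} (hab : IsCoprime a b) (hg : Odd g)
    (hF : g ∣ 4 * b ^ 3 - a ^ 3) (hG : g ∣ (a ^ 2 - 4 * a * b) ^ 2 + 64 * b ^ 4) :
    g ∣ 17 ^ 2 := by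
  have hgb : IsCoprime g b := (isCoprime_cubic hab).of_isCoprime_of_dvd_left hF
  have hg4 : IsCoprime g (2 ^ 2) := (Int.isCoprime_two_left.2 hg).symm.pow_right
  have hquad : g ∣ 4 * a ^ 2 + a * b + 8 * b ^ 2 := by
    refine (hg4.mul_right (hgb.pow_right (n := 2))).dvd_of_dvd_mul_left ?_
    convert hG.add (hF.mul_right (a - 8 * b)) using 1
    ring
  refine (hg4.mul_right (hgb.pow_right (n := 4))).dvd_of_dvd_mul_left ?_
  convert (hquad.mul_right (48 * b ^ 2 + 56 * a * b - 31 * a ^ 2)).sub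
    (hF.mul_right (124 * a - 193 * b)) using 1
  ring

lemma seventeen_dvd_add_four_mul (hF : 17 ∣ 4 * b ^ 3 - a ^ 3)
    (hG : 17 ∣ (a ^ 2 - 4 * a * b) ^ 2 + 64 * b ^ 4) : 17 ∣ a + 4 * b := by
  have key : ∀ a b : ZMod 17, 4 * b ^ 3 - a ^ 3 = 0 →
      (a ^ 2 - 4 * a * b) ^ 2 + 64 * b ^ 4 = 0 → a + 4 * b = 0 := by
    decide +kernel
  have hF' := (ZMod.intCast_zmod_eq_zero_iff_dvd _ 17).2 hF
  have hG' := (ZMod.intCast_zmod_eq_zero_iff_dvd _ 17).2 hG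
  refine (ZMod.intCast_zmod_eq_zero_iff_dvd _ 17).1 ?_
  push_cast at hF' hG' ⊢
  exact key a b hF' hG'

lemma exists_eq_one_or_seventeen_mul_sq {x y z : ℤ} (hx : 0 < x) (hy : 0 < y) (h : x * y = z ^ 2)
    (hab : IsCoprime a b) (hxo : Odd x) (hF : x ∣ 4 * b ^ 3 - a ^ 3)
    (hG : y ∣ (a ^ 2 - 4 * a * b) ^ 2 + 64 * b ^ 4) :
    ∃ d r s : ℤ, (d = 1 ∨ d = 17 ∧ 17 ∣ a + 4 * b) ∧ x = d * r ^ 2 ∧ y = d * s ^ 2 := by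
  obtain ⟨g, r, s, hg, rfl, rfl⟩ := exists_eq_mul_sq_and_eq_mul_sq hx hy h
  have hgF := (dvd_mul_right g _).trans hF
  have hgG := (dvd_mul_right g _).trans hG
  obtain ⟨i, hi, hassoc⟩ := (dvd_prime_pow (Int.prime_iff_natAbs_prime.2 (by norm_num)) 2).1
    (dvd_seventeen_sq_of_dvd_cubic_of_dvd_quartic hab (Int.odd_mul.1 hxo).1 hgF hgG)
  obtain rfl := Int.eq_of_associated_of_nonneg hassoc hg.le (by positivity)
  interval_cases i
  · exact ⟨1, r, s, Or.inl rfl, by simp, by simp⟩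
  · rw [pow_one] at hgF hgG
    exact ⟨17, r, s, Or.inr ⟨rfl, seventeen_dvd_add_four_mul hgF hgG⟩, by simp, by simp⟩
  · exact ⟨1, 17 * r, 17 * s, Or.inl rfl, by ring, by ring⟩

section OddNumerator

variable {a c w r : ℤ}

lemma sub_two_mul_sq_emod_eight (ha : Odd a) (h : 4 * c ^ 6 - a ^ 3 = 17 * r ^ 2) :
    Odd c ∧ (a - 2 * c ^ 2) % 8 = 1 ∨ Even c ∧ (a - 2 * c ^ 2) % 8 = 7 := by
  have hr : Odd r := by
    have hodd : Odd (17 * r ^ 2) := h ▸ Even.sub_odd ⟨2 * c ^ 6, by ring⟩ ha.pow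
    exact (Int.odd_pow' two_ne_zero).1 (Int.odd_mul.1 hodd).2
  obtain ⟨k, hk⟩ := Int.eight_dvd_sq_sub_one_of_odd hr
  obtain ⟨m, hm⟩ := Int.eight_dvd_sq_sub_one_of_odd ha
  have ha' : a = 4 * c ^ 6 - 17 - 8 * (17 * k + a * m) := by
    linear_combination -h - 17 * hk - a * hm
  rcases Int.even_or_odd c with hc | hc
  · refine Or.inr ⟨hc, ?_⟩
    obtain ⟨c, rfl⟩ := hc.two_dvd
    ring_nf at ha' ⊢
    lia
  · refine Or.inl ⟨hc, ?_⟩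
    obtain ⟨n, hn⟩ := Int.eight_dvd_sq_sub_one_of_odd hc
    have hc6 : c ^ 6 = 1 + 8 * (3 * n + 24 * n ^ 2 + 64 * n ^ 3) := by
      rw [show c ^ 6 = (c ^ 2 - 1 + 1) ^ 3 by ring, hn]
      ring
    lia

lemma cubic_mul_quartic_ne_sq_of_odd (hac : IsCoprime a c) (hc : c ≠ 0) (ha : Odd a)
    (hF : 0 < 4 * c ^ 6 - a ^ 3) :
    (4 * c ^ 6 - a ^ 3) * ((a ^ 2 - 4 * a * c ^ 2) ^ 2 + 64 * c ^ 8) ≠ w ^ 2 := by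
  intro h
  have hG : 0 < (a ^ 2 - 4 * a * c ^ 2) ^ 2 + 64 * c ^ 8 := by positivity
  obtain ⟨d, r, s, hd, hr, hs⟩ := exists_eq_one_or_seventeen_mul_sq (b := c ^ 2) hF hG h
    hac.pow_right (Even.sub_odd ⟨2 * c ^ 6, by ring⟩ ha.pow) (dvd_of_eq (by ring))
    (dvd_of_eq (by ring))
  have hec : IsCoprime (a - 2 * c ^ 2) c := by
    rw [show a - 2 * c ^ 2 = a + c * (-2 * c) by ring]
    exact hac.add_mul_left_left _
  rcases hd with rfl | ⟨rfl, h17⟩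
  · exact quartic_ne_sq_of_odd hec (ha.sub_even (even_two_mul _)) hc s
      (by linear_combination hs)
  · have hs0 : s ≠ 0 := by
      rintro rfl
      exact hG.ne' hs
    refine quartic_ne_seventeen_mul_sq hec ?_ hs0 (sub_two_mul_sq_emod_eight ha hr)
      (by linear_combination hs)
    convert h17 using 1
    ring

end OddNumerator

section EvenNumerator

variable {a c w r d : ℤ}

lemma even_of_sq_class_mod_eight (hc : Odd c) (hd : 8 ∣ d - 1)
    (h : c ^ 6 - 2 * a ^ 3 = d * r ^ 2) : Even a := by
  have hodd : Odd (d * r ^ 2) := h ▸ hc.pow.sub_even (even_two_mul _)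
  have hr := (Int.odd_pow' two_ne_zero).1 (Int.odd_mul.1 hodd).2
  have hc6 : (8 : ℤ) ∣ c ^ 6 - 1 := (Int.eight_dvd_sq_sub_one_of_odd hc).trans
    ⟨c ^ 4 + c ^ 2 + 1, by ring⟩
  have ha : (8 : ℤ) ∣ 2 * a ^ 3 := by
    rw [show 2 * a ^ 3 = c ^ 6 - 1 - (d - 1) * r ^ 2 - (r ^ 2 - 1) by linear_combination -h]
    exact dvd_sub (dvd_sub hc6 (hd.mul_right _)) (Int.eight_dvd_sq_sub_one_of_odd hr)
  exact (Int.even_pow.1 (even_iff_two_dvd.2 (by lia : 2 ∣ a ^ 3))).1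

lemma eq_neg_two_mul_sq_of_even (hac : IsCoprime (2 * a) c) (hc : Odd c) (ha : a ≠ 0)
    (hF : 0 < c ^ 6 - 2 * a ^ 3)
    (h : (c ^ 6 - 2 * a ^ 3) * ((a ^ 2 - 2 * a * c ^ 2) ^ 2 + 4 * c ^ 8) = w ^ 2) :
    a = -2 * c ^ 2 := by
  have hc0 : c ≠ 0 := by
    rintro rfl
    simp at hc
  have hG : 0 < (a ^ 2 - 2 * a * c ^ 2) ^ 2 + 4 * c ^ 8 := by positivity
  obtain ⟨d, r, s, hd, hr, hs⟩ := exists_eq_one_or_seventeen_mul_sq (a := 2 * a) (b := c ^ 2) hF hG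
    h hac.pow_right (hc.pow.sub_even (even_two_mul _)) ⟨4, by ring⟩ ⟨16, by ring⟩
  have hd8 : 8 ∣ d - 1 := by
    rcases hd with rfl | ⟨rfl, -⟩ <;> norm_num
  obtain ⟨a, rfl⟩ := (even_of_sq_class_mod_eight hc hd8 hr).two_dvd
  obtain ⟨s, rfl⟩ : 2 ∣ s := by
    have hdvd : 2 ∣ d * s ^ 2 := ⟨2 * (4 * (a ^ 2 - a * c ^ 2) ^ 2 + c ^ 8), by
      linear_combination -hs⟩
    exact Int.prime_two.dvd_of_dvd_pow ((Int.prime_two.dvd_or_dvd hdvd).resolve_left (by lia))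
  have hec : IsCoprime (c ^ 2 - 2 * a) c := by
    rw [show c ^ 2 - 2 * a = -(2 * a) + c * c by ring]
    exact hac.of_mul_left_right.neg_left.add_mul_left_left _
  have he : Odd (c ^ 2 - 2 * a) := hc.pow.sub_even (even_two_mul _)
  rcases hd with rfl | ⟨rfl, h17⟩
  · obtain ⟨he1, hc1⟩ := sq_eq_one_of_quartic_eq_four_mul_sq hec he hc
      (by linear_combination hs : _ = 4 * s ^ 2)
    rw [hc1] at he1
    obtain rfl : a = 1 := by
      have hmul : a * (a - 1) = 0 := by linarith
      exact sub_eq_zero.1 ((mul_eq_zero.1 hmul).resolve_left (by lia))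
    rw [show c ^ 6 = (c ^ 2) ^ 3 by ring, hc1] at hF
    norm_num at hF
  · have hs0 : s ≠ 0 := by
      rintro rfl
      exact hG.ne' hs
    have := eq_three_mul_sq_of_quartic_eq hec he hc (by lia)
      (by linear_combination hs : _ = 68 * s ^ 2) hs0
    linarith

end EvenNumerator

lemma eq_neg_four_mul_of_sq_eq_mul_cubic_mul_quartic {w : ℤ} (hab : IsCoprime a b) (hb : 0 < b)
    (ha : a ≠ 0)
    (h : b * ((4 * b ^ 3 - a ^ 3) * ((a ^ 2 - 4 * a * b) ^ 2 + 64 * b ^ 4)) = w ^ 2) :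
    a = -4 * b := by
  have hG : 0 < (a ^ 2 - 4 * a * b) ^ 2 + 64 * b ^ 4 := by positivity
  have hFG : 0 < (4 * b ^ 3 - a ^ 3) * ((a ^ 2 - 4 * a * b) ^ 2 + 64 * b ^ 4) :=
    (nonneg_of_mul_nonneg_right (h ▸ sq_nonneg w) hb).lt_of_ne'
      (mul_ne_zero (cubic_ne_zero hab) hG.ne')
  have hF := pos_of_mul_pos_left hFG hG.le
  obtain ⟨c, w, -, -, -, rfl, hw⟩ := exists_pow_eq_of_isCoprime_mul_eq_pow two_ne_zero hb hFG
    ((isCoprime_cubic hab).symm.mul_right (isCoprime_quartic hab).symm) h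
  have hac : IsCoprime a c := (IsCoprime.pow_right_iff two_pos).1 hab
  rcases Int.even_or_odd a with hae | hao
  · obtain ⟨a, rfl⟩ := hae.two_dvd
    obtain ⟨w, rfl⟩ : (2 : ℤ) ^ 3 ∣ w := by
      rw [← Int.pow_dvd_pow_iff two_ne_zero, ← hw]
      exact ⟨(c ^ 6 - 2 * a ^ 3) * ((a ^ 2 - 2 * a * c ^ 2) ^ 2 + 4 * c ^ 8), by ring⟩
    rw [eq_neg_two_mul_sq_of_even (w := w) hac (Int.isCoprime_two_left.1 hac.of_mul_left_left)
      (right_ne_zero_of_mul ha) (by linarith)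
      (mul_left_cancel₀ (by norm_num : (64 : ℤ) ≠ 0) (by linear_combination hw))]
    ring
  · exact absurd (by linear_combination hw)
      (cubic_mul_quartic_ne_sq_of_odd (w := w) hac (by rintro rfl; simp at hb) hao (by linarith))

lemma eq_neg_four_of_sq_eq_cubic_mul_quartic {v z : ℚ} (hv : v ≠ 0)
    (h : z ^ 2 = (4 - v ^ 3) * ((v ^ 2 - 4 * v) ^ 2 + 64)) : v = -4 := by
  have hden : (0 : ℤ) < v.den := by exact_mod_cast v.den_pos
  have hcop : IsCoprime v.num (v.den : ℤ) := Int.isCoprime_iff_gcd_eq_one.2 v.reduced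
  have hnum : v.num ≠ 0 := Rat.num_ne_zero.2 hv
  have hv' : v = v.num / (v.den : ℤ) := by
    rw [Int.cast_natCast, Rat.num_div_den]
  generalize v.num = a at hv' hcop hnum
  generalize (v.den : ℤ) = b at hv' hcop hden
  have hb : (b : ℚ) ≠ 0 := by exact_mod_cast hden.ne'
  obtain ⟨w, hw⟩ :
      IsSquare (b * ((4 * b ^ 3 - a ^ 3) * ((a ^ 2 - 4 * a * b) ^ 2 + 64 * b ^ 4))) := by
    rw [← Rat.isSquare_intCast_iff]
    refine ⟨z * b ^ 4, ?_⟩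
    rw [← sq, mul_pow, h, hv']
    push_cast
    field_simp
  rw [hv', eq_neg_four_mul_of_sq_eq_mul_cubic_mul_quartic hcop hden hnum (hw.trans (sq w).symm)]
  push_cast
  field_simp

end TwoCover

section Parametrization

variable {s y Z : ℚ}

-- The curve is rational, with parameter `v = s (Z - 1) / (Z + 3) - 1`.
lemma exists_param (hZ : Z + 3 ≠ 0)
    (h : (Z - 1) ^ 2 * s ^ 3 + (Z - 1) * (Z ^ 2 - 9) * s ^ 2 - (Z + 3) ^ 2 * (2 * Z - 3) * s
      + 5 * (Z + 3) ^ 3 = 0) :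
    ∃ v : ℚ, v ≠ 0 ∧ Z * (v ^ 2 + 4) = 4 - v ^ 3 ∧ s * v ^ 2 = v ^ 3 - 3 * v ^ 2 - 16 := by
  obtain ⟨v, hv⟩ : ∃ v, s * (Z - 1) = (v + 1) * (Z + 3) :=
    ⟨s * (Z - 1) / (Z + 3) - 1, by rw [sub_add_cancel, div_mul_cancel₀ _ hZ]⟩
  have hZv : Z * (v ^ 2 + 4) = 4 - v ^ 3 := by
    have hsZ : (s * (Z - 1)) ^ 3 + (Z ^ 2 - 9) * (s * (Z - 1)) ^ 2
        - (Z + 3) ^ 2 * (2 * Z - 3) * (s * (Z - 1)) + 5 * (Z + 3) ^ 3 * (Z - 1) = 0 := by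
      linear_combination (Z - 1) * h
    rw [hv] at hsZ
    exact mul_left_cancel₀ (pow_ne_zero 3 hZ) (by linear_combination hsZ)
  have hsv : (v + 1) * (s * v ^ 2) = (v + 1) * (v ^ 3 - 3 * v ^ 2 - 16) := by
    linear_combination -(v ^ 2 + 4) * hv + (s - (v + 1)) * hZv
  refine ⟨v, ?_, hZv, ?_⟩
  · rintro rfl
    norm_num at hsv
  · by_cases hv1 : v + 1 = 0
    · obtain rfl := eq_neg_of_add_eq_zero_left hv1
      obtain rfl : Z = 1 := by linarith
      linarith
    · exact mul_left_cancel₀ hv1 hsv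

lemma eq_neg_eight_and_sq_eq_of_curve
    (h : y ^ 6 + (s ^ 3 - s ^ 2 - 9 * s + 45) * y ^ 4
      - (s - 3) * (s ^ 2 - 2 * s + 5) * (2 * s ^ 2 + 15 * s + 45) * y ^ 2
      + (s ^ 2 - 2 * s + 5) ^ 2 * (s ^ 3 + 9 * s ^ 2 + 27 * s + 135) = 0) :
    s = -8 ∧ y ^ 2 = 289 := by
  have hs : 0 < s ^ 2 - 2 * s + 5 := by linarith [sq_nonneg (s - 1)]
  obtain ⟨Z, hZ⟩ : ∃ Z, y ^ 2 = (s ^ 2 - 2 * s + 5) * Z :=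
    ⟨y ^ 2 / (s ^ 2 - 2 * s + 5), by rw [mul_div_cancel₀ _ hs.ne']⟩
  have hZ0 : 0 ≤ Z := nonneg_of_mul_nonneg_right (hZ ▸ sq_nonneg y) hs
  have hcubic : (Z - 1) ^ 2 * s ^ 3 + (Z - 1) * (Z ^ 2 - 9) * s ^ 2
      - (Z + 3) ^ 2 * (2 * Z - 3) * s + 5 * (Z + 3) ^ 3 = 0 := by
    rw [show y ^ 6 = (y ^ 2) ^ 3 by ring, show y ^ 4 = (y ^ 2) ^ 2 by ring, hZ] at h
    exact mul_left_cancel₀ (pow_ne_zero 2 hs.ne') (by linear_combination h)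
  obtain ⟨v, hv, hZv, hsv⟩ := exists_param (by linarith) hcubic
  have hyv : (y * v ^ 2) ^ 2 = (4 - v ^ 3) * ((v ^ 2 - 4 * v) ^ 2 + 64) := calc
    (y * v ^ 2) ^ 2 = ((s * v ^ 2) ^ 2 - 2 * v ^ 2 * (s * v ^ 2) + 5 * v ^ 4) * Z := by
      linear_combination v ^ 4 * hZ
    _ = (4 - v ^ 3) * ((v ^ 2 - 4 * v) ^ 2 + 64) := by
      rw [hsv]
      linear_combination ((v ^ 2 - 4 * v) ^ 2 + 64) * hZv
  obtain rfl := eq_neg_four_of_sq_eq_cubic_mul_quartic hv hyv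
  constructor <;> linarith

end Parametrization

end CurveB2

/-- The rational points of the curve `ℬ₂ : x⁶ + p(t)x⁴ − q(t)x² + r(t) = 0`, where
`p(t) = 4(64t³ − 16t² − 36t + 45)`, `q(t) = 16(4t − 3)(16t² − 8t + 5)(32t² + 60t + 45)`
and `r(t) = 64(16t² − 8t + 5)²(64t³ + 144t² + 108t + 135)`, are exactly `(−2, ±34)`. -/
theorem curve_B2_points (t x : ℚ) :
    x ^ 6 + (4 * (64 * t ^ 3 - 16 * t ^ 2 - 36 * t + 45)) * x ^ 4 -
      (16 * (4 * t - 3) * (16 * t ^ 2 - 8 * t + 5) * (32 * t ^ 2 + 60 * t + 45)) * x ^ 2 +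
      64 * (16 * t ^ 2 - 8 * t + 5) ^ 2 * (64 * t ^ 3 + 144 * t ^ 2 + 108 * t + 135) = 0 ↔
    (t = -2 ∧ x = 34) ∨ (t = -2 ∧ x = -34) := by
  constructor
  · intro h
    obtain ⟨ht, hx⟩ := CurveB2.eq_neg_eight_and_sq_eq_of_curve (s := 4 * t) (y := x / 2)
      (by linear_combination h / 64)
    have ht' : t = -2 := by linarith
    have hx' : x ^ 2 = 34 ^ 2 := by linear_combination 4 * hx
    exact (sq_eq_sq_iff_eq_or_eq_neg.1 hx').imp (⟨ht', ·⟩) (⟨ht', ·⟩)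
  · rintro (⟨rfl, rfl⟩ | ⟨rfl, rfl⟩) <;> norm_num
end

section
/- The set of pairs (t,x) ∈ ℚ × ℚ satisfying x⁶ − p(t)x⁴ − q(t)x² − r(t) = 0 is exactly {(0, 2), (0, −2)}. -/
/-!
Completing the square in `x²` turns the equation into `y² = x² + 16t` with
`x²y = (4t − 3)x² + 4(16t² − 8t + 5)`. Eliminating `t` gives `z² = (y² − 4)² + 64` for
`z = x(y + 2)`, a curve birational to the elliptic curve `E : v² = m³ + m² − m` of rank zero. A
rational point of `E` with `m > 0` has `m = a²/b²` with `a⁴ + a²b² − b⁴ = c²`, and translation by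
the 2-torsion point `(0, 0)`, that is `m ↦ −1/m`, deals with `m < 0`. Descent along the 2-isogeny
from `E` to `v² = m³ − 2m² + 5m` and along its dual produces from `(a, b)` a solution `(g, l)` of
the same quartic equation with `g⁴ + l⁴ ≤ 2|a|`, hence a smaller one unless `a² = b² = 1`.
-/

lemma pos_and_pos_of_add_nonneg_of_mul_pos {R : Type*} [Ring R] [LinearOrder R]
    [IsStrictOrderedRing R] {u v : R} (hadd : 0 ≤ u + v) (hmul : 0 < u * v) : 0 < u ∧ 0 < v :=
  (pos_and_pos_or_neg_and_neg_of_mul_pos hmul).resolve_right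
    fun h ↦ (add_neg h.1 h.2).not_ge hadd

lemma dvd_of_sq_dvd_squarefree_mul_pow {M : Type*} [CommMonoidWithZero M] [IsCancelMulZero M]
    {p q w : M} {n : ℕ} (hp : Prime p) (hq : Squarefree q) (h : p ^ 2 ∣ q * w ^ n) : p ∣ w := by
  by_contra hpw
  have hpq : p ^ 2 ∣ q :=
    hp.pow_dvd_of_dvd_mul_right 2 (fun hpwn ↦ hpw (hp.dvd_of_dvd_pow hpwn)) h
  exact hp.not_isUnit (hq p (sq p ▸ hpq))

lemma isCoprime_sub_left {R : Type*} [CommRing R] {x y : R} (h : IsCoprime x y) :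
    IsCoprime (x - y) y := by
  simpa only [one_mul] using (IsCoprime.sub_mul_right_left_iff (z := 1)).mpr h

lemma isCoprime_sub_add {R : Type*} [CommRing R] {x y : R} (h : IsCoprime x y)
    (h2 : IsCoprime (x - y) 2) : IsCoprime (x - y) (x + y) := by
  have heq : x + y = 2 * y + (x - y) * 1 := by ring
  exact heq ▸ (h2.mul_right (isCoprime_sub_left h)).add_mul_left_right 1

lemma isCoprime_of_mul_eq_squarefree_mul_pow {R : Type*} [CommRing R] [IsDomain R]
    [IsPrincipalIdealRing R] {q u v w : R} {n : ℕ} (hq : Squarefree q) (h : IsCoprime (u + v) w)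
    (huv : u * v = q * w ^ n) : IsCoprime u v := by
  refine isCoprime_of_prime_dvd ?_ fun p hp hpu hpv ↦ ?_
  · rintro ⟨rfl, rfl⟩
    have hw : w ≠ 0 := (isCoprime_zero_left.mp (add_zero (0 : R) ▸ h)).ne_zero
    exact mul_ne_zero hq.ne_zero (pow_ne_zero n hw) (huv.symm.trans (zero_mul 0))
  · have hpw : p ∣ w := dvd_of_sq_dvd_squarefree_mul_pow hp hq (huv ▸ sq p ▸ mul_dvd_mul hpu hpv)
    exact hp.not_isUnit (h.isUnit_of_dvd' (dvd_add hpu hpv) hpw)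

lemma exists_eq_pow_of_isCoprime_of_mul_eq_pow {u v w : ℤ} {n : ℕ} (hu : 0 ≤ u)
    (h : IsCoprime u v) (huv : u * v = w ^ n) : ∃ e : ℤ, u = e ^ n := by
  obtain ⟨d, hd⟩ := exists_associated_pow_of_mul_eq_pow' h huv
  refine ⟨|d|, ?_⟩
  rw [← abs_pow, abs_eq_abs.mpr (Int.associated_iff.mp hd), abs_of_nonneg hu]

lemma exists_isCoprime_pow_of_mul_eq_pow {u v w : ℤ} {n : ℕ} (hn : n ≠ 0) (hu : 0 ≤ u)
    (hv : 0 ≤ v) (h : IsCoprime u v) (huv : u * v = w ^ n) :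
    ∃ e f : ℤ, IsCoprime e f ∧ u = e ^ n ∧ v = f ^ n := by
  obtain ⟨e, rfl⟩ := exists_eq_pow_of_isCoprime_of_mul_eq_pow hu h huv
  obtain ⟨f, rfl⟩ := exists_eq_pow_of_isCoprime_of_mul_eq_pow hv h.symm (mul_comm _ v ▸ huv)
  have hn' : 0 < n := Nat.pos_of_ne_zero hn
  exact ⟨e, f, (IsCoprime.pow_iff hn' hn').mp h, rfl, rfl⟩

lemma exists_isCoprime_pow_add_prime_mul_pow {u v w q : ℤ} {n : ℕ} (hn : n ≠ 0) (hq : Prime q)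
    (hq0 : 0 < q) (hu : 0 ≤ u) (hv : 0 ≤ v) (h : IsCoprime u v) (huv : u * v = q * w ^ n) :
    ∃ e f : ℤ, IsCoprime e f ∧ (e * f) ^ n = w ^ n ∧ u + v = e ^ n + q * f ^ n := by
  wlog hqv : q ∣ v generalizing u v
  · have hqu : q ∣ u := (hq.dvd_or_dvd (Dvd.intro _ huv.symm)).resolve_right hqv
    rw [add_comm]
    exact this hv hu h.symm (mul_comm u v ▸ huv) hqu
  obtain ⟨v, rfl⟩ := hqv
  have huw : u * v = w ^ n := mul_left_cancel₀ hq.ne_zero (by linear_combination huv)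
  obtain ⟨e, f, hef, rfl, rfl⟩ := exists_isCoprime_pow_of_mul_eq_pow hn hu
    (nonneg_of_mul_nonneg_right hv hq0) h.of_mul_right_right huw
  exact ⟨e, f, hef, by rw [mul_pow, huw], rfl⟩

lemma abs_eq_one_of_pow_four_add_pow_four_le {a g l : ℤ} (hl : l ≠ 0) (hag : |a| ≤ |g|)
    (h : g ^ 4 + l ^ 4 ≤ 2 * |a|) : |a| = 1 := by
  have hl4 : 0 < l ^ 4 := by positivity
  have hg4 : g ^ 4 = |g| ^ 4 := (Even.pow_abs (by decide) g).symm
  have hg : |g| < 2 := by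
    by_contra! hg
    nlinarith [pow_le_pow_left₀ two_pos.le hg 3]
  have ha : 0 < |a| := by linarith [pow_nonneg (abs_nonneg g) 4]
  omega

/-- `IsQuarticPoint α β M e N` says that `(M, e, N)` is a primitive integral point with `e ≠ 0` on
the quartic `M⁴ + αM²e² + βe⁴ = N²`, the 2-covering of the elliptic curve `y² = x³ + αx² + βx` whose
points lie over those with first coordinate `x = M²/e²`. -/
structure IsQuarticPoint (α β M e N : ℤ) : Prop where
  isCoprime : IsCoprime M e
  ne_zero : e ≠ 0
  eq : M ^ 4 + α * M ^ 2 * e ^ 2 + β * e ^ 4 = N ^ 2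

namespace IsQuarticPoint

-- The coefficients `(4, -16)` are `(1, -1)` scaled by `x ↦ 4x`. In this model `s² + 2w² ± d` are
-- even, and their halves are coprime factors of `5w⁴` whatever the parity of `b`.
lemma exists_scaled {a b c : ℤ} (h : IsQuarticPoint 1 (-1) a b c) :
    ∃ s w d : ℤ, IsQuarticPoint 4 (-16) s w d ∧ (s = 2 * a ∨ s = a ∧ Odd a) := by
  obtain ⟨hab, hb, habc⟩ := h
  rcases Int.even_or_odd b with heven | hodd
  · obtain ⟨w, rfl⟩ := heven.two_dvd
    exact ⟨a, w, c, ⟨hab.of_mul_right_right, right_ne_zero_of_mul hb, by linear_combination habc⟩,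
      .inr ⟨rfl, Int.isCoprime_two_right.mp hab.of_mul_right_left⟩⟩
  · exact ⟨2 * a, b, 4 * c, ⟨(Int.isCoprime_two_left.mpr hodd).mul_left hab, hb,
      by linear_combination 16 * habc⟩, .inl rfl⟩

lemma exists_mul_eq_five_mul_pow_four {s w d : ℤ} (h : IsQuarticPoint 4 (-16) s w d) :
    ∃ u v : ℤ, u + v = s ^ 2 + 2 * w ^ 2 ∧ u * v = 5 * w ^ 4 := by
  have heven : Even (s ^ 2 + 2 * w ^ 2 - d) := by
    have := congrArg Even h.eq
    simp only [Int.even_sub, Int.even_add, Int.even_mul, Int.even_pow] at this ⊢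
    grind
  obtain ⟨u, hu⟩ := heven.two_dvd
  obtain ⟨v, hv⟩ : ∃ v, d = v - u := ⟨d + u, by ring⟩
  have hadd : u + v = s ^ 2 + 2 * w ^ 2 := by linear_combination -hu - hv
  refine ⟨u, v, hadd, mul_left_cancel₀ four_ne_zero ?_⟩
  have heq := h.eq
  rw [hv] at heq
  linear_combination heq + (u + v + s ^ 2 + 2 * w ^ 2) * hadd

lemma exists_isogenous {s w d : ℤ} (h : IsQuarticPoint 4 (-16) s w d) :
    ∃ e f : ℤ, IsQuarticPoint (-2) 5 e f s := by
  obtain ⟨u, v, hadd, huv⟩ := h.exists_mul_eq_five_mul_pow_four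
  have hw : w ≠ 0 := h.ne_zero
  have hpos : 0 < u ∧ 0 < v :=
    pos_and_pos_of_add_nonneg_of_mul_pos (hadd ▸ by positivity) (huv ▸ by positivity)
  have h5 : Prime (5 : ℤ) := by norm_num
  have hcop : IsCoprime (u + v) w := by
    rw [hadd, sq w, ← mul_assoc]
    exact h.isCoprime.pow_left.add_mul_right_left _
  obtain ⟨e, f, hef, hefw, hsum⟩ := exists_isCoprime_pow_add_prime_mul_pow four_ne_zero
    h5 (by norm_num) hpos.1.le hpos.2.le
    (isCoprime_of_mul_eq_squarefree_mul_pow h5.squarefree hcop huv) huv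
  have hefw_sq : (e * f) ^ 2 = w ^ 2 := by
    rw [← sq_eq_sq₀ (by positivity) (by positivity)]
    linear_combination hefw
  refine ⟨e, f, hef, ?_, by linear_combination hadd - hsum - 2 * hefw_sq⟩
  rintro rfl
  exact hw (by simpa using hefw_sq.symm)

lemma pythagoreanTriple {e f s : ℤ} (h : IsQuarticPoint (-2) 5 e f s) :
    PythagoreanTriple (e ^ 2 - f ^ 2) (2 * f ^ 2) |s| := by
  rw [PythagoreanTriple, abs_mul_abs_self]
  linear_combination h.eq

protected lemma abs_pos {e f s : ℤ} (h : IsQuarticPoint (-2) 5 e f s) : 0 < |s| := by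
  have hf : f ≠ 0 := h.ne_zero
  have : 0 < |s| * |s| := by
    rw [← h.pythagoreanTriple.eq]
    exact add_pos_of_nonneg_of_pos (mul_self_nonneg _) (by positivity)
  exact (abs_nonneg s).lt_of_ne' (left_ne_zero_of_mul this.ne')

lemma exists_of_isogenous_of_odd {e f s : ℤ} (h : IsQuarticPoint (-2) 5 e f s)
    (hodd : Odd (e ^ 2 - f ^ 2)) :
    ∃ g l : ℤ, IsQuarticPoint 1 (-1) g l e ∧ g ^ 4 + l ^ 4 = |s| := by
  have hf : f ≠ 0 := h.ne_zero
  have hcop : IsCoprime (e ^ 2 - f ^ 2) (2 * f ^ 2) :=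
    (Int.isCoprime_two_right.mpr hodd).mul_right
      (isCoprime_sub_left h.isCoprime.pow)
  obtain ⟨m, k, hsub, hmul, hadd, hmk, -, hm⟩ := h.pythagoreanTriple.coprime_classification'
    (Int.isCoprime_iff_gcd_eq_one.mp hcop) (Int.odd_iff.mp hodd) h.abs_pos
  have hmkf : m * k = f ^ 2 := by linarith
  have hmkpos : 0 < m * k := hmkf ▸ by positivity
  have hk : 0 < k := pos_of_mul_pos_right hmkpos hm
  obtain ⟨g, l, hgl, rfl, rfl⟩ := exists_isCoprime_pow_of_mul_eq_pow two_ne_zero hm hk.le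
    (Int.isCoprime_iff_gcd_eq_one.mpr hmk) hmkf
  exact ⟨g, l, ⟨hgl, ne_zero_pow two_ne_zero hk.ne', by linear_combination hmkf - hsub⟩,
    by linear_combination -hadd⟩

lemma exists_pythagoreanTriple_of_even {e f s : ℤ} (h : IsQuarticPoint (-2) 5 e f s)
    (heven : Even (e ^ 2 - f ^ 2)) :
    ∃ w r : ℤ, e ^ 2 - f ^ 2 = 2 * w ∧ |s| = 2 * r ∧ IsCoprime (f ^ 2) w ∧ Odd (f ^ 2) ∧
      PythagoreanTriple (f ^ 2) w r := by
  obtain ⟨w, hw⟩ := heven.two_dvd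
  have hcop : IsCoprime (e ^ 2 - f ^ 2) (f ^ 2) := isCoprime_sub_left h.isCoprime.pow
  have htriple := h.pythagoreanTriple
  rw [hw] at hcop htriple
  obtain ⟨r, hr⟩ : 2 ∣ |s| := by
    refine Int.prime_two.dvd_of_dvd_pow (n := 2) ?_
    rw [sq, ← htriple.eq]
    exact dvd_add (dvd_mul_of_dvd_left (dvd_mul_right 2 w) _)
      (dvd_mul_of_dvd_left (dvd_mul_right 2 _) _)
  rw [hr] at htriple
  exact ⟨w, r, hw, hr, hcop.of_mul_left_right.symm,
    Int.isCoprime_two_left.mp hcop.of_mul_left_left,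
    ((PythagoreanTriple.mul_iff 2 two_ne_zero).mp htriple).symm⟩

lemma exists_of_isogenous_of_even {e f s : ℤ} (h : IsQuarticPoint (-2) 5 e f s)
    (heven : Even (e ^ 2 - f ^ 2)) :
    ∃ g l : ℤ, IsQuarticPoint 1 (-1) g l e ∧ g ^ 4 + l ^ 4 = |s| := by
  obtain ⟨w, r, hw, hr, hfw, hfodd, htriple⟩ := h.exists_pythagoreanTriple_of_even heven
  have hf : f ≠ 0 := h.ne_zero
  obtain ⟨m, k, hsub, hmul, hadd, hmk, hpar, hm⟩ := htriple.coprime_classification'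
    (Int.isCoprime_iff_gcd_eq_one.mp hfw) (Int.odd_iff.mp hfodd) (by linarith [h.abs_pos])
  have hmkf : (m - k) * (m + k) = f ^ 2 := by rw [hsub]; ring
  have hpos : 0 < m - k ∧ 0 < m + k :=
    pos_and_pos_of_add_nonneg_of_mul_pos (by linarith) (hmkf ▸ by positivity)
  have hodd : Odd (m - k) := by
    rw [Int.odd_iff]
    omega
  obtain ⟨l, g, hlg, hl, hg⟩ := exists_isCoprime_pow_of_mul_eq_pow two_ne_zero hpos.1.le hpos.2.le
    (isCoprime_sub_add (Int.isCoprime_iff_gcd_eq_one.mpr hmk) (Int.isCoprime_two_right.mpr hodd))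
    hmkf
  refine ⟨g, l, ⟨hlg.symm, ne_zero_pow two_ne_zero (hl ▸ hpos.1.ne'), ?_⟩, ?_⟩
  · calc g ^ 4 + 1 * g ^ 2 * l ^ 2 + -1 * l ^ 4
        = (g ^ 2) ^ 2 + g ^ 2 * l ^ 2 - (l ^ 2) ^ 2 := by ring
      _ = (m + k) ^ 2 + (m + k) * (m - k) - (m - k) ^ 2 := by rw [hg, hl]
      _ = e ^ 2 := by linear_combination hmkf - hw - 2 * hmul
  · calc g ^ 4 + l ^ 4 = (g ^ 2) ^ 2 + (l ^ 2) ^ 2 := by ring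
      _ = (m + k) ^ 2 + (m - k) ^ 2 := by rw [hg, hl]
      _ = |s| := by linear_combination -2 * hadd - hr

lemma exists_descent {a b c : ℤ} (h : IsQuarticPoint 1 (-1) a b c) :
    ∃ g l e : ℤ, IsQuarticPoint 1 (-1) g l e ∧
      (g ^ 4 + l ^ 4 = 2 * |a| ∨ g ^ 4 + l ^ 4 = |a| ∧ Odd a) := by
  obtain ⟨s, w, d, hswd, hs⟩ := h.exists_scaled
  obtain ⟨e, f, hef⟩ := hswd.exists_isogenous
  obtain ⟨g, l, hgl, hsum⟩ : ∃ g l : ℤ, IsQuarticPoint 1 (-1) g l e ∧ g ^ 4 + l ^ 4 = |s| :=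
    (Int.even_or_odd (e ^ 2 - f ^ 2)).elim hef.exists_of_isogenous_of_even
      hef.exists_of_isogenous_of_odd
  refine ⟨g, l, e, hgl, hs.imp ?_ ?_⟩
  · rintro rfl
    simpa [abs_mul] using hsum
  · rintro ⟨rfl, hodd⟩
    exact ⟨hsum, hodd⟩

theorem sq_eq_one {a b c : ℤ} (h : IsQuarticPoint 1 (-1) a b c) : a ^ 2 = 1 ∧ b ^ 2 = 1 := by
  induction hn : a.natAbs using Nat.strong_induction_on generalizing a b c with
  | h n ih =>
  subst hn
  suffices ha : |a| = 1 by
    have ha2 : a ^ 2 = 1 := by rw [← sq_abs, ha, one_pow]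
    have hb : b ≠ 0 := h.ne_zero
    have hb2 : 0 < b ^ 2 := by positivity
    refine ⟨ha2, ?_⟩
    nlinarith [sq_nonneg c, h.eq]
  obtain ⟨g, l, e, hgl, hsum⟩ := h.exists_descent
  rcases lt_or_ge |g| |a| with hlt | hge
  · obtain ⟨hg2, hl2⟩ := ih _ (by zify; exact hlt) hgl rfl
    have hsum2 : g ^ 4 + l ^ 4 = 2 := by linear_combination (g ^ 2 + 1) * hg2 + (l ^ 2 + 1) * hl2
    rcases hsum with hsum | ⟨hsum, hodd⟩
    · linarith
    · have : Odd |a| := odd_abs.mpr hodd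
      rw [← hsum, hsum2] at this
      exact absurd this (by decide)
  · refine abs_eq_one_of_pow_four_add_pow_four_le hgl.ne_zero hge ?_
    rcases hsum with hsum | ⟨hsum, -⟩ <;> linarith [abs_nonneg a]

lemma exists_of_elliptic_of_pos {α β : ℤ} {x y : ℚ} (hβ : IsUnit β) (hx : 0 < x)
    (h : y ^ 2 = x ^ 3 + α * x ^ 2 + β * x) :
    ∃ M e N : ℤ, IsQuarticPoint α β M e N ∧ x = M ^ 2 / e ^ 2 := by
  obtain ⟨p, q, hq, hp, hpq, rfl⟩ : ∃ p q : ℤ, 0 < q ∧ 0 < p ∧ IsCoprime p q ∧ x = p / q :=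
    ⟨x.num, x.den, mod_cast x.pos, Rat.num_pos.mpr hx,
      Int.isCoprime_iff_gcd_eq_one.mpr x.reduced, mod_cast (Rat.num_div_den x).symm⟩
  set r := p ^ 2 + α * p * q + β * q ^ 2 with hr
  have hpr : IsCoprime p r := by
    have hpβq : IsCoprime p (β * q ^ 2) :=
      (isCoprime_mul_unit_left_right hβ p _).mpr hpq.pow_right
    have hreq : r = β * q ^ 2 + p * (p + α * q) := by rw [hr]; ring
    exact hreq ▸ hpβq.add_mul_left_right (p + α * q)
  have hqr : IsCoprime q r := by
    have hreq : r = p ^ 2 + q * (α * p + β * q) := by rw [hr]; ring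
    exact hreq ▸ hpq.symm.pow_right.add_mul_left_right (α * p + β * q)
  obtain ⟨k, hk⟩ : IsSquare (q * (p * r)) := by
    rw [← Rat.isSquare_intCast_iff]
    refine ⟨y * q ^ 2, ?_⟩
    have hq' : (q : ℚ) ≠ 0 := mod_cast hq.ne'
    rw [mul_mul_mul_comm, ← sq y, h, hr]
    push_cast
    field_simp
  have hpr0 : 0 ≤ p * r := nonneg_of_mul_nonneg_right (hk ▸ mul_self_nonneg k) hq
  obtain ⟨e, j, -, rfl, hj⟩ := exists_isCoprime_pow_of_mul_eq_pow two_ne_zero hq.le hpr0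
    (hpq.symm.mul_right hqr) (hk.trans (sq k).symm)
  obtain ⟨M, N, -, rfl, hN⟩ := exists_isCoprime_pow_of_mul_eq_pow two_ne_zero hp.le
    (nonneg_of_mul_nonneg_right hpr0 hp) hpr hj
  exact ⟨M, e, N, ⟨(IsCoprime.pow_iff two_pos two_pos).mp hpq, ne_zero_pow two_ne_zero hq.ne',
    by linear_combination hN - hr⟩, by push_cast; rfl⟩

end IsQuarticPoint

lemma eq_one_of_elliptic_of_pos {x y : ℚ} (hx : 0 < x) (h : y ^ 2 = x ^ 3 + x ^ 2 - x) :
    x = 1 := by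
  obtain ⟨a, b, c, habc, rfl⟩ := IsQuarticPoint.exists_of_elliptic_of_pos (α := 1) (β := -1)
    (y := y) isUnit_one.neg hx (by push_cast; linear_combination h)
  obtain ⟨ha2, hb2⟩ := habc.sq_eq_one
  rw [← Int.cast_pow, ← Int.cast_pow, ha2, hb2, div_self (by norm_num)]

theorem sq_eq_one_of_elliptic {x y : ℚ} (hx : x ≠ 0) (h : y ^ 2 = x ^ 3 + x ^ 2 - x) :
    x ^ 2 = 1 := by
  rcases hx.lt_or_gt with hneg | hpos
  · have hinv : -x⁻¹ = 1 := by
      refine eq_one_of_elliptic_of_pos (y := y / x ^ 2) (by simpa using hneg) ?_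
      field_simp
      linear_combination h
    rw [← inv_inj, ← inv_pow, neg_eq_iff_eq_neg.mp hinv]
    norm_num
  · rw [eq_one_of_elliptic_of_pos hpos h, one_pow]

theorem sq_eq_four_of_sq_eq_quartic {y z : ℚ} (h : z ^ 2 = (y ^ 2 - 4) ^ 2 + 64) : y ^ 2 = 4 := by
  -- `(y, z) ↦ (m, ym/2)` is the map to the elliptic curve.
  obtain ⟨m, hm⟩ : ∃ m : ℚ, z = 8 * m - (y ^ 2 - 4) := ⟨(z + y ^ 2 - 4) / 8, by ring⟩
  subst hm
  have hmy : m * (y ^ 2 - 4) = 4 * (m ^ 2 - 1) := by linear_combination -h / 16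
  have hm0 : m ≠ 0 := by
    rintro rfl
    norm_num at hmy
  have hm2 : m ^ 2 = 1 :=
    sq_eq_one_of_elliptic (y := y * m / 2) hm0 (by linear_combination m * hmy / 4)
  have : m * (y ^ 2 - 4) = 0 := by rw [hmy, hm2]; ring
  exact sub_eq_zero.mp ((mul_eq_zero.mp this).resolve_left hm0)

lemma exists_sq_eq_of_curve_B3 {t x : ℚ}
    (h : x ^ 6 - ((4 * t - 1) * (4 * t - 9)) * x ^ 4 -
      (8 * (4 * t - 3) * (16 * t ^ 2 - 8 * t + 5)) * x ^ 2 -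
      16 * (16 * t ^ 2 - 8 * t + 5) ^ 2 = 0) :
    ∃ y : ℚ, y ^ 2 = x ^ 2 + 16 * t ∧ (x * (y + 2)) ^ 2 = (y ^ 2 - 4) ^ 2 + 64 := by
  have hx : x ≠ 0 := by
    rintro rfl
    have hpos : 0 < 16 * t ^ 2 - 8 * t + 5 := by linarith [sq_nonneg (4 * t - 1)]
    linarith [pow_pos hpos 2]
  obtain ⟨y, hy⟩ : ∃ y : ℚ, x ^ 2 * y = (4 * t - 3) * x ^ 2 + 4 * (16 * t ^ 2 - 8 * t + 5) :=
    ⟨_, mul_div_cancel₀ _ (pow_ne_zero 2 hx)⟩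
  have hyt : y ^ 2 = x ^ 2 + 16 * t := by
    refine mul_left_cancel₀ (pow_ne_zero 4 hx) ?_
    linear_combination (x ^ 2 * y + (4 * t - 3) * x ^ 2 + 4 * (16 * t ^ 2 - 8 * t + 5)) * hy - h
  refine ⟨y, hyt, ?_⟩
  have ht : t = (y ^ 2 - x ^ 2) / 16 := by linear_combination -hyt / 16
  rw [ht] at hy
  linear_combination 4 * hy

/-- The rational points of the curve `ℬ₃ : x⁶ − p(t)x⁴ − q(t)x² − r(t) = 0`, where
`p(t) = (4t − 1)(4t − 9)`, `q(t) = 8(4t − 3)(16t² − 8t + 5)` and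
`r(t) = 16(16t² − 8t + 5)²`, are exactly `(0, ±2)`. -/
theorem curve_B3_points (t x : ℚ) :
    x ^ 6 - ((4 * t - 1) * (4 * t - 9)) * x ^ 4 -
      (8 * (4 * t - 3) * (16 * t ^ 2 - 8 * t + 5)) * x ^ 2 -
      16 * (16 * t ^ 2 - 8 * t + 5) ^ 2 = 0 ↔
    (t = 0 ∧ x = 2) ∨ (t = 0 ∧ x = -2) := by
  constructor
  · intro h
    obtain ⟨y, hyt, hxy⟩ := exists_sq_eq_of_curve_B3 h
    have hy4 : y ^ 2 = 4 := sq_eq_four_of_sq_eq_quartic hxy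
    have hy2 : y = 2 := by
      have hy2sq : y ^ 2 = 2 ^ 2 := by rw [hy4]; norm_num
      refine (sq_eq_sq_iff_eq_or_eq_neg.mp hy2sq).resolve_right ?_
      rintro rfl
      norm_num at hxy
    subst hy2
    have hx2 : x ^ 2 = 2 ^ 2 := by linear_combination hxy / 16
    have ht : t = 0 := by linear_combination -hyt / 16 - hx2 / 16
    exact (sq_eq_sq_iff_eq_or_eq_neg.mp hx2).imp (⟨ht, ·⟩) (⟨ht, ·⟩)
  · rintro (⟨rfl, rfl⟩ | ⟨rfl, rfl⟩) <;> norm_num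
end
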